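/- arXiv:2508.06446 — 2 statements merged into one kernel-verified Lean document; each statement's English description precedes it below -/
import Mathlib

section
/- Let d ≥ 1 be an integer and suppose there exists a robust lattice covering of ℝ^d with density D ≤ ν_d. Then there exists a constant C = C(d, D) such that for every integer n ≥ 2 there is a lattice covering of ℝⁿ by balls of density at most C · n · (ln n)^γ, where γ := (1/2)·log₂(2πe) − (1/d)·log₂(ν_d/D); in particular Θ_n ≤ C n (ln n)^γ. -/
open MeasureTheory Pointwise

noncomputable section

/-- The lattice generated by vectors `b`. -/
def latticeSet {n : ℕ} (b : Fin n → EuclideanSpace ℝ (Fin n)) :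
    Set (EuclideanSpace ℝ (Fin n)) :=
  {x | ∃ c : Fin n → ℤ, x = ∑ i, (c i : ℝ) • b i}

/-- The determinant of the lattice generated by `b`. -/
def latticeDet {n : ℕ} (b : Fin n → EuclideanSpace ℝ (Fin n)) : ℝ :=
  |(Matrix.of fun i j => b j i).det|

/-- Vertex set of the parallelepiped starting at `x` generated by `v`. -/
def vertexSet {n : ℕ} (x : EuclideanSpace ℝ (Fin n))
    (v : Fin n → EuclideanSpace ℝ (Fin n)) : Set (EuclideanSpace ℝ (Fin n)) :=
  {y | ∃ lam : Fin n → ℝ, (∀ i, lam i = 0 ∨ lam i = 1) ∧ y = x + ∑ i, lam i • v i}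

/-- `P` is a fundamental parallelepiped of the lattice `Λ` with determinant `detΛ`. -/
def IsFundParallelepiped {n : ℕ} (Λ : Set (EuclideanSpace ℝ (Fin n))) (detΛ : ℝ)
    (P : Set (EuclideanSpace ℝ (Fin n))) : Prop :=
  ∃ x v, LinearIndependent ℝ v ∧ P = convexHull ℝ (vertexSet x v) ∧
    vertexSet x v ⊆ Λ ∧ volume P = ENNReal.ofReal detΛ

/-- `(Λ(b), B_r)` is a lattice covering of `ℝⁿ`. -/
def IsLatticeCovering {n : ℕ} (b : Fin n → EuclideanSpace ℝ (Fin n)) (r : ℝ) : Prop :=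
  LinearIndependent ℝ b ∧ latticeSet b + Metric.closedBall 0 r = Set.univ

/-- `(Λ(b), B_r)` is a robust lattice covering of `ℝⁿ`. -/
def IsRobustCovering {n : ℕ} (b : Fin n → EuclideanSpace ℝ (Fin n)) (r : ℝ) : Prop :=
  IsLatticeCovering b r ∧
  ∀ c : EuclideanSpace ℝ (Fin n),
    ∃ P, IsFundParallelepiped (latticeSet b) (latticeDet b) P ∧
      P ⊆ Metric.closedBall c r

/-- The density of the lattice covering `(Λ(b), B_r)`. -/
def coveringDensity {n : ℕ} (b : Fin n → EuclideanSpace ℝ (Fin n)) (r : ℝ) : ℝ :=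
  (volume (Metric.closedBall (0 : EuclideanSpace ℝ (Fin n)) r)).toReal / latticeDet b

/-- `ν_d`, the volume of the ball of radius `√d` in `ℝ^d`. -/
def nu (d : ℕ) : ℝ :=
  (volume (Metric.closedBall (0 : EuclideanSpace ℝ (Fin d)) (Real.sqrt d))).toReal



instance torSC (m : ℕ) : SecondCountableTopology (Fin m → UnitAddCircle) := inferInstance
instance torBorel (m : ℕ) : BorelSpace (Fin m → UnitAddCircle) := inferInstance
instance circProb : IsProbabilityMeasure (volume : Measure UnitAddCircle) := ⟨by simp⟩
instance torProb (m : ℕ) : IsProbabilityMeasure (volume : Measure (Fin m → UnitAddCircle)) :=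
  inferInstance
instance torHaar (m : ℕ) : (volume : Measure (Fin m → UnitAddCircle)).IsAddHaarMeasure :=
  inferInstance
instance torInv (m : ℕ) : (volume : Measure (Fin m → UnitAddCircle)).IsAddLeftInvariant :=
  inferInstance

/-- projection to the torus -/
def tpi {m : ℕ} (t : Fin m → ℝ) : Fin m → UnitAddCircle := fun i => (t i : UnitAddCircle)

lemma tpi_add {m : ℕ} (s t : Fin m → ℝ) : tpi (s + t) = tpi s + tpi t := by
  ext i; simp [tpi]
lemma tpi_sub {m : ℕ} (s t : Fin m → ℝ) : tpi (s - t) = tpi s - tpi t := by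
  ext i; simp [tpi]
lemma tpi_zsmul {m : ℕ} (k : ℤ) (t : Fin m → ℝ) : tpi ((k : ℝ) • t) = k • tpi t := by
  ext i; simp only [tpi, Pi.smul_apply, smul_eq_mul]; rw [← AddCircle.coe_zsmul]; simp
lemma tpi_surj {m : ℕ} : Function.Surjective (tpi (m := m)) := by
  intro g
  choose t ht using fun i => QuotientAddGroup.mk_surjective (g i)
  exact ⟨t, funext ht⟩
lemma tpi_cont {m : ℕ} : Continuous (tpi (m := m)) := by
  unfold tpi
  refine continuous_pi fun i => ?_
  exact (AddCircle.continuous_mk' (1:ℝ)).comp (continuous_apply i)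
lemma tpi_eq {m : ℕ} {s t : Fin m → ℝ} : tpi s = tpi t ↔ ∃ c : Fin m → ℤ, ∀ i, s i = t i + c i := by
  constructor
  · intro h
    have : ∀ i, ∃ c : ℤ, s i = t i + c := by
      intro i
      have h1 : ((s i - t i : ℝ) : UnitAddCircle) = 0 := by
        have := congrFun h i
        simp only [tpi] at this
        simp [this]
      obtain ⟨n, hn⟩ := (AddCircle.coe_eq_zero_iff (1:ℝ)).1 h1
      exact ⟨n, by simp at hn; linarith⟩
    choose c hc using this
    exact ⟨c, hc⟩
  · rintro ⟨c, hc⟩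
    ext i
    simp only [tpi, hc i]
    have : ((c i : ℝ) : UnitAddCircle) = 0 := (AddCircle.coe_eq_zero_iff (1:ℝ)).2 ⟨c i, by simp⟩
    simp [this]

/-- uncovered set -/
def unc {m : ℕ} {V : Type*} [NormedAddCommGroup V] [NormedSpace ℝ V] (b : Fin m → V) (r : ℝ) :
    Set (Fin m → UnitAddCircle) :=
  {g | ∀ t : Fin m → ℝ, tpi t = g → r < ‖∑ i, t i • b i‖}

lemma unc_compl {m : ℕ} {V : Type*} [NormedAddCommGroup V] [NormedSpace ℝ V] (b : Fin m → V) (r : ℝ) :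
    (unc b r)ᶜ = tpi '' {t | ‖∑ i, t i • b i‖ ≤ r} := by
  ext g
  simp only [unc, Set.mem_compl_iff, Set.mem_ofPred_eq, Set.mem_image, not_forall, not_lt]
  constructor
  · rintro ⟨t, h1, h2⟩; exact ⟨t, h2, h1⟩
  · rintro ⟨t, h1, h2⟩; exact ⟨t, h2, h1⟩

lemma unc_open {m : ℕ} {V : Type*} [NormedAddCommGroup V] [NormedSpace ℝ V] [FiniteDimensional ℝ V]
    (b : Fin m → V) (hb : LinearIndependent ℝ b) (r : ℝ) : IsOpen (unc b r) := by
  rw [← isClosed_compl_iff, unc_compl]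
  have hP : ProperSpace V := FiniteDimensional.proper ℝ V
  refine (IsCompact.image ?_ tpi_cont).isClosed
  have h2 : (Fintype.linearCombination ℝ b).ker = ⊥ :=
    LinearMap.ker_eq_bot.2 hb.fintypeLinearCombination_injective
  have h3 := LinearMap.isClosedEmbedding_of_injective h2
  have h4 := h3.isCompact_preimage (isCompact_closedBall (0:V) r)
  convert h4 using 1
  ext t
  simp [Fintype.linearCombination_apply]

lemma unc_meas {m : ℕ} {V : Type*} [NormedAddCommGroup V] [NormedSpace ℝ V] [FiniteDimensional ℝ V]
    (b : Fin m → V) (hb : LinearIndependent ℝ b) (r : ℝ) : MeasurableSet (unc b r) :=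
  (unc_open b hb r).measurableSet

lemma covering_of_unc_empty {n : ℕ} (b : Fin n → EuclideanSpace ℝ (Fin n)) (r : ℝ)
    (hb : LinearIndependent ℝ b) (h : unc b r = ∅) : IsLatticeCovering b r := by
  refine ⟨hb, ?_⟩
  rw [Set.eq_univ_iff_forall]
  intro y
  let B := basisOfLinearIndependentOfCardEqFinrank' b hb (by simp)
  have hy : y = ∑ i, B.repr y i • b i := by
    conv_lhs => rw [← B.sum_repr y]
    simp [B]
  have h1 : tpi (fun i => B.repr y i) ∉ unc b r := by rw [h]; simp
  simp only [unc, Set.mem_ofPred_eq, not_forall, not_lt] at h1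
  obtain ⟨t, ht, hr⟩ := h1
  obtain ⟨c, hc⟩ := tpi_eq.1 ht.symm
  rw [Set.mem_add]
  refine ⟨∑ i, (c i : ℝ) • b i, ⟨c, rfl⟩, ∑ i, t i • b i, by simpa using hr, ?_⟩
  rw [hy, ← Finset.sum_add_distrib]
  refine Finset.sum_congr rfl fun i _ => ?_
  rw [← add_smul, hc i, add_comm]

lemma finish_covering {n : ℕ} (b : Fin n → EuclideanSpace ℝ (Fin n)) (R : ℝ)
    (hb : LinearIndependent ℝ b) (N : ℕ) (hN : 0 < N)
    (h : volume (unc b R) * (1 + N ^ n) < 1) : IsLatticeCovering b (R + R / N) := by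
  apply covering_of_unc_empty _ _ hb
  by_contra hne
  obtain ⟨g0, hg0⟩ := Set.nonempty_iff_ne_empty.2 hne
  set A := (unc b (R / N))ᶜ with hA
  have hN' : (0:ℝ) < N := by exact_mod_cast hN
  have hAm : MeasurableSet A := (unc_meas b hb _).compl
  have hsub : A ⊆ (fun a => g0 - a) ⁻¹' (unc b R) := by
    intro a ha t ht
    rw [hA, unc_compl] at ha
    obtain ⟨s, hs, rfl⟩ := ha
    have h1 : tpi (t + s) = g0 := by rw [tpi_add, ht]; simp
    have h2 := hg0 _ h1
    simp only [Pi.add_apply, add_smul, Finset.sum_add_distrib] at h2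
    have h3 := norm_add_le (∑ i, t i • b i) (∑ i, s i • b i)
    simp only [Set.mem_ofPred_eq] at hs
    linarith
  have hAle : volume A ≤ volume (unc b R) := by
    calc volume A ≤ volume ((fun a => g0 - a) ⁻¹' (unc b R)) := measure_mono hsub
      _ = volume (unc b R) :=
        (Measure.measurePreserving_sub_left volume g0).measure_preimage
          (unc_meas b hb R).nullMeasurableSet
  have hmp : MeasurePreserving (fun g : Fin n → UnitAddCircle => (N:ℤ) • g) volume volume :=
    Measure.measurePreserving_zsmul volume (by exact_mod_cast hN.ne')
  have h1 : volume ((fun g : Fin n → UnitAddCircle => (N:ℤ) • g) ⁻¹' (unc b R)ᶜ)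
      = 1 - volume (unc b R) := by
    rw [hmp.measure_preimage (unc_meas b hb R).compl.nullMeasurableSet,
      prob_compl_eq_one_sub (unc_meas b hb R)]
  have h2 : (fun g : Fin n → UnitAddCircle => (N:ℤ) • g) ⁻¹' (unc b R)ᶜ ⊆
      ⋃ τ : Fin n → Fin N, (fun g => g - tpi (fun i => ((τ i : ℕ) : ℝ) / N)) ⁻¹' A := by
    intro g hg
    rw [Set.mem_preimage, unc_compl] at hg
    obtain ⟨t, ht, hgt⟩ := hg
    have h3 : (N : ℤ) • (g - tpi ((N:ℝ)⁻¹ • t)) = 0 := by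
      rw [smul_sub, ← tpi_zsmul]
      simp only [Int.cast_natCast, smul_smul]
      rw [mul_inv_cancel₀ hN'.ne', one_smul, hgt, sub_self]
    have h4 : ∀ i, ∃ m : Fin N, (((m : ℕ) : ℝ) / N : ℝ) = g i - tpi ((N:ℝ)⁻¹ • t) i := by
      intro i
      have := congrFun h3 i
      simp only [Pi.smul_apply, Pi.sub_apply, Pi.zero_apply, natCast_zsmul] at this
      obtain ⟨m, hm, hm2⟩ := (AddCircle.nsmul_eq_zero_iff (p := (1:ℝ)) hN).1 this
      exact ⟨⟨m, hm⟩, by simpa using hm2⟩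
    choose τ hτ using h4
    refine Set.mem_iUnion.2 ⟨τ, ?_⟩
    rw [Set.mem_preimage, hA, unc_compl]
    refine ⟨(N:ℝ)⁻¹ • t, ?_, ?_⟩
    · simp only [Set.mem_ofPred_eq, Pi.smul_apply, smul_eq_mul, mul_smul, ← Finset.smul_sum, norm_smul]
      rw [Real.norm_of_nonneg (by positivity), div_eq_inv_mul]
      exact mul_le_mul_of_nonneg_left ht (by positivity)
    · ext i
      have := hτ i
      simp only [Pi.sub_apply]
      rw [show tpi (fun i => ((τ i : ℕ) : ℝ) / N) i = g i - tpi ((N:ℝ)⁻¹ • t) i from this]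
      simp
  have h3 : 1 - volume (unc b R) ≤ N ^ n * volume (unc b R) := by
    rw [← h1]
    refine (measure_mono h2).trans ((measure_iUnion_le _).trans ?_)
    calc _ ≤ ∑' τ : Fin n → Fin N, volume (unc b R) := by
          refine ENNReal.tsum_le_tsum fun τ => ?_
          rw [(measurePreserving_sub_right volume _).measure_preimage hAm.nullMeasurableSet]
          exact hAle
      _ = _ := by simp [tsum_fintype]
  have h4 : 1 ≤ volume (unc b R) + N ^ n * volume (unc b R) := by
    rw [tsub_le_iff_left] at h3; exact h3
  rw [mul_add, mul_one, mul_comm] at h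
  exact absurd h (not_lt.2 (by rwa [mul_comm] at h4 ⊢))


/-- concatenation -/
def eapp {m d : ℕ} (u : EuclideanSpace ℝ (Fin m)) (w : EuclideanSpace ℝ (Fin d)) :
    EuclideanSpace ℝ (Fin (m + d)) := WithLp.toLp 2 (Fin.append u.ofLp w.ofLp)

lemma eapp_norm {m d : ℕ} (u : EuclideanSpace ℝ (Fin m)) (w : EuclideanSpace ℝ (Fin d)) :
    ‖eapp u w‖ ^ 2 = ‖u‖ ^ 2 + ‖w‖ ^ 2 := by
  simp [EuclideanSpace.norm_sq_eq, eapp, Fin.sum_univ_add]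

lemma eapp_add {m d : ℕ} (u u' : EuclideanSpace ℝ (Fin m)) (w w' : EuclideanSpace ℝ (Fin d)) :
    eapp u w + eapp u' w' = eapp (u + u') (w + w') := by
  ext i; refine Fin.addCases (fun i => ?_) (fun i => ?_) i <;> simp [eapp]

lemma eapp_smul {m d : ℕ} (c : ℝ) (u : EuclideanSpace ℝ (Fin m)) (w : EuclideanSpace ℝ (Fin d)) :
    c • eapp u w = eapp (c • u) (c • w) := by
  ext i; refine Fin.addCases (fun i => ?_) (fun i => ?_) i <;> simp [eapp]

lemma eapp_sum {m d : ℕ} {ι : Type*} (s : Finset ι) (u : ι → EuclideanSpace ℝ (Fin m))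
    (w : ι → EuclideanSpace ℝ (Fin d)) :
    ∑ i ∈ s, eapp (u i) (w i) = eapp (∑ i ∈ s, u i) (∑ i ∈ s, w i) := by
  classical
  induction s using Finset.induction_on with
  | empty => simp; ext i; refine Fin.addCases (fun i => ?_) (fun i => ?_) i <;> simp [eapp]
  | insert a s ha ih => rw [Finset.sum_insert ha, ih, eapp_add, Finset.sum_insert ha, Finset.sum_insert ha]

/-- glued basis -/
def glue {m d : ℕ} (b1 : Fin m → EuclideanSpace ℝ (Fin m)) (b2 : Fin d → EuclideanSpace ℝ (Fin d))
    (x : Fin d → Fin m → ℝ) : Fin (m + d) → EuclideanSpace ℝ (Fin (m + d)) :=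
  Fin.append (fun i => eapp (b1 i) 0) (fun j => eapp (∑ i, x j i • b1 i) (b2 j))

lemma glue_sum {m d : ℕ} (b1 : Fin m → EuclideanSpace ℝ (Fin m))
    (b2 : Fin d → EuclideanSpace ℝ (Fin d)) (x : Fin d → Fin m → ℝ) (s : Fin m → ℝ) (τ : Fin d → ℝ) :
    ∑ i, (Fin.append s τ) i • glue b1 b2 x i =
      eapp (∑ i, (s + ∑ j, τ j • x j) i • b1 i) (∑ j, τ j • b2 j) := by
  rw [Fin.sum_univ_add]
  simp only [glue, Fin.append_left, Fin.append_right, eapp_smul, eapp_sum, eapp_add, smul_zero,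
    Finset.sum_const_zero, zero_add]
  congr 1
  simp only [Pi.add_apply, Finset.sum_apply, Pi.smul_apply, add_smul, Finset.sum_add_distrib,
    Finset.smul_sum, Finset.sum_smul, smul_eq_mul, mul_smul]
  congr 1
  rw [Finset.sum_comm]

lemma latticeDet_ne_zero_iff {n : ℕ} (b : Fin n → EuclideanSpace ℝ (Fin n)) :
    latticeDet b ≠ 0 ↔ LinearIndependent ℝ b := by
  unfold latticeDet
  rw [abs_ne_zero, ← isUnit_iff_ne_zero, ← Matrix.isUnit_iff_isUnit_det,
    ← Matrix.linearIndependent_cols_iff_isUnit]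
  have : (Matrix.of fun i j => b j i).col = (WithLp.linearEquiv 2 ℝ (Fin n → ℝ)) ∘ b := by
    ext i j; simp [Matrix.col]
  rw [this]
  exact LinearMap.linearIndependent_iff_of_injOn
    (WithLp.linearEquiv 2 ℝ (Fin n → ℝ)).toLinearMap (LinearEquiv.injective _).injOn

lemma latticeDet_glue {m d : ℕ} (b1 : Fin m → EuclideanSpace ℝ (Fin m))
    (b2 : Fin d → EuclideanSpace ℝ (Fin d)) (x : Fin d → Fin m → ℝ) :
    latticeDet (glue b1 b2 x) = latticeDet b1 * latticeDet b2 := by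
  unfold latticeDet
  rw [← abs_mul, ← Matrix.det_submatrix_equiv_self finSumFinEquiv,
    ← Matrix.det_fromBlocks_zero₂₁ _ (Matrix.of fun i j => (∑ k, x j k • b1 k) i) _]
  congr 2
  ext i j
  rcases i with i | i <;> rcases j with j | j <;> simp [glue, eapp]

lemma glue_indep {m d : ℕ} (b1 : Fin m → EuclideanSpace ℝ (Fin m))
    (b2 : Fin d → EuclideanSpace ℝ (Fin d)) (x : Fin d → Fin m → ℝ)
    (h1 : LinearIndependent ℝ b1) (h2 : LinearIndependent ℝ b2) :
    LinearIndependent ℝ (glue b1 b2 x) := by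
  rw [← latticeDet_ne_zero_iff, latticeDet_glue]
  exact mul_ne_zero ((latticeDet_ne_zero_iff _).2 h1) ((latticeDet_ne_zero_iff _).2 h2)

/-- lift of a torus point -/
def tlift {d : ℕ} (σ : Fin d → UnitAddCircle) : Fin d → ℝ :=
  fun j => (AddCircle.measurableEquivIco (1:ℝ) 0 (σ j)).1

lemma tlift_meas {d : ℕ} : Measurable (tlift (d := d)) := by
  unfold tlift
  fun_prop

lemma tpi_tlift {d : ℕ} (σ : Fin d → UnitAddCircle) : tpi (tlift σ) = σ := by
  ext j
  exact (AddCircle.measurableEquivIco (1:ℝ) 0).symm_apply_apply (σ j)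

lemma tlift_mem {d : ℕ} (σ : Fin d → UnitAddCircle) (j : Fin d) : 0 ≤ tlift σ j ∧ tlift σ j < 1 := by
  have := (AddCircle.measurableEquivIco (1:ℝ) 0 (σ j)).2
  simpa [tlift] using this

/-- fibre set -/
def fib {m d : ℕ} (U : Set (Fin m → UnitAddCircle)) (b2 : Fin d → EuclideanSpace ℝ (Fin d)) (s : ℝ)
    (σ : Fin d → UnitAddCircle) (X : Fin d → Fin m → UnitAddCircle) : Set (Fin m → UnitAddCircle) :=
  {g | ∀ l : Fin d → ℤ, ‖∑ j, (tlift σ j - l j) • b2 j‖ ≤ s → g - ∑ j, l j • X j ∈ U}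

/-- torus splitting -/
lemma append_mp (m d : ℕ) : MeasurePreserving
    (fun p : (Fin m → UnitAddCircle) × (Fin d → UnitAddCircle) => (Fin.append p.1 p.2 : Fin (m + d) → UnitAddCircle))
    volume volume := by
  have h1 := (volume_measurePreserving_sumPiEquivProdPi (fun _ : Fin m ⊕ Fin d => UnitAddCircle)).symm
  have h2 := volume_measurePreserving_piCongrLeft (fun _ : Fin (m + d) => UnitAddCircle) finSumFinEquiv
  have h3 := h2.comp h1
  convert h3 using 1
  ext p i
  refine Fin.addCases (fun i => ?_) (fun i => ?_) i
  · have := MeasurableEquiv.piCongrLeft_apply_apply (β := fun _ : Fin (m + d) => UnitAddCircle) finSumFinEquiv ((MeasurableEquiv.sumPiEquivProdPi fun x => UnitAddCircle).symm p) (Sum.inl i)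
    simp only [finSumFinEquiv_apply_left] at this
    simp only [Fin.append_left, Function.comp]
    rw [this]
    rfl
  · have := MeasurableEquiv.piCongrLeft_apply_apply (β := fun _ : Fin (m + d) => UnitAddCircle) finSumFinEquiv ((MeasurableEquiv.sumPiEquivProdPi fun x => UnitAddCircle).symm p) (Sum.inr i)
    simp only [finSumFinEquiv_apply_right] at this
    simp only [Fin.append_right, Function.comp]
    rw [this]
    rfl

lemma glue_unc {m d : ℕ} (b1 : Fin m → EuclideanSpace ℝ (Fin m))
    (b2 : Fin d → EuclideanSpace ℝ (Fin d)) (x : Fin d → Fin m → ℝ)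
    (h1 : LinearIndependent ℝ b1) (h2 : LinearIndependent ℝ b2) (r s : ℝ) :
    volume (unc (glue b1 b2 x) (Real.sqrt (r ^ 2 + s ^ 2))) ≤
      ∫⁻ σ : Fin d → UnitAddCircle, volume (fib (unc b1 r) b2 s σ (fun j => tpi (x j))) := by
  have hU := unc_meas _ (glue_indep b1 b2 x h1 h2) (Real.sqrt (r ^ 2 + s ^ 2))
  rw [← (append_mp m d).measure_preimage hU.nullMeasurableSet]
  rw [Measure.volume_eq_prod, Measure.prod_apply_symm ((append_mp m d).measurable hU)]
  refine lintegral_mono fun σ => ?_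
  have hsub : (fun g => (g, σ)) ⁻¹' ((fun p : (Fin m → UnitAddCircle) × (Fin d → UnitAddCircle) =>
      (Fin.append p.1 p.2 : Fin (m + d) → UnitAddCircle)) ⁻¹'
        unc (glue b1 b2 x) (Real.sqrt (r ^ 2 + s ^ 2))) ⊆
      (fun g => g + tpi (∑ j, tlift σ j • x j)) ⁻¹' fib (unc b1 r) b2 s σ (fun j => tpi (x j)) := by
    intro g hg l hl t ht
    have e0 : ∑ j, l j • tpi (x j) = tpi (∑ j, (l j : ℝ) • x j) := by
      simp only [← tpi_zsmul]
      exact (map_sum (AddMonoidHom.mk' (tpi (m := m)) tpi_add) _ _).symm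
    have e1 : tpi (Fin.append (t - ∑ j, (tlift σ j - l j) • x j) (fun j => tlift σ j - l j)) =
        (Fin.append g σ : Fin (m + d) → UnitAddCircle) := by
      have a1 : tpi (t - ∑ j, (tlift σ j - l j) • x j) = g := by
        simp only [sub_smul, Finset.sum_sub_distrib]
        rw [tpi_sub, ht, e0, tpi_sub]
        simp only []
        abel_nf
      have a2 : tpi (fun j => tlift σ j - l j) = σ := by
        conv_rhs => rw [← tpi_tlift σ]
        exact tpi_eq.2 ⟨fun j => - l j, fun j => by push_cast; ring⟩
      ext i
      refine Fin.addCases (fun i => ?_) (fun i => ?_) i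
      · simp only [Fin.append_left]; rw [← a1]; simp [tpi]
      · simp only [Fin.append_right]; rw [← congrFun a2 i]; simp [tpi]
    have h3 := hg _ e1
    rw [glue_sum, sub_add_cancel] at h3
    have h4 := (Real.sqrt_lt' (lt_of_le_of_lt (Real.sqrt_nonneg _) h3)).1 h3
    rw [eapp_norm] at h4
    have h5 : ‖∑ j, (tlift σ j - l j) • b2 j‖ ^ 2 ≤ s ^ 2 := pow_le_pow_left₀ (norm_nonneg _) hl 2
    exact lt_of_pow_lt_pow_left₀ 2 (norm_nonneg _) (by linarith)
  refine (measure_mono hsub).trans ?_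
  rw [measure_preimage_add_right]


instance tor2Borel (κ : Type*) [Fintype κ] (m : ℕ) : BorelSpace (κ → Fin m → UnitAddCircle) := 
  inferInstance
instance tor2Haar (κ : Type*) [Fintype κ] (m : ℕ) :
    (volume : Measure (κ → Fin m → UnitAddCircle)).IsAddHaarMeasure :=
  Measure.pi.isAddHaarMeasure (fun _ : κ => (volume : Measure (Fin m → UnitAddCircle)))
instance tor2Prob (κ : Type*) [Fintype κ] (m : ℕ) :
    IsProbabilityMeasure (volume : Measure (κ → Fin m → UnitAddCircle)) := inferInstance

lemma tpi_sum {m : ℕ} {ι : Type*} (s : Finset ι) (f : ι → Fin m → ℝ) :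
    tpi (∑ j ∈ s, f j) = ∑ j ∈ s, tpi (f j) :=
  map_sum (AddMonoidHom.mk' (tpi (m := m)) tpi_add) _ _

/-- integer matrix action -/
def imul {ι κ : Type*} [Fintype κ] {m : ℕ} (A : ι → κ → ℤ) (X : κ → Fin m → UnitAddCircle) :
    ι → Fin m → UnitAddCircle := fun i => ∑ j, A i j • X j

lemma imul_mp {ι κ : Type*} [Fintype ι] [Fintype κ] [DecidableEq ι] (m : ℕ) (A : ι → κ → ℤ)
    (B : κ → ι → ℝ) (h : ∀ i i', ∑ j, (A i j : ℝ) * B j i' = if i = i' then 1 else 0) :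
    MeasurePreserving (imul (m := m) A) volume volume := by
  let f : (κ → Fin m → UnitAddCircle) →+ (ι → Fin m → UnitAddCircle) :=
    AddMonoidHom.mk' (imul A) (by
      intro X Y; ext i
      simp [imul, Finset.sum_add_distrib])
  have hf : Continuous f := by
    show Continuous (imul A)
    unfold imul
    refine continuous_pi fun i => continuous_finsetSum _ fun j _ => ?_
    exact (continuous_apply j).zsmul (A i j)
  refine AddMonoidHom.measurePreserving (f := f) hf ?_ (by simp)
  intro Y
  choose y hy using fun i => tpi_surj (Y i)
  refine ⟨fun j => tpi (∑ i, B j i • y i), ?_⟩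
  show imul A _ = Y
  ext1 i
  simp only [imul]
  simp only [← tpi_zsmul, ← tpi_sum, Finset.smul_sum, smul_smul]
  rw [Finset.sum_comm]
  simp only [← Finset.sum_smul, h, ite_smul, one_smul, zero_smul]
  simp [hy]

/-- cube intersection -/
def cubeI {m d : ℕ} (U : Set (Fin m → UnitAddCircle)) (u : Fin d → Fin m → UnitAddCircle) :
    Set (Fin m → UnitAddCircle) :=
  {g | ∀ l : Fin d → Bool, g - ∑ i, (if l i then u i else 0) ∈ U}

lemma cubeI_meas2 {m d : ℕ} {U : Set (Fin m → UnitAddCircle)} (hU : MeasurableSet U) :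
    MeasurableSet {p : (Fin d → Fin m → UnitAddCircle) × (Fin m → UnitAddCircle) |
      p.2 ∈ cubeI U p.1} := by
  simp only [cubeI]
  have : {p : (Fin d → Fin m → UnitAddCircle) × (Fin m → UnitAddCircle) |
      p.2 ∈ {g | ∀ l : Fin d → Bool, g - ∑ i, (if l i then p.1 i else 0) ∈ U}} =
    ⋂ l : Fin d → Bool, {p | p.2 - ∑ i, (if l i then p.1 i else 0) ∈ U} := by
    ext p; simp
  rw [this]
  refine MeasurableSet.iInter fun l => ?_
  have hm : Measurable (fun p : (Fin d → Fin m → UnitAddCircle) × (Fin m → UnitAddCircle) =>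
      p.2 - ∑ i, (if l i then p.1 i else 0)) := by
    apply Continuous.measurable
    refine continuous_snd.sub (continuous_finsetSum _ fun i _ => ?_)
    split_ifs
    · exact (continuous_apply i).comp continuous_fst
    · exact continuous_const
  exact hm hU

lemma cubeI_measf {m d : ℕ} {U : Set (Fin m → UnitAddCircle)} (hU : MeasurableSet U) :
    Measurable (fun u : Fin d → Fin m → UnitAddCircle => volume (cubeI U u)) :=
  measurable_measure_prodMk_left (cubeI_meas2 (d := d) hU)

lemma corr_meas {m : ℕ} {U : Set (Fin m → UnitAddCircle)} (hU : MeasurableSet U) :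
    MeasurableSet {p : (Fin m → UnitAddCircle) × (Fin m → UnitAddCircle) | p.2 ∈ U ∧ p.2 - p.1 ∈ U} :=
  (measurable_snd hU).inter ((measurable_snd.sub measurable_fst) hU)

lemma corr_int {m : ℕ} {U : Set (Fin m → UnitAddCircle)} (hU : MeasurableSet U) :
    ∫⁻ x : Fin m → UnitAddCircle, volume {g | g ∈ U ∧ g - x ∈ U} = volume U * volume U := by
  have h1 := Measure.prod_apply (μ := (volume : Measure (Fin m → UnitAddCircle)))
    (ν := (volume : Measure (Fin m → UnitAddCircle))) (corr_meas hU)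
  have h2 := Measure.prod_apply_symm (μ := (volume : Measure (Fin m → UnitAddCircle)))
    (ν := (volume : Measure (Fin m → UnitAddCircle))) (corr_meas hU)
  have h3 : ∀ g : Fin m → UnitAddCircle, volume ((fun x => (x, g)) ⁻¹'
      {p : (Fin m → UnitAddCircle) × (Fin m → UnitAddCircle) | p.2 ∈ U ∧ p.2 - p.1 ∈ U}) =
      U.indicator (fun _ => volume U) g := by
    intro g
    by_cases hg : g ∈ U
    · rw [Set.indicator_of_mem hg]
      rw [← (Measure.measurePreserving_sub_left volume g).measure_preimage hU.nullMeasurableSet]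
      congr 1
      ext x; simp [hg]
    · rw [Set.indicator_of_notMem hg]
      convert measure_empty (μ := (volume : Measure (Fin m → UnitAddCircle)))
      ext x; simp [hg]
  simp only [h3] at h2
  rw [lintegral_indicator hU, lintegral_const, Measure.restrict_apply_univ] at h2
  rw [← h2, h1]
  rfl

lemma cubeI_cons {m d : ℕ} (U : Set (Fin m → UnitAddCircle)) (u0 : Fin m → UnitAddCircle)
    (u : Fin d → Fin m → UnitAddCircle) :
    cubeI U (Fin.cons u0 u : Fin (d + 1) → _) = cubeI {g | g ∈ U ∧ g - u0 ∈ U} u := by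
  ext g
  simp only [cubeI, Fin.sum_univ_succ, Fin.cons_zero, Fin.cons_succ, Set.mem_ofPred_eq]
  constructor
  · intro h l
    have h1 := h (Fin.cons false l)
    have h2 := h (Fin.cons true l)
    simp only [Fin.cons_zero, Fin.cons_succ, if_true] at h1 h2
    refine ⟨by simpa using h1, ?_⟩
    convert h2 using 1
    abel
  · intro h l
    have := h (fun i => l i.succ)
    by_cases h0 : l 0
    · simp only [h0, if_true]
      convert this.2 using 1
      abel
    · simpa [h0] using this.1

lemma seq_doubling {m : ℕ} (K : ENNReal) (hK0 : K ≠ 0) (hKt : K ≠ ⊤) (d : ℕ) :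
    ∀ (U : Set (Fin m → UnitAddCircle)), MeasurableSet U →
    volume {u : Fin d → Fin m → UnitAddCircle |
      K ^ (2 ^ d - 1) * volume U ^ (2 ^ d) < volume (cubeI U u)} ≤ d / K := by
  induction d with
  | zero =>
    intro U hU
    have : {u : Fin 0 → Fin m → UnitAddCircle |
      K ^ (2 ^ 0 - 1) * volume U ^ (2 ^ 0) < volume (cubeI U u)} = ∅ := by
      ext u
      simp [cubeI]
    rw [this]; simp
  | succ d ih =>
    intro U hU
    set S := {u : Fin (d + 1) → Fin m → UnitAddCircle |
      K ^ (2 ^ (d + 1) - 1) * volume U ^ (2 ^ (d + 1)) < volume (cubeI U u)} with hS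
    have hSm : MeasurableSet S := measurableSet_lt measurable_const (cubeI_measf hU)
    have hmp := (volume_preserving_piFinSuccAbove (fun _ : Fin (d + 1) => Fin m → UnitAddCircle) 0).symm
    rw [← hmp.measure_preimage hSm.nullMeasurableSet, Measure.volume_eq_prod,
      Measure.prod_apply (hmp.measurable hSm)]
    have hUt : volume U ≠ ⊤ := measure_ne_top _ _
    by_cases hU0 : volume U = 0
    · have hSe : S = ∅ := by
        rw [hS]
        ext u
        simp only [hU0, Set.mem_ofPred_eq, Set.mem_empty_iff_false, iff_false, not_lt]
        have : cubeI U u ⊆ U := by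
          intro g hg; simpa using hg (fun _ => false)
        refine (measure_mono this).trans ?_
        rw [hU0]; simp
      simp [hSe]
    set bad := {x : Fin m → UnitAddCircle | K * (volume U * volume U) ≤ volume {g | g ∈ U ∧ g - x ∈ U}} with hbad
    have hcm : Measurable (fun x : Fin m → UnitAddCircle => volume {g | g ∈ U ∧ g - x ∈ U}) :=
      measurable_measure_prodMk_left (corr_meas hU)
    have hbm : MeasurableSet bad := measurableSet_le measurable_const hcm
    have hb1 : volume bad ≤ 1 / K := by
      have := mul_meas_ge_le_lintegral (μ := volume) hcm (K * (volume U * volume U))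
      rw [corr_int hU] at this
      rw [ENNReal.le_div_iff_mul_le (Or.inl hK0) (Or.inl hKt)]
      have hUU : volume U * volume U ≠ 0 := by simp [hU0]
      have hUUt : volume U * volume U ≠ ⊤ := ENNReal.mul_ne_top hUt hUt
      rw [← ENNReal.mul_le_mul_iff_right hUU hUUt]
      calc _ = K * (volume U * volume U) * volume bad := by ring
        _ ≤ _ := this
        _ = _ := by ring
    have hsl : ∀ x : Fin m → UnitAddCircle, volume (Prod.mk x ⁻¹'
        ((MeasurableEquiv.piFinSuccAbove (fun _ : Fin (d + 1) => Fin m → UnitAddCircle) 0).symm ⁻¹' S))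
        ≤ bad.indicator (fun _ => 1) x + d / K := by
      intro x
      by_cases hx : x ∈ bad
      · rw [Set.indicator_of_mem hx]
        exact prob_le_one.trans le_self_add
      · rw [Set.indicator_of_notMem hx, zero_add]
        have hx' : volume {g | g ∈ U ∧ g - x ∈ U} ≤ K * (volume U * volume U) := by
          rw [hbad] at hx; simp only [Set.mem_ofPred_eq, not_le] at hx; exact hx.le
        refine le_trans (measure_mono ?_) (ih {g | g ∈ U ∧ g - x ∈ U}
          (hU.inter ((measurable_id.sub_const x) hU)))
        intro u hu
        have e : (MeasurableEquiv.piFinSuccAbove (fun _ : Fin (d + 1) => Fin m → UnitAddCircle) 0).symm (x, u)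
          = Fin.cons x u := by
          ext1 i
          refine Fin.cases ?_ (fun i => ?_) i <;> simp [MeasurableEquiv.piFinSuccAbove]
        simp only [Set.mem_preimage, hS, Set.mem_ofPred_eq] at hu
        rw [e, cubeI_cons] at hu
        refine lt_of_le_of_lt ?_ hu
        calc _ ≤ K ^ (2 ^ d - 1) * (K * (volume U * volume U)) ^ 2 ^ d := by gcongr
          _ = _ := by
            have h2 : 2 ^ (d + 1) - 1 = (2 ^ d - 1) + 2 ^ d := by
              have := Nat.one_le_two_pow (n := d); rw [pow_succ]; omega
            rw [h2, pow_add, mul_pow, mul_pow, ← pow_add, ← mul_assoc]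
            congr 2; ring
    refine (lintegral_mono hsl).trans ?_
    rw [lintegral_add_right _ measurable_const, lintegral_indicator hbm]
    simp only [lintegral_const, Measure.restrict_apply_univ, one_mul, measure_univ, mul_one]
    calc _ ≤ 1 / K + d / K := by gcongr
      _ = _ := by rw [← ENNReal.add_div]; congr 1; push_cast; ring


lemma finite_int_bdd {d : ℕ} (bd : Fin d → EuclideanSpace ℝ (Fin d)) (hb : LinearIndependent ℝ bd)
    (R : ℝ) : {c : Fin d → ℤ | ‖∑ j, (c j : ℝ) • bd j‖ ≤ R}.Finite := by
  have h2 : (Fintype.linearCombination ℝ bd).ker = ⊥ :=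
    LinearMap.ker_eq_bot.2 hb.fintypeLinearCombination_injective
  have h3 := LinearMap.isClosedEmbedding_of_injective h2
  have h4 := h3.isCompact_preimage (isCompact_closedBall (0:EuclideanSpace ℝ (Fin d)) R)
  obtain ⟨M, hM⟩ := h4.isBounded.exists_norm_le
  refine (Set.finite_Icc (fun _ : Fin d => -⌈M⌉) (fun _ => ⌈M⌉)).subset ?_
  intro c hc
  have h5 := hM (fun j => (c j : ℝ)) (by
    simpa [Fintype.linearCombination_apply] using hc)
  have h6 : ∀ j, |(c j : ℝ)| ≤ M := fun j => (norm_le_pi_norm (fun j => (c j : ℝ)) j).trans h5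
  constructor <;> intro j
  · have : (-⌈M⌉ : ℝ) ≤ c j := by
      have := (abs_le.1 (h6 j)).1
      have := Int.le_ceil M
      linarith
    exact_mod_cast this
  · have : (c j : ℝ) ≤ ⌈M⌉ := by
      have := (abs_le.1 (h6 j)).2
      have := Int.le_ceil M
      linarith
    exact_mod_cast this

/-- admissible matrices -/
def adm {d : ℕ} (bd : Fin d → EuclideanSpace ℝ (Fin d)) (R : ℝ) : Set (Fin d → Fin d → ℤ) :=
  {W | (∀ i, ‖∑ j, (W i j : ℝ) • bd j‖ ≤ R) ∧ ∃ B : Fin d → Fin d → ℝ,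
    ∀ i i', ∑ j, (W i j : ℝ) * B j i' = if i = i' then 1 else 0}

lemma adm_finite {d : ℕ} (bd : Fin d → EuclideanSpace ℝ (Fin d)) (hb : LinearIndependent ℝ bd)
    (R : ℝ) : (adm bd R).Finite := by
  refine (Set.Finite.pi' (fun _ : Fin d => finite_int_bdd bd hb R)).subset ?_
  intro W hW i
  exact hW.1 i

lemma robust_vertices {d : ℕ} (bd : Fin d → EuclideanSpace ℝ (Fin d)) (rd : ℝ)
    (h : IsRobustCovering bd rd) (t : Fin d → ℝ) :
    ∃ (a : Fin d → ℤ) (W : Fin d → Fin d → ℤ), W ∈ adm bd (2 * rd) ∧ ∀ l : Fin d → Bool,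
      ‖∑ j, (t j - ((a j + ∑ i, (if l i then W i j else 0) : ℤ) : ℝ)) • bd j‖ ≤ rd := by
  obtain ⟨P, ⟨x, v, hv, hP, hL, -⟩, hsub⟩ := h.2 (∑ j, t j • bd j)
  have hb := h.1.1
  have hx : x ∈ vertexSet x v := ⟨fun _ => 0, fun _ => Or.inl rfl, by simp⟩
  have hxv : ∀ i, x + v i ∈ vertexSet x v := fun i =>
    ⟨Pi.single i 1, fun j => by by_cases hj : j = i <;> simp [Pi.single_apply, hj], by
      simp [Pi.single_apply]⟩
  obtain ⟨a, ha⟩ := hL hx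
  choose w hw using fun i => hL (hxv i)
  have hball : ∀ y ∈ vertexSet x v, ‖y - ∑ j, t j • bd j‖ ≤ rd := by
    intro y hy
    have := hsub (by rw [hP]; exact subset_convexHull ℝ _ hy)
    simpa [dist_eq_norm] using this
  have hvW : ∀ i, v i = ∑ j, ((w i j - a j : ℤ) : ℝ) • bd j := by
    intro i
    have := hw i
    rw [ha] at this
    simp only [Int.cast_sub, sub_smul, Finset.sum_sub_distrib]
    rw [← this]; simp
  refine ⟨a, fun i j => w i j - a j, ⟨?_, ?_⟩, ?_⟩
  · intro i
    rw [← hvW]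
    have h1 := hball _ hx
    have h2 := hball _ (hxv i)
    have h3 := norm_sub_le (x + v i - ∑ j, t j • bd j) (x - ∑ j, t j • bd j)
    rw [show x + v i - ∑ j, t j • bd j - (x - ∑ j, t j • bd j) = v i by abel] at h3
    linarith
  · let V := basisOfLinearIndependentOfCardEqFinrank' v hv (by simp)
    refine ⟨fun j i => V.repr (bd j) i, ?_⟩
    intro i i'
    have h1 : V.repr (v i) i' = if i = i' then 1 else 0 := by
      have : v i = V i := by simp [V]
      rw [this, Module.Basis.repr_self, Finsupp.single_apply]
    rw [← h1, hvW i]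
    simp
  · intro l
    have hy : (x + ∑ i, (if l i then (1:ℝ) else 0) • v i) ∈ vertexSet x v :=
      ⟨fun i => if l i then 1 else 0, fun i => by by_cases hi : l i <;> simp [hi], rfl⟩
    have h1 := hball _ hy
    rw [norm_sub_rev] at h1
    refine le_of_eq_of_le (congrArg norm ?_) h1
    rw [ha]
    simp only [hvW, sub_smul, Finset.sum_sub_distrib, Int.cast_add, add_smul,
      Finset.sum_add_distrib, Int.cast_sum, Finset.sum_smul, Finset.smul_sum]
    congr 2
    rw [Finset.sum_comm]
    refine Finset.sum_congr rfl fun i _ => Finset.sum_congr rfl fun j _ => ?_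
    split_ifs <;> simp

lemma stage {d : ℕ} (bd : Fin d → EuclideanSpace ℝ (Fin d)) (rd : ℝ)
    (hrob : IsRobustCovering bd rd) : ∃ K : ENNReal, K ≠ 0 ∧ K ≠ ⊤ ∧
    ∀ (m : ℕ) (b : Fin m → EuclideanSpace ℝ (Fin m)) (r h : ℝ), LinearIndependent ℝ b → 0 < h →
      ∃ b' : Fin (m + d) → EuclideanSpace ℝ (Fin (m + d)), LinearIndependent ℝ b' ∧
        latticeDet b' = latticeDet b * (h ^ d * latticeDet bd) ∧
        volume (unc b' (Real.sqrt (r ^ 2 + (h * rd) ^ 2))) ≤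
          K ^ (2 ^ d - 1) * volume (unc b r) ^ (2 ^ d) := by
  have hfin := adm_finite bd hrob.1.1 (2 * rd)
  set F := hfin.toFinset.card with hF
  set K : ENNReal := ((d * F + 1 : ℕ) : ENNReal) with hK
  have hK0 : K ≠ 0 := by rw [hK]; exact Nat.cast_ne_zero.2 (Nat.succ_ne_zero _)
  have hKt : K ≠ ⊤ := by rw [hK]; exact ENNReal.natCast_ne_top _
  refine ⟨K, hK0, hKt, ?_⟩
  intro m b r h hb hh
  set U := unc b r with hU
  have hUm : MeasurableSet U := unc_meas b hb r
  set bad : (Fin d → Fin d → ℤ) → Set (Fin d → Fin m → UnitAddCircle) := fun W =>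
    imul W ⁻¹' {u | K ^ (2 ^ d - 1) * volume U ^ (2 ^ d) < volume (cubeI U u)} with hbad
  have hbadle : ∀ W ∈ hfin.toFinset, volume (bad W) ≤ d / K := by
    intro W hW
    obtain ⟨-, B, hB⟩ := hfin.mem_toFinset.1 hW
    rw [hbad]
    rw [(imul_mp m W B hB).measure_preimage
      (measurableSet_lt measurable_const (cubeI_measf hUm)).nullMeasurableSet]
    exact seq_doubling K hK0 hKt d U hUm
  have hlt : volume (⋃ W ∈ hfin.toFinset, bad W) < 1 := by
    refine lt_of_le_of_lt (measure_biUnion_finset_le _ _) ?_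
    refine lt_of_le_of_lt (Finset.sum_le_sum hbadle) ?_
    rw [Finset.sum_const, ← hF, nsmul_eq_mul, ← mul_div_assoc]
    rw [ENNReal.div_lt_iff (Or.inl hK0) (Or.inl hKt), one_mul, hK]
    have : F * d < d * F + 1 := by rw [mul_comm]; omega
    exact_mod_cast this
  obtain ⟨X, hX⟩ : ∃ X, X ∉ ⋃ W ∈ hfin.toFinset, bad W := by
    by_contra hcon
    push Not at hcon
    rw [Set.eq_univ_iff_forall.2 hcon, measure_univ] at hlt
    exact lt_irrefl _ hlt
  choose x hx using fun j => tpi_surj (X j)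
  have hb2 : LinearIndependent ℝ (fun j => h • bd j) := by
    have := hrob.1.1.units_smul (fun _ => Units.mk0 h hh.ne')
    exact this
  refine ⟨glue b (fun j => h • bd j) x, glue_indep _ _ _ hb hb2, ?_, ?_⟩
  · rw [latticeDet_glue]
    congr 1
    unfold latticeDet
    have : (Matrix.of fun i j => (h • bd j) i) = h • (Matrix.of fun i j => bd j i) := by
      ext i j; simp
    rw [this, Matrix.det_smul, abs_mul, abs_of_pos (by positivity), Fintype.card_fin]
  · refine (glue_unc b (fun j => h • bd j) x hb hb2 r (h * rd)).trans ?_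
    have hall : ∀ σ : Fin d → UnitAddCircle,
        volume (fib U (fun j => h • bd j) (h * rd) σ (fun j => tpi (x j))) ≤
          K ^ (2 ^ d - 1) * volume U ^ (2 ^ d) := by
      intro σ
      obtain ⟨a, W, hW, hv⟩ := robust_vertices bd rd hrob (tlift σ)
      have hg : volume (cubeI U (imul W X)) ≤ K ^ (2 ^ d - 1) * volume U ^ (2 ^ d) := by
        by_contra hcon
        exact hX (Set.mem_biUnion (hfin.mem_toFinset.2 hW) (not_le.1 hcon))
      refine le_trans ?_ hg
      have hsub : fib U (fun j => h • bd j) (h * rd) σ (fun j => tpi (x j)) ⊆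
          (fun g => g - ∑ j, a j • X j) ⁻¹' (cubeI U (imul W X)) := by
        intro g hg l
        have := hg (fun j => a j + ∑ i, (if l i then W i j else 0)) (by
          have e : ∑ j, (tlift σ j - ((a j + ∑ i, (if l i then W i j else 0) : ℤ) : ℝ)) • h • bd j =
            h • ∑ j, (tlift σ j - ((a j + ∑ i, (if l i then W i j else 0) : ℤ) : ℝ)) • bd j := by
            rw [Finset.smul_sum]
            exact Finset.sum_congr rfl fun j _ => smul_comm _ _ _
          rw [e, norm_smul, Real.norm_of_nonneg hh.le]
          exact mul_le_mul_of_nonneg_left (hv l) hh.le)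
        convert this using 1
        simp only [hx, imul, add_smul, Finset.sum_add_distrib, Finset.sum_smul]
        rw [sub_sub]
        congr 2
        rw [Finset.sum_comm]
        refine Finset.sum_congr rfl fun i _ => ?_
        split_ifs <;> simp
      refine (measure_mono hsub).trans ?_
      have := measure_preimage_add_right (volume : Measure (Fin m → UnitAddCircle)) (-∑ j, a j • X j) (cubeI U (imul W X))
      simp only [← sub_eq_add_neg] at this
      exact this.le
    refine (lintegral_mono hall).trans ?_
    simp

lemma stages {d : ℕ} (bd : Fin d → EuclideanSpace ℝ (Fin d)) (rd : ℝ)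
    (hrob : IsRobustCovering bd rd) : ∃ K : ENNReal, K ≠ 0 ∧ K ≠ ⊤ ∧
    ∀ (m : ℕ) (b : Fin m → EuclideanSpace ℝ (Fin m)) (r h : ℝ), LinearIndependent ℝ b → 0 < h →
      0 ≤ r → ∀ T n : ℕ, n = m + d * T →
      ∃ b' : Fin n → EuclideanSpace ℝ (Fin n), LinearIndependent ℝ b' ∧
        latticeDet b' = latticeDet b * (h ^ d * latticeDet bd) ^ T ∧
        K * volume (unc b' (Real.sqrt (r ^ 2 + T * (h * rd) ^ 2))) ≤
          (K * volume (unc b r)) ^ (2 ^ (d * T)) := by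
  obtain ⟨K, hK0, hKt, H⟩ := stage bd rd hrob
  refine ⟨K, hK0, hKt, ?_⟩
  intro m b r h hb hh hr T
  induction T with
  | zero =>
    rintro n rfl
    exact ⟨b, hb, by simp, by simp [Real.sqrt_sq hr]⟩
  | succ T ih =>
    intro n hn
    obtain ⟨b1, hb1, hd1, hu1⟩ := ih _ rfl
    obtain ⟨b2, hb2, hd2, hu2⟩ := H _ b1 (Real.sqrt (r ^ 2 + T * (h * rd) ^ 2)) h hb1 hh
    have hn' : n = m + d * T + d := by rw [hn]; ring
    subst hn'
    refine ⟨b2, hb2, by rw [hd2, hd1, pow_succ]; ring, ?_⟩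
    rw [Real.sq_sqrt (by positivity)] at hu2
    have e : r ^ 2 + T * (h * rd) ^ 2 + (h * rd) ^ 2 = r ^ 2 + ((T + 1 : ℕ) : ℝ) * (h * rd) ^ 2 := by
      push_cast; ring
    rw [e] at hu2
    calc _ ≤ K * (K ^ (2 ^ d - 1) * volume (unc b1 (Real.sqrt (r ^ 2 + T * (h * rd) ^ 2))) ^ (2 ^ d)) := by
          gcongr
      _ = (K * volume (unc b1 (Real.sqrt (r ^ 2 + T * (h * rd) ^ 2)))) ^ (2 ^ d) := by
          generalize volume (unc b1 (Real.sqrt (r ^ 2 + T * (h * rd) ^ 2))) = z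
          rw [mul_pow, ← mul_assoc, ← pow_succ', Nat.sub_add_cancel Nat.one_le_two_pow]
      _ ≤ ((K * volume (unc b r)) ^ (2 ^ (d * T))) ^ (2 ^ d) := by gcongr
      _ = _ := by rw [← pow_mul, ← pow_add, mul_add, mul_one]


/-- bad independent sets -/
def NCF {α M : Type*} (F : Type*) [Field F] [AddCommGroup M] [Module F M] (v : α → M)
    (S E : Finset α) : Prop :=
  LinearIndepOn F v (E : Set α) ∧ ∃ w ∈ S, w ∉ E ∧ v w ∈ Submodule.span F (v '' (E : Set α))

open Classical in
lemma exists_NC_between {α M F : Type*} [Field F] [AddCommGroup M] [Module F M] (v : α → M)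
    (S A B : Finset α) (hB : B ⊆ S) (hA : LinearIndepOn F v (A : Set α))
    (hBd : ¬ LinearIndepOn F v (B : Set α)) :
    ∃ E : Finset α, A ⊆ E ∧ E ⊆ A ∪ B ∧ NCF F v S E := by
  obtain ⟨b, hb1, hb2, hb3, hb4⟩ := exists_linearIndepOn_extension hA
    (Finset.coe_subset.2 (Finset.subset_union_left (s₁ := A) (s₂ := B)))
  have hbf : b.Finite := (A ∪ B).finite_toSet.subset hb1
  refine ⟨hbf.toFinset, ?_, ?_, ?_, ?_⟩
  · intro x hx; simpa using hb2 hx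
  · intro x hx
    have := hb1 (hbf.mem_toFinset.1 hx)
    simpa using this
  · simpa using hb4
  · have : ¬ (B : Set α) ⊆ b := fun h => hBd (hb4.mono h)
    obtain ⟨w, hw, hwb⟩ := Set.not_subset.1 this
    refine ⟨w, hB hw, by simpa using hwb, ?_⟩
    rw [hbf.coe_toFinset]
    exact hb3 ⟨w, by simp at hw; simp [hw], rfl⟩

lemma bonf {α : Type*} [DecidableEq α] (a : Finset α) (J : ℕ) (hJ : Even J) :
    (if a = ∅ then 1 else 0 : ℝ) ≤ ∑ A ∈ a.powerset.filter (fun A => A.card ≤ J), (-1 : ℝ) ^ A.card := by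
  rw [Finset.sum_filter]
  rw [Finset.sum_powerset_apply_card (fun j => if j ≤ J then (-1 : ℝ) ^ j else 0)]
  rcases Finset.eq_empty_or_nonempty a with rfl | hne
  · simp
  · rw [if_neg hne.ne_empty]
    obtain ⟨n, hn⟩ : ∃ n, a.card = n + 1 := ⟨a.card - 1, by have := hne.card_pos; omega⟩
    rw [hn]
    have h1 : ∑ m ∈ Finset.range (n + 1 + 1), (n + 1).choose m • (if m ≤ J then (-1 : ℝ) ^ m else 0) =
        ∑ m ∈ Finset.range (J + 1), ((-1) ^ m * ((n + 1).choose m : ℝ)) := by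
      have e1 : ∀ m, (n + 1).choose m • (if m ≤ J then (-1 : ℝ) ^ m else 0) =
        if m ∈ Finset.range (J+1) then ((-1) ^ m * ((n + 1).choose m : ℝ)) else 0 := by
        intro m
        by_cases hm : m ≤ J
        · simp [hm, mul_comm]
        · simp [hm]
      simp only [e1]
      rw [← Finset.sum_filter, Finset.filter_mem_eq_inter]
      refine Finset.sum_subset Finset.inter_subset_right ?_
      intro m hm hm2
      have : n + 1 < m := by
        simp only [Finset.mem_inter, not_and] at hm2
        by_contra hc
        exact hm2 (Finset.mem_range.2 (by omega)) hm
      rw [Nat.choose_eq_zero_of_lt this]; simp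
    rw [h1]
    have h2 := Int.alternating_sum_range_choose_eq_choose (n := n) (m := J)
    have h3 : ∑ m ∈ Finset.range (J + 1), ((-1) ^ m * ((n + 1).choose m : ℝ)) = (-1) ^ J * (n.choose J : ℝ) := by
      exact_mod_cast h2
    rw [h3, hJ.neg_one_pow]
    positivity

open Classical in
lemma comb_ineq {α M F : Type*} [Field F] [AddCommGroup M] [Module F M] (v : α → M)
    (S a : Finset α) (ha : a ⊆ S) (J : ℕ) (hJ : Even J) :
    (if a = ∅ then 1 else 0 : ℝ) ≤
      ∑ A ∈ S.powerset.filter (fun A : Finset α => LinearIndepOn F v (A : Set α) ∧ A.card ≤ J),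
        (-1 : ℝ) ^ A.card * (if A ⊆ a then 1 else 0) +
      ∑ E ∈ S.powerset.filter (fun E => NCF F v S E ∧ E.card ≤ 2 * J),
        (2 : ℝ) ^ E.card * (if E ⊆ a then 1 else 0) := by
  have e1 : ∀ (P : Finset α → Prop) [DecidablePred P] (f : Finset α → ℝ), ∑ A ∈ S.powerset.filter P, f A * (if A ⊆ a then 1 else 0) =
      ∑ A ∈ a.powerset.filter P, f A := by
    intro P _ f
    simp only [mul_ite, mul_one, mul_zero]
    rw [← Finset.sum_filter]
    congr 1
    ext A
    simp only [Finset.mem_filter, Finset.mem_powerset]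
    exact ⟨fun h => ⟨h.2, h.1.2⟩, fun h => ⟨⟨h.1.trans ha, h.2⟩, h.1⟩⟩
  rw [e1, e1]
  by_cases hgood : ∀ A ⊆ a, A.card ≤ J → LinearIndepOn F v (A : Set α)
  · have h2 : a.powerset.filter (fun A : Finset α => LinearIndepOn F v (A : Set α) ∧ A.card ≤ J) =
        a.powerset.filter (fun A => A.card ≤ J) := by
      refine Finset.filter_congr fun A hA => ?_
      exact ⟨fun h => h.2, fun h => ⟨hgood A (Finset.mem_powerset.1 hA) h, h⟩⟩
    rw [h2]
    have := bonf a J hJ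
    have h3 : 0 ≤ ∑ E ∈ a.powerset.filter (fun E => NCF F v S E ∧ E.card ≤ 2 * J), (2 : ℝ) ^ E.card :=
      Finset.sum_nonneg fun _ _ => by positivity
    linarith
  · push Not at hgood
    obtain ⟨B, hBa, hBJ, hBd⟩ := hgood
    have hane : a ≠ ∅ := by
      rintro rfl
      rw [Finset.subset_empty] at hBa
      subst hBa
      apply hBd
      simp
    rw [if_neg hane]
    set I := a.powerset.filter (fun A : Finset α => LinearIndepOn F v (A : Set α) ∧ A.card ≤ J) with hI
    set N := a.powerset.filter (fun E => NCF F v S E ∧ E.card ≤ 2 * J) with hN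
    have h1 : -(I.card : ℝ) ≤ ∑ A ∈ I, (-1 : ℝ) ^ A.card := by
      rw [← nsmul_one, ← Finset.sum_const, ← Finset.sum_neg_distrib]
      refine Finset.sum_le_sum fun A _ => ?_
      rcases neg_one_pow_eq_or ℝ A.card with h | h <;> rw [h] <;> norm_num
    have h2 : I ⊆ N.biUnion Finset.powerset := by
      intro A hA
      simp only [hI, Finset.mem_filter, Finset.mem_powerset] at hA
      obtain ⟨E, hAE, hE, hNC⟩ := exists_NC_between v S A B (hBa.trans ha) hA.2.1 hBd
      refine Finset.mem_biUnion.2 ⟨E, ?_, Finset.mem_powerset.2 hAE⟩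
      simp only [hN, Finset.mem_filter, Finset.mem_powerset]
      refine ⟨hE.trans (Finset.union_subset hA.1 hBa), hNC, ?_⟩
      have := Finset.card_le_card hE
      have := Finset.card_union_le A B
      omega
    have h3 : (I.card : ℝ) ≤ ∑ E ∈ N, (2 : ℝ) ^ E.card := by
      have h4 := (Finset.card_le_card h2).trans Finset.card_biUnion_le
      simp only [Finset.card_powerset] at h4
      exact_mod_cast h4
    linarith

open Classical in
lemma prob_bound {α M F Ω : Type*} [Field F] [AddCommGroup M] [Module F M] (v : α → M)
    [MeasurableSpace Ω] (μ : Measure Ω) [IsProbabilityMeasure μ]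
    (S : Finset α) (J : ℕ) (hJ : Even J) (ev : α → Set Ω) (hev : ∀ c, MeasurableSet (ev c)) (p : ℝ)
    (hp : ∀ A ⊆ S, LinearIndepOn F v (A : Set α) → μ.real (⋂ c ∈ A, ev c) = p ^ A.card) :
    μ.real (⋂ c ∈ S, (ev c)ᶜ) ≤
      ∑ A ∈ S.powerset.filter (fun A : Finset α => LinearIndepOn F v (A : Set α) ∧ A.card ≤ J), (-p) ^ A.card +
      ∑ E ∈ S.powerset.filter (fun E => NCF F v S E ∧ E.card ≤ 2 * J), (2 * p) ^ E.card := by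
  have hm : ∀ A : Finset α, MeasurableSet (⋂ c ∈ A, ev c) := fun A =>
    Finset.measurableSet_biInter A fun c _ => hev c
  have hmc : MeasurableSet (⋂ c ∈ S, (ev c)ᶜ) :=
    Finset.measurableSet_biInter S fun c _ => (hev c).compl
  set act : Ω → Finset α := fun ω => S.filter (fun c => ω ∈ ev c) with hact
  have hind : ∀ A ⊆ S, ∀ ω, (if A ⊆ act ω then 1 else 0 : ℝ) = (⋂ c ∈ A, ev c).indicator (fun _ => (1:ℝ)) ω := by
    intro A hA ω
    rw [Set.indicator_apply]
    have : A ⊆ act ω ↔ ω ∈ ⋂ c ∈ A, ev c := by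
      simp only [hact, Set.mem_iInter]
      exact ⟨fun h c hc => (Finset.mem_filter.1 (h hc)).2, fun h c hc => Finset.mem_filter.2 ⟨hA hc, h c hc⟩⟩
    simp [this]
  have hind0 : ∀ ω, (if act ω = ∅ then 1 else 0 : ℝ) = (⋂ c ∈ S, (ev c)ᶜ).indicator (fun _ => (1:ℝ)) ω := by
    intro ω
    rw [Set.indicator_apply]
    have : act ω = ∅ ↔ ω ∈ ⋂ c ∈ S, (ev c)ᶜ := by
      simp only [hact, Set.mem_iInter, Finset.filter_eq_empty_iff]
      rfl
    simp [this]
  have hint : ∀ A : Finset α, Integrable ((⋂ c ∈ A, ev c).indicator (fun _ => (1:ℝ))) μ := fun A =>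
    (integrable_const 1).indicator (hm A)
  have hineq : ∀ ω, (⋂ c ∈ S, (ev c)ᶜ).indicator (fun _ => (1:ℝ)) ω ≤
      ∑ A ∈ S.powerset.filter (fun A : Finset α => LinearIndepOn F v (A : Set α) ∧ A.card ≤ J),
        (-1 : ℝ) ^ A.card * (⋂ c ∈ A, ev c).indicator (fun _ => (1:ℝ)) ω +
      ∑ E ∈ S.powerset.filter (fun E => NCF F v S E ∧ E.card ≤ 2 * J),
        (2 : ℝ) ^ E.card * (⋂ c ∈ E, ev c).indicator (fun _ => (1:ℝ)) ω := by
    intro ω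
    have := comb_ineq (F := F) v S (act ω) (Finset.filter_subset _ _) J hJ
    rw [hind0] at this
    refine this.trans (le_of_eq ?_)
    congr 1
    · refine Finset.sum_congr rfl fun A hA => ?_
      rw [hind A (Finset.mem_powerset.1 (Finset.mem_filter.1 hA).1)]
    · refine Finset.sum_congr rfl fun A hA => ?_
      rw [hind A (Finset.mem_powerset.1 (Finset.mem_filter.1 hA).1)]
  have h1 := integral_mono (μ := μ) ((integrable_const (1:ℝ)).indicator hmc)
    ((integrable_finsetSum _ fun A _ => (hint A).const_mul _).add
      (integrable_finsetSum _ fun A _ => (hint A).const_mul _)) hineq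
  have hI1 : ∀ s : Set Ω, MeasurableSet s → ∫ ω, s.indicator (fun _ => (1:ℝ)) ω ∂μ = μ.real s := by
    intro s hs
    rw [integral_indicator_const _ hs]; simp
  rw [hI1 _ hmc, integral_add' (integrable_finsetSum _ fun A _ => (hint A).const_mul _)
      (integrable_finsetSum _ fun A _ => (hint A).const_mul _),
      integral_finsetSum _ (fun A _ => (hint A).const_mul _),
      integral_finsetSum _ (fun A _ => (hint A).const_mul _)] at h1
  simp only [integral_const_mul, hI1 _ (hm _)] at h1
  refine h1.trans (le_of_eq ?_)
  congr 1
  · refine Finset.sum_congr rfl fun A hA => ?_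
    obtain ⟨h1, h2, h3⟩ := Finset.mem_filter.1 hA
    rw [hp A (Finset.mem_powerset.1 h1) h2, neg_pow p]
  · refine Finset.sum_congr rfl fun A hA => ?_
    obtain ⟨h1, h2, h3⟩ := Finset.mem_filter.1 hA
    rw [hp A (Finset.mem_powerset.1 h1) h2.1, mul_pow]


open Classical in
lemma dep_sum {α M F : Type*} [Field F] [AddCommGroup M] [Module F M] (v : α → M)
    (S : Finset α) (J : ℕ) (p : ℝ) (hp : 0 ≤ p) :
    ∑ A ∈ S.powerset.filter (fun A : Finset α => ¬ LinearIndepOn F v (A : Set α) ∧ A.card ≤ J), p ^ A.card ≤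
    (1 + p) ^ S.card * ∑ E ∈ S.powerset.filter (fun E => NCF F v S E ∧ E.card ≤ 2 * J), (2 * p) ^ E.card := by
  set N := S.powerset.filter (fun E => NCF F v S E ∧ E.card ≤ 2 * J) with hN
  set Dp := S.powerset.filter (fun A : Finset α => ¬ LinearIndepOn F v (A : Set α) ∧ A.card ≤ J) with hD
  have h1 : ∀ A ∈ Dp, ∃ E ∈ N, E ⊆ A := by
    intro A hA
    simp only [hD, Finset.mem_filter, Finset.mem_powerset] at hA
    obtain ⟨E, -, h2, h3⟩ := exists_NC_between (F := F) v S ∅ A hA.1 (by simp) hA.2.1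
    rw [Finset.empty_union] at h2
    refine ⟨E, ?_, h2⟩
    simp only [hN, Finset.mem_filter, Finset.mem_powerset]
    refine ⟨h2.trans hA.1, h3, ?_⟩
    have := Finset.card_le_card h2
    omega
  calc ∑ A ∈ Dp, p ^ A.card ≤ ∑ A ∈ Dp, ∑ E ∈ N, (if E ⊆ A then p ^ A.card else 0) := by
        refine Finset.sum_le_sum fun A hA => ?_
        obtain ⟨E, hE, hEA⟩ := h1 A hA
        have := Finset.single_le_sum (f := fun E => if E ⊆ A then p ^ A.card else 0)
          (fun E _ => by split_ifs <;> positivity) hE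
        simpa [hEA] using this
    _ = ∑ E ∈ N, ∑ A ∈ Dp, (if E ⊆ A then p ^ A.card else 0) := Finset.sum_comm
    _ ≤ ∑ E ∈ N, (1 + p) ^ S.card * (2 * p) ^ E.card := by
        refine Finset.sum_le_sum fun E hE => ?_
        rw [← Finset.sum_filter]
        calc ∑ A ∈ Dp with E ⊆ A, p ^ A.card = ∑ A ∈ Dp with E ⊆ A, p ^ (A \ E).card * p ^ E.card := by
              refine Finset.sum_congr rfl fun A hA => ?_
              rw [← pow_add, Finset.card_sdiff_add_card_eq_card (Finset.mem_filter.1 hA).2]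
          _ = (∑ A ∈ Dp with E ⊆ A, p ^ (A \ E).card) * p ^ E.card := by rw [Finset.sum_mul]
          _ ≤ (∑ B ∈ S.powerset, p ^ B.card) * p ^ E.card := by
              gcongr
              have hinj : Set.InjOn (fun A => A \ E) (Dp.filter (fun A => E ⊆ A) : Set (Finset α)) := by
                intro A hA B hB hAB
                have hA := (Finset.mem_filter.1 hA).2
                have hB := (Finset.mem_filter.1 hB).2
                simp only at hAB
                rw [← Finset.sdiff_union_of_subset hA, hAB, Finset.sdiff_union_of_subset hB]
              rw [← Finset.sum_image (f := fun B => p ^ B.card) hinj]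
              refine Finset.sum_le_sum_of_subset_of_nonneg ?_ fun _ _ _ => by positivity
              intro B hB
              obtain ⟨A, hA, rfl⟩ := Finset.mem_image.1 hB
              have := (Finset.mem_filter.1 (Finset.mem_filter.1 hA).1).1
              exact Finset.mem_powerset.2 (Finset.sdiff_subset.trans (Finset.mem_powerset.1 this))
          _ = (1 + p) ^ S.card * p ^ E.card := by
              have := Finset.sum_pow_mul_eq_add_pow p 1 S
              simp only [one_pow, mul_one] at this
              rw [this, add_comm]
          _ ≤ _ := by
              gcongr
              linarith
    _ = _ := by rw [Finset.mul_sum]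

open Classical in
lemma all_sum {α : Type*} (S : Finset α) (J : ℕ) (p : ℝ) (hp : 0 ≤ p) (hp1 : p ≤ 1) :
    ∑ A ∈ S.powerset.filter (fun A => A.card ≤ J), (-p) ^ A.card ≤
    Real.exp (-(S.card * p)) + (1 / 2) ^ J * Real.exp (2 * (S.card * p)) := by
  have h1 : ∑ A ∈ S.powerset, (-p) ^ A.card = (1 - p) ^ S.card := by
    have := Finset.sum_pow_mul_eq_add_pow (-p) 1 S
    simp only [one_pow, mul_one] at this
    rw [this]; ring
  have h2 := Finset.sum_filter_add_sum_filter_not S.powerset (fun A => A.card ≤ J) (fun A => (-p) ^ A.card)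
  have h3 : -∑ A ∈ S.powerset with ¬ A.card ≤ J, (-p) ^ A.card ≤ (1/2) ^ J * ∑ A ∈ S.powerset, (2 * p) ^ A.card := by
    rw [← Finset.sum_neg_distrib, Finset.mul_sum]
    calc _ ≤ ∑ A ∈ S.powerset with ¬ A.card ≤ J, (1/2) ^ J * (2 * p) ^ A.card := by
          refine Finset.sum_le_sum fun A hA => ?_
          have hJ := (Finset.mem_filter.1 hA).2
          have e1 : -(-p) ^ A.card ≤ p ^ A.card := by
            rw [neg_pow p]
            have : (0:ℝ) ≤ p ^ A.card := by positivity
            rcases neg_one_pow_eq_or ℝ A.card with h | h <;> rw [h] <;> linarith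
          refine e1.trans ?_
          rw [mul_pow, ← mul_assoc]
          have : (1:ℝ) ≤ (1/2) ^ J * 2 ^ A.card := by
            rw [one_div, inv_pow, inv_mul_eq_div, le_div_iff₀ (by positivity), one_mul]
            exact pow_le_pow_right₀ (by norm_num) (by omega)
          have h0 : (0:ℝ) ≤ p ^ A.card := by positivity
          nlinarith
      _ ≤ _ := Finset.sum_le_sum_of_subset_of_nonneg (Finset.filter_subset _ _) fun _ _ _ => by positivity
  have h4 : ∑ A ∈ S.powerset, (2 * p) ^ A.card = (1 + 2 * p) ^ S.card := by
    have := Finset.sum_pow_mul_eq_add_pow (2 * p) 1 S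
    simp only [one_pow, mul_one] at this
    rw [this]; ring
  have h5 : (1 - p) ^ S.card ≤ Real.exp (-(S.card * p)) := by
    rw [← mul_neg, Real.exp_nat_mul]
    exact pow_le_pow_left₀ (by linarith) (Real.one_sub_le_exp_neg p) _
  have h6 : (1 + 2 * p) ^ S.card ≤ Real.exp (2 * (S.card * p)) := by
    rw [show 2 * (S.card * p) = S.card * (2 * p) by ring, Real.exp_nat_mul]
    refine pow_le_pow_left₀ (by linarith) ?_ _
    linarith [Real.add_one_le_exp (2 * p)]
  have h7 : (1/2 : ℝ) ^ J * ∑ A ∈ S.powerset, (2 * p) ^ A.card ≤ (1/2) ^ J * Real.exp (2 * (S.card * p)) := by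
    rw [h4]; gcongr
  linarith

open Classical in
/-- ordered bad tuples -/
def NCtup {α M : Type*} (F : Type*) [Field F] [AddCommGroup M] [Module F M] (v : α → M)
    (S : Finset α) (e : ℕ) : Finset (Fin e → α) :=
  (Fintype.piFinset (fun _ : Fin e => S)).filter
    (fun c => Function.Injective c ∧ NCF F v S (Finset.univ.image c))

open Classical in
lemma NC_count {α M F : Type*} [Field F] [AddCommGroup M] [Module F M] (v : α → M)
    (S : Finset α) (e : ℕ) :
    (S.powerset.filter (fun E => NCF F v S E ∧ E.card = e)).card * e.factorial ≤ (NCtup F v S e).card := by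
  set N := S.powerset.filter (fun E => NCF F v S E ∧ E.card = e) with hN
  have hmaps : Set.MapsTo (fun c : Fin e → α => Finset.univ.image c) (NCtup F v S e : Set (Fin e → α)) (N : Set (Finset α)) := by
    intro c hc
    simp only [NCtup, Finset.coe_filter, Fintype.mem_piFinset] at hc
    simp only [hN, Finset.coe_filter, Finset.mem_powerset]
    refine ⟨?_, hc.2.2, ?_⟩
    · intro x hx
      obtain ⟨i, -, rfl⟩ := Finset.mem_image.1 hx
      exact hc.1 i
    · rw [Finset.card_image_of_injective _ hc.2.1]; simp
  rw [Finset.card_eq_sum_card_fiberwise hmaps, ← smul_eq_mul, ← Finset.sum_const]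
  refine Finset.sum_le_sum fun E hE => ?_
  simp only [hN, Finset.mem_filter, Finset.mem_powerset] at hE
  obtain ⟨hES, hNC, hcard⟩ := hE
  have hc2 : Fintype.card (Fin e) = Fintype.card E := by simp [hcard]
  have e0 : Fin e ≃ E := Fintype.equivOfCardEq hc2
  have h1 : Fintype.card (Fin e ≃ E) = e.factorial := by
    rw [Fintype.card_equiv e0]; simp
  rw [← h1, ← Finset.card_univ]
  refine Finset.card_le_card_of_injOn (fun f i => (f i : α)) ?_ ?_
  · intro f _
    have him : Finset.univ.image (fun i => (f i : α)) = E := by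
      ext x
      simp only [Finset.mem_image, Finset.mem_univ, true_and]
      constructor
      · rintro ⟨i, rfl⟩; exact (f i).2
      · intro hx; exact ⟨f.symm ⟨x, hx⟩, by simp⟩
    simp only [NCtup, Finset.coe_filter, Finset.mem_filter, Fintype.mem_piFinset]
    refine ⟨⟨fun i => hES (f i).2, ?_, ?_⟩, him⟩
    · intro i j hij; exact f.injective (Subtype.ext hij)
    · rw [him]; exact hNC
  · intro f _ f' _ hff
    ext i
    exact congrFun hff i

open Classical in
lemma NC_sum {α M F : Type*} [Field F] [AddCommGroup M] [Module F M] (v : α → M)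
    (S : Finset α) (J : ℕ) (p η : ℝ) (hp : 0 ≤ p) (hη : 0 ≤ η)
    (H : ∀ e ≤ 2 * J, ((NCtup F v S e).card : ℝ) ≤ η * S.card ^ e) :
    ∑ E ∈ S.powerset.filter (fun E => NCF F v S E ∧ E.card ≤ 2 * J), (2 * p) ^ E.card ≤
      η * Real.exp (2 * (S.card * p)) := by
  have hmaps : ∀ E ∈ S.powerset.filter (fun E => NCF F v S E ∧ E.card ≤ 2 * J), E.card ∈ Finset.range (2 * J + 1) := by
    intro E hE
    have := (Finset.mem_filter.1 hE).2.2
    exact Finset.mem_range.2 (by omega)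
  rw [← Finset.sum_fiberwise_of_maps_to hmaps]
  have h1 : ∀ e ∈ Finset.range (2 * J + 1),
      ∑ E ∈ (S.powerset.filter (fun E => NCF F v S E ∧ E.card ≤ 2 * J)) with E.card = e, (2 * p) ^ E.card ≤
      η * ((2 * (S.card * p)) ^ e / e.factorial) := by
    intro e he
    have he' : e ≤ 2 * J := by have := Finset.mem_range.1 he; omega
    have e1 : (S.powerset.filter (fun E => NCF F v S E ∧ E.card ≤ 2 * J)).filter (fun E => E.card = e) =
        S.powerset.filter (fun E => NCF F v S E ∧ E.card = e) := by
      ext E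
      simp only [Finset.mem_filter]
      constructor
      · rintro ⟨⟨h1, h2, h3⟩, h4⟩; exact ⟨h1, h2, h4⟩
      · rintro ⟨h1, h2, h4⟩; exact ⟨⟨h1, h2, by omega⟩, h4⟩
    rw [e1]
    have e2 : ∑ E ∈ S.powerset.filter (fun E => NCF F v S E ∧ E.card = e), (2 * p) ^ E.card =
        (S.powerset.filter (fun E => NCF F v S E ∧ E.card = e)).card * (2 * p) ^ e := by
      rw [← nsmul_eq_mul, ← Finset.sum_const]
      refine Finset.sum_congr rfl fun E hE => ?_
      rw [(Finset.mem_filter.1 hE).2.2]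
    rw [e2]
    have h2 := NC_count (F := F) v S e
    have h3 : ((S.powerset.filter (fun E => NCF F v S E ∧ E.card = e)).card : ℝ) * e.factorial ≤ η * S.card ^ e :=
      le_trans (by exact_mod_cast h2) (H e he')
    have hf : (0:ℝ) < e.factorial := by exact_mod_cast e.factorial_pos
    rw [← mul_div_assoc, le_div_iff₀ hf]
    calc _ = ((S.powerset.filter (fun E => NCF F v S E ∧ E.card = e)).card : ℝ) * e.factorial * (2 * p) ^ e := by ring
      _ ≤ η * S.card ^ e * (2 * p) ^ e := by gcongr
      _ = _ := by rw [mul_assoc, ← mul_pow]; ring_nf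
  refine (Finset.sum_le_sum h1).trans ?_
  rw [← Finset.mul_sum]
  gcongr
  exact Real.sum_le_exp_of_nonneg (by positivity) _

open Classical in
lemma det_bound {α M F : Type*} [Field F] [AddCommGroup M] [Module F M] (u : α → M)
    (S : Finset α) (v : ℕ) (p : ℝ) (hp : 0 ≤ p) (hp1 : p ≤ 1) (hpv : S.card * p = v)
    (H : ∀ e ≤ 2 * (4 * v), ((NCtup F u S e).card : ℝ) ≤ (1 / 64) ^ v * S.card ^ e) :
    ∑ A ∈ S.powerset.filter (fun A : Finset α => LinearIndepOn F u (A : Set α) ∧ A.card ≤ 4 * v), (-p) ^ A.card +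
      ∑ E ∈ S.powerset.filter (fun E => NCF F u S E ∧ E.card ≤ 2 * (4 * v)), (2 * p) ^ E.card ≤
      4 * (1 / 2) ^ v := by
  have h1 := all_sum S (4 * v) p hp hp1
  have h2 := dep_sum (F := F) u S (4 * v) p hp
  have h3 := NC_sum (F := F) u S (4 * v) p ((1 / 64) ^ v) hp (by positivity) H
  set sn := ∑ E ∈ S.powerset.filter (fun E => NCF F u S E ∧ E.card ≤ 2 * (4 * v)), (2 * p) ^ E.card with hsn
  have hsn0 : 0 ≤ sn := Finset.sum_nonneg fun _ _ => by positivity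
  rw [hpv] at h1 h3
  have h4 : ∑ A ∈ S.powerset.filter (fun A : Finset α => LinearIndepOn F u (A : Set α) ∧ A.card ≤ 4 * v), (-p) ^ A.card =
    ∑ A ∈ S.powerset.filter (fun A : Finset α => A.card ≤ 4 * v), (-p) ^ A.card -
    ∑ A ∈ S.powerset.filter (fun A : Finset α => ¬ LinearIndepOn F u (A : Set α) ∧ A.card ≤ 4 * v), (-p) ^ A.card := by
    rw [eq_sub_iff_add_eq]
    have := Finset.sum_filter_add_sum_filter_not (S.powerset.filter (fun A : Finset α => A.card ≤ 4 * v))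
      (fun A : Finset α => LinearIndepOn F u (A : Set α)) (fun A => (-p) ^ A.card)
    rw [Finset.filter_filter, Finset.filter_filter] at this
    rw [← this]
    congr 1
    · refine Finset.sum_congr (Finset.filter_congr fun A _ => and_comm) fun _ _ => rfl
    · refine Finset.sum_congr (Finset.filter_congr fun A _ => and_comm) fun _ _ => rfl
  have h5 : -∑ A ∈ S.powerset.filter (fun A : Finset α => ¬ LinearIndepOn F u (A : Set α) ∧ A.card ≤ 4 * v), (-p) ^ A.card
     ≤ ∑ A ∈ S.powerset.filter (fun A : Finset α => ¬ LinearIndepOn F u (A : Set α) ∧ A.card ≤ 4 * v), p ^ A.card := by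
    rw [← Finset.sum_neg_distrib]
    refine Finset.sum_le_sum fun A _ => ?_
    rw [neg_pow p]
    have : (0:ℝ) ≤ p ^ A.card := by positivity
    rcases neg_one_pow_eq_or ℝ A.card with h | h <;> rw [h] <;> linarith
  have h6 : (1 + p) ^ S.card ≤ Real.exp v := by
    rw [← hpv, Real.exp_nat_mul]
    refine pow_le_pow_left₀ (by linarith) ?_ _
    linarith [Real.add_one_le_exp p]
  have he := Real.exp_one_lt_d9
  have he2 := Real.exp_one_gt_d9
  have hev : Real.exp v = Real.exp 1 ^ v := by rw [← Real.exp_nat_mul, mul_one]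
  have a1 : Real.exp (-(v:ℝ)) ≤ (1 / 2) ^ v := by
    rw [Real.exp_neg, hev, ← inv_pow]
    refine pow_le_pow_left₀ (by positivity) ?_ v
    rw [one_div]
    exact inv_anti₀ (by norm_num) (by linarith)
  have a2 : (1 / 2 : ℝ) ^ (4 * v) * Real.exp (2 * v) ≤ (1 / 2) ^ v := by
    have : Real.exp (2 * v) = (Real.exp 1 ^ 2) ^ v := by rw [← pow_mul, ← Real.exp_nat_mul]; push_cast; ring_nf
    rw [this, pow_mul, ← mul_pow]
    refine pow_le_pow_left₀ (by positivity) ?_ v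
    nlinarith
  have a3 : (1 + Real.exp v) * ((1 / 64) ^ v * Real.exp (2 * v)) ≤ 2 * (1 / 2) ^ v := by
    have : Real.exp (2 * v) = (Real.exp 1 ^ 2) ^ v := by rw [← pow_mul, ← Real.exp_nat_mul]; push_cast; ring_nf
    rw [this, hev]
    have b1 : 1 + Real.exp 1 ^ v ≤ 2 * Real.exp 1 ^ v := by
      have : 1 ≤ Real.exp 1 ^ v := one_le_pow₀ (by linarith)
      linarith
    calc _ ≤ 2 * Real.exp 1 ^ v * ((1 / 64) ^ v * (Real.exp 1 ^ 2) ^ v) := by gcongr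
      _ = 2 * (Real.exp 1 * (1 / 64 * Real.exp 1 ^ 2)) ^ v := by rw [mul_pow, mul_pow]; ring
      _ ≤ _ := by
        gcongr
        have : Real.exp 1 ^ 2 ≤ 8 := by nlinarith
        nlinarith
  have a4 : (1 + p) ^ S.card * sn ≤ Real.exp v * sn := by gcongr
  have a5 : (1 + Real.exp v) * sn ≤ (1 + Real.exp v) * ((1 / 64) ^ v * Real.exp (2 * v)) := by gcongr
  have hv0 : (0:ℝ) ≤ (1/2)^v := by positivity
  rw [h4]
  nlinarith


lemma right_inv_modq {ι κ : Type*} [Fintype ι] [Fintype κ] [DecidableEq ι] [DecidableEq κ] (q : ℕ) [Fact q.Prime]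
    (M : ι → κ → ℤ) (h : LinearIndependent (ZMod q) (fun i => (fun j => (M i j : ZMod q)))) :
    ∃ B : κ → ι → ℝ, ∀ i i', ∑ j, (M i j : ℝ) * B j i' = if i = i' then 1 else 0 := by
  set M' : Matrix ι κ (ZMod q) := Matrix.of fun i j => (M i j : ZMod q) with hM'
  have hinj : Function.Injective M'.vecMul := Matrix.vecMul_injective_iff.2 h
  have hker : LinearMap.ker (Matrix.vecMulLinear M') = ⊥ := LinearMap.ker_eq_bot.2 hinj
  obtain ⟨g, hg⟩ := LinearMap.exists_leftInverse_of_injective _ hker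
  have hMB : ∀ i i', ∑ j, (M i j : ZMod q) * g (Pi.single j 1) i' = if i = i' then 1 else 0 := by
    intro i i'
    have e1 : g (Matrix.vecMulLinear M' (Pi.single i 1)) = Pi.single i 1 := by
      rw [← LinearMap.comp_apply, hg]; rfl
    have e2 : Matrix.vecMulLinear M' (Pi.single i 1) = ∑ j, (M i j : ZMod q) • (Pi.single j 1 : κ → ZMod q) := by
      ext j
      simp [hM', Finset.sum_apply, Pi.single_apply]
    rw [e2, map_sum] at e1
    have := congrFun e1 i'
    simp only [map_smul, Finset.sum_apply, Pi.smul_apply, smul_eq_mul] at this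
    rw [this, Pi.single_apply]
    simp [eq_comm]
  choose B0 hB0 using fun (j : κ) (i : ι) => ZMod.intCast_surjective (n := q) (g (Pi.single j 1) i)
  set MZ : Matrix ι κ ℤ := Matrix.of M with hMZ
  set BZ : Matrix κ ι ℤ := Matrix.of B0 with hBZ
  have hP : (MZ * BZ).map (Int.castRingHom (ZMod q)) = 1 := by
    ext i i'
    rw [Matrix.map_apply, Matrix.mul_apply, Matrix.one_apply, ← hMB i i']
    simp [hMZ, hBZ, hB0]
  have hdet : (MZ * BZ).det ≠ 0 := by
    intro h0
    have := RingHom.map_det (Int.castRingHom (ZMod q)) (MZ * BZ)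
    rw [h0, RingHom.mapMatrix_apply, hP, Matrix.det_one] at this
    simp at this
  set PR : Matrix ι ι ℝ := (MZ * BZ).map (Int.castRingHom ℝ) with hPR
  have hdetR : IsUnit PR.det := by
    have := RingHom.map_det (Int.castRingHom ℝ) (MZ * BZ)
    rw [RingHom.mapMatrix_apply] at this
    rw [hPR, ← this, isUnit_iff_ne_zero]
    simpa using hdet
  refine ⟨fun j i => (BZ.map (Int.castRingHom ℝ) * PR⁻¹) j i, fun i i' => ?_⟩
  have : (MZ.map (Int.castRingHom ℝ) * (BZ.map (Int.castRingHom ℝ) * PR⁻¹)) i i' = (1 : Matrix ι ι ℝ) i i' := by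
    rw [← Matrix.mul_assoc, ← Matrix.map_mul, ← hPR, Matrix.mul_nonsing_inv _ hdetR]
  rw [Matrix.mul_apply, Matrix.one_apply] at this
  rw [← this]
  simp [hMZ]

/-- augmented slot vector -/
def vecc {k : ℕ} (c : Fin k → ℤ) : Fin (k + 1) → ℤ := Fin.cons 1 (fun j => - c j)

def vecq (q : ℕ) {k : ℕ} (c : Fin k → ℤ) : Fin (k + 1) → ZMod q := fun i => (vecc c i : ZMod q)

def evc {m k : ℕ} (U : Set (Fin m → UnitAddCircle)) (c : Fin k → ℤ) : Set (Fin (k + 1) → Fin m → UnitAddCircle) :=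
  {Z | ∑ i, vecc c i • Z i ∈ Uᶜ}

lemma evc_meas {m k : ℕ} {U : Set (Fin m → UnitAddCircle)} (hU : MeasurableSet U) (c : Fin k → ℤ) :
    MeasurableSet (evc U c) := by
  have : Continuous fun Z : Fin (k + 1) → Fin m → UnitAddCircle => ∑ i, vecc c i • Z i := by
    refine continuous_finsetSum _ fun i _ => ?_
    exact Continuous.const_smul (continuous_apply (A := fun _ : Fin (k+1) => Fin m → UnitAddCircle) i) (vecc c i)
  exact this.measurable hU.compl

lemma indep_prob {m k : ℕ} (q : ℕ) [Fact q.Prime] {U : Set (Fin m → UnitAddCircle)} (hU : MeasurableSet U)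
    (A : Finset (Fin k → ℤ)) (h : LinearIndepOn (ZMod q) (vecq q) (A : Set (Fin k → ℤ))) :
    (volume : Measure (Fin (k + 1) → Fin m → UnitAddCircle)).real (⋂ c ∈ A, evc U c) =
      ((volume : Measure (Fin m → UnitAddCircle)).real Uᶜ) ^ A.card := by
  classical
  obtain ⟨B, hB⟩ := right_inv_modq q (fun c : A => vecc c.1) h
  have hmp := imul_mp m (fun c : A => vecc c.1) B hB
  have hset : (⋂ c ∈ A, evc U c) = imul (m := m) (fun c : A => vecc c.1) ⁻¹' (Set.univ.pi fun _ => Uᶜ) := by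
    ext Z
    simp [evc, imul]
  rw [hset, measureReal_def, hmp.measure_preimage (MeasurableSet.univ_pi fun _ => hU.compl).nullMeasurableSet,
    volume_pi_pi]
  simp [measureReal_def]

lemma fib_prob {m k : ℕ} (q : ℕ) [Fact q.Prime] {U : Set (Fin m → UnitAddCircle)} (hU : MeasurableSet U)
    (S : Finset (Fin k → ℤ)) (v : ℕ) (p : ℝ) (hp : (volume : Measure (Fin m → UnitAddCircle)).real Uᶜ = p)
    (hpv : S.card * p = v)
    (H : ∀ e ≤ 2 * (4 * v), ((NCtup (ZMod q) (vecq q) S e).card : ℝ) ≤ (1 / 64) ^ v * S.card ^ e) :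
    volume (⋂ c ∈ S, (evc U c)ᶜ) ≤ ENNReal.ofReal (4 * (1 / 2) ^ v) := by
  have hp0 : 0 ≤ p := by rw [← hp]; exact measureReal_nonneg
  have hp1 : p ≤ 1 := by rw [← hp]; exact measureReal_le_one
  have h1 := prob_bound (F := ZMod q) (vecq q) (volume : Measure (Fin (k + 1) → Fin m → UnitAddCircle)) S (4 * v)
    ⟨2 * v, by ring⟩ (evc U) (fun c => evc_meas hU c) p (fun A _ hA => by rw [← hp]; exact indep_prob q hU A hA)
  have h2 := h1.trans (det_bound (F := ZMod q) (vecq q) S v p hp0 hp1 hpv H)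
  exact (ENNReal.le_ofReal_iff_toReal_le (measure_ne_top _ _) (by positivity)).2 h2

lemma base_choose {m k : ℕ} {U : Set (Fin m → UnitAddCircle)} (hU : MeasurableSet U)
    (b2 : Fin k → EuclideanSpace ℝ (Fin k)) (s : ℝ) (ε : ENNReal)
    (H : ∀ σ : Fin k → UnitAddCircle, ∃ S : Finset (Fin k → ℤ),
      (∀ l ∈ S, ‖∑ j, (tlift σ j - l j) • b2 j‖ ≤ s) ∧ volume (⋂ c ∈ S, (evc U c)ᶜ) ≤ ε) :
    ∃ X : Fin k → Fin m → UnitAddCircle, ∫⁻ σ, volume (fib U b2 s σ X) ≤ ε := by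
  set G : Set (((Fin k → Fin m → UnitAddCircle) × (Fin k → UnitAddCircle)) × (Fin m → UnitAddCircle)) :=
    {w | w.2 ∈ fib U b2 s w.1.2 w.1.1} with hG
  have hGm : MeasurableSet G := by
    have : G = ⋂ l : Fin k → ℤ, ({w | ‖∑ j, (tlift w.1.2 j - l j) • b2 j‖ ≤ s}ᶜ ∪
        {w | w.2 - ∑ j, l j • w.1.1 j ∈ U}) := by
      ext w
      simp only [hG, fib, Set.mem_iInter, Set.mem_union, Set.mem_compl_iff, Set.mem_ofPred_eq]
      exact forall_congr' fun l => by tauto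
    rw [this]
    refine MeasurableSet.iInter fun l => MeasurableSet.union (MeasurableSet.compl ?_) ?_
    · refine measurableSet_le ?_ measurable_const
      refine Measurable.norm ?_
      refine Finset.measurable_sum _ fun j _ => ?_
      have hm : Measurable fun w : ((Fin k → Fin m → UnitAddCircle) × (Fin k → UnitAddCircle)) × (Fin m → UnitAddCircle) =>
          tlift w.1.2 j := (measurable_pi_apply j).comp (tlift_meas.comp (measurable_snd.comp measurable_fst))
      exact (hm.sub_const _).smul_const _
    · have hm : Measurable fun w : ((Fin k → Fin m → UnitAddCircle) × (Fin k → UnitAddCircle)) × (Fin m → UnitAddCircle) =>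
          w.2 - ∑ j, l j • w.1.1 j := by
        refine measurable_snd.sub ?_
        refine Finset.measurable_sum _ fun j _ => ?_
        exact ((measurable_pi_apply j).comp (measurable_fst.comp measurable_fst)).const_smul (l j)
      exact hm hU
  have hfm : Measurable fun p : (Fin k → Fin m → UnitAddCircle) × (Fin k → UnitAddCircle) => volume (fib U b2 s p.2 p.1) :=
    measurable_measure_prodMk_left hGm
  have hle : ∫⁻ X, ∫⁻ σ, volume (fib U b2 s σ X) ≤ ε := by
    rw [lintegral_lintegral_swap hfm.aemeasurable]
    have hσ : ∀ σ, ∫⁻ X, volume (fib U b2 s σ X) ≤ ε := by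
      intro σ
      obtain ⟨S, hS, hv⟩ := H σ
      refine le_trans ?_ hv
      have hmS : MeasurableSet (⋂ c ∈ S, (evc U c)ᶜ) :=
        Finset.measurableSet_biInter S fun c _ => (evc_meas hU c).compl
      have hmp := volume_preserving_piFinSuccAbove (fun _ : Fin (k + 1) => (Fin m → UnitAddCircle)) 0
      have hmp' := hmp.symm
      rw [← hmp'.measure_preimage hmS.nullMeasurableSet, Measure.volume_eq_prod,
        Measure.prod_apply_symm (hmp'.measurable hmS)]
      refine lintegral_mono fun X => measure_mono ?_
      intro g hg
      simp only [Set.mem_preimage, Set.mem_iInter]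
      intro c hc
      have := hg c (hS c hc)
      simp only [evc, Set.mem_compl_iff, Set.mem_ofPred_eq, not_not]
      convert this using 1
      rw [Fin.sum_univ_succ]
      simp [vecc, MeasurableEquiv.piFinSuccAbove, Fin.insertNthEquiv, sub_eq_add_neg]
    refine (lintegral_mono hσ).trans ?_
    simp
  obtain ⟨X, hX⟩ := exists_le_lintegral (μ := (volume : Measure (Fin k → Fin m → UnitAddCircle)))
    (f := fun X => ∫⁻ σ, volume (fib U b2 s σ X)) (hfm.lintegral_prod_right').aemeasurable
  exact ⟨X, hX.trans hle⟩


/-- volume of the unit ball -/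
def vk (k : ℕ) : ℝ := (volume (Metric.ball (0 : EuclideanSpace ℝ (Fin k)) 1)).toReal

lemma vk_pos (k : ℕ) : 0 < vk k :=
  ENNReal.toReal_pos (Metric.measure_ball_pos _ _ one_pos).ne' (measure_ball_lt_top).ne

lemma vol_cball (k : ℕ) (x : EuclideanSpace ℝ (Fin k)) (r : ℝ) (hr : 0 ≤ r) :
    volume (Metric.closedBall x r) = ENNReal.ofReal (vk k * r ^ k) := by
  rw [Measure.addHaar_closedBall _ _ hr, mul_comm (vk k), ENNReal.ofReal_mul (by positivity), vk,
    ENNReal.ofReal_toReal (measure_ball_lt_top).ne]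
  simp

/-- integer point as a vector -/
def ipt {k : ℕ} (l : Fin k → ℤ) : EuclideanSpace ℝ (Fin k) := WithLp.toLp 2 (fun j => (l j : ℝ))

def icube {k : ℕ} (l : Fin k → ℤ) : Set (EuclideanSpace ℝ (Fin k)) :=
  {y | ∀ j, (l j : ℝ) ≤ y j ∧ y j < l j + 1}

lemma icube_eq {k : ℕ} (l : Fin k → ℤ) :
    icube l = (MeasurableEquiv.toLp 2 (Fin k → ℝ)).symm ⁻¹' (Set.univ.pi fun j => Set.Ico (l j : ℝ) (l j + 1)) := by
  ext y
  simp [icube]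

lemma icube_meas {k : ℕ} (l : Fin k → ℤ) : MeasurableSet (icube l) := by
  rw [icube_eq]
  exact (MeasurableEquiv.measurable _) (MeasurableSet.univ_pi fun _ => measurableSet_Ico)

lemma icube_vol {k : ℕ} (l : Fin k → ℤ) : volume (icube l) = 1 := by
  rw [icube_eq, (EuclideanSpace.volume_preserving_symm_measurableEquiv_toLp (Fin k)).measure_preimage
    (MeasurableSet.univ_pi fun _ => measurableSet_Ico).nullMeasurableSet, volume_pi_pi]
  simp

lemma icube_mem {k : ℕ} (l : Fin k → ℤ) (y : EuclideanSpace ℝ (Fin k)) :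
    y ∈ icube l ↔ l = fun j => ⌊y j⌋ := by
  simp only [icube, Set.mem_ofPred_eq, funext_iff]
  refine forall_congr' fun j => ?_
  rw [eq_comm, Int.floor_eq_iff]

lemma icube_dist {k : ℕ} (l : Fin k → ℤ) (y : EuclideanSpace ℝ (Fin k)) (hy : y ∈ icube l) :
    dist y (ipt l) ≤ √k := by
  rw [EuclideanSpace.dist_eq]
  apply Real.sqrt_le_sqrt
  calc ∑ i, dist (y i) (ipt l i) ^ 2 ≤ ∑ i : Fin k, (1:ℝ) := by
        refine Finset.sum_le_sum fun i _ => ?_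
        have := hy i
        rw [Real.dist_eq, sq_abs]
        simp only [ipt]
        nlinarith
    _ = k := by simp

lemma count_upper {k : ℕ} (P : Finset (Fin k → ℤ)) (x : EuclideanSpace ℝ (Fin k)) (r : ℝ) (hr : 0 ≤ r)
    (h : ∀ l ∈ P, dist (ipt l) x ≤ r) : (P.card : ℝ) ≤ vk k * (r + √k) ^ k := by
  have h1 : volume (⋃ l ∈ P, icube l) = P.card := by
    rw [measure_biUnion_finset]
    · simp [icube_vol]
    · intro l _ l' _ hne
      refine Set.disjoint_left.2 fun y hy hy' => hne ?_
      rw [icube_mem] at hy hy'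
      rw [hy, hy']
    · intro l _; exact icube_meas l
  have h2 : (⋃ l ∈ P, icube l) ⊆ Metric.closedBall x (r + √k) := by
    intro y hy
    simp only [Set.mem_iUnion] at hy
    obtain ⟨l, hl, hy⟩ := hy
    have := dist_triangle y (ipt l) x
    rw [Metric.mem_closedBall]
    linarith [h l hl, icube_dist l y hy]
  have h3 := measure_mono (μ := volume) h2
  have hpos : 0 ≤ vk k * (r + √k) ^ k := mul_nonneg (vk_pos k).le (by positivity)
  rw [h1, vol_cball _ _ _ (by positivity)] at h3
  have := ENNReal.toReal_mono ENNReal.ofReal_ne_top h3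
  rwa [ENNReal.toReal_ofReal hpos, ENNReal.toReal_natCast] at this

lemma count_lower {k : ℕ} (P : Finset (Fin k → ℤ)) (x : EuclideanSpace ℝ (Fin k)) (r : ℝ) (hr : √k ≤ r)
    (h : ∀ l, dist (ipt l) x ≤ r → l ∈ P) : vk k * (r - √k) ^ k ≤ P.card := by
  have h1 : volume (⋃ l ∈ P, icube l) ≤ P.card := by
    refine (measure_biUnion_finset_le _ _).trans ?_
    simp [icube_vol]
  have h2 : Metric.closedBall x (r - √k) ⊆ (⋃ l ∈ P, icube l) := by
    intro y hy
    rw [Metric.mem_closedBall] at hy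
    have hyc : y ∈ icube (fun j => ⌊y j⌋) := (icube_mem _ _).2 rfl
    simp only [Set.mem_iUnion]
    refine ⟨fun j => ⌊y j⌋, h _ ?_, hyc⟩
    have := dist_triangle (ipt (fun j => ⌊y j⌋)) y x
    have := icube_dist _ y hyc
    rw [dist_comm] at this
    linarith
  have h3 := (measure_mono (μ := volume) h2).trans h1
  have hnn : 0 ≤ r - √k := by linarith
  have hpos : 0 ≤ vk k * (r - √k) ^ k := mul_nonneg (vk_pos k).le (by positivity)
  rw [vol_cball _ _ _ hnn] at h3
  have := ENNReal.toReal_mono (ENNReal.natCast_ne_top _) h3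
  rwa [ENNReal.toReal_ofReal hpos, ENNReal.toReal_natCast] at this

lemma count_coset {k : ℕ} (P : Finset (Fin k → ℤ)) (x : EuclideanSpace ℝ (Fin k)) (r : ℝ) (hr : 0 ≤ r)
    (H : ℕ) (hH : 0 < H) (hd : ∀ l ∈ P, ∀ l' ∈ P, ∀ j, (H : ℤ) ∣ l j - l' j)
    (h : ∀ l ∈ P, dist (ipt l) x ≤ r) : (P.card : ℝ) ≤ vk k * (r / H + √k) ^ k := by
  classical
  rcases P.eq_empty_or_nonempty with rfl | ⟨l0, hl0⟩
  · simp; exact mul_nonneg (vk_pos k).le (by positivity)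
  have hHr : (0:ℝ) < H := by exact_mod_cast hH
  have hHz : (H:ℤ) ≠ 0 := by exact_mod_cast hH.ne'
  set f : (Fin k → ℤ) → (Fin k → ℤ) := fun l j => (l j - l0 j) / H with hf
  have hfe : ∀ l ∈ P, ∀ j, l j = l0 j + H * f l j := by
    intro l hl j
    have := Int.mul_ediv_cancel' (hd l hl l0 hl0 j)
    simp only [hf]; linarith
  have hinj : Set.InjOn f (P : Set (Fin k → ℤ)) := by
    intro l hl l' hl' hll
    ext j
    rw [hfe l hl j, hfe l' hl' j, hll]
  rw [← Finset.card_image_of_injOn hinj]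
  refine count_upper (P.image f) ((H:ℝ)⁻¹ • (x - ipt l0)) (r / H) (by positivity) ?_
  intro m hm
  obtain ⟨l, hl, rfl⟩ := Finset.mem_image.1 hm
  have e1 : ipt (f l) = (H:ℝ)⁻¹ • (ipt l - ipt l0) := by
    ext j
    simp only [ipt, PiLp.smul_apply, PiLp.sub_apply, smul_eq_mul]
    have : (l j : ℝ) = l0 j + H * f l j := by exact_mod_cast hfe l hl j
    rw [this]; field_simp; ring
  rw [e1, dist_eq_norm, ← smul_sub, norm_smul, sub_sub_sub_cancel_right, ← dist_eq_norm,
    norm_inv, Real.norm_of_nonneg hHr.le, div_eq_inv_mul]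
  gcongr
  exact h l hl

open Classical in
lemma card_fiber {α : Type*} {e : ℕ} (B : Finset α) (T : Finset (Fin e → α)) (hT : ∀ c ∈ T, ∀ i, c i ∈ B)
    (i : Fin e) (M : ℕ)
    (h : ∀ c0 : Fin e → α, ∀ Q : Finset α, (∀ x ∈ Q, Function.update c0 i x ∈ T) → Q.card ≤ M) :
    T.card ≤ M * B.card ^ (e - 1) := by
  set f : (Fin e → α) → ({j // j ≠ i} → α) := fun c j => c j.1 with hf
  have h1 : T.card ≤ M * (T.image f).card := by
    refine Finset.card_le_mul_card_image T M ?_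
    intro a ha
    obtain ⟨c0, hc0, rfl⟩ := Finset.mem_image.1 ha
    have hup : ∀ c ∈ T.filter (fun c => f c = f c0), Function.update c0 i (c i) = c := by
      intro c hc
      ext j
      rcases eq_or_ne j i with rfl | hj
      · simp
      · rw [Function.update_of_ne hj]
        exact (congrFun (Finset.mem_filter.1 hc).2 ⟨j, hj⟩).symm
    have := h c0 ((T.filter (fun c => f c = f c0)).image (fun c => c i)) (by
      intro x hx
      obtain ⟨c, hc, rfl⟩ := Finset.mem_image.1 hx
      rw [hup c hc]; exact (Finset.mem_filter.1 hc).1)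
    rwa [Finset.card_image_of_injOn] at this
    intro c hc c' hc' hcc
    rw [← hup c hc, ← hup c' hc']
    simp only at hcc
    rw [hcc]
  refine h1.trans (Nat.mul_le_mul_left _ ?_)
  have h2 : T.image f ⊆ Fintype.piFinset (fun _ : {j // j ≠ i} => B) := by
    intro a ha
    obtain ⟨c, hc, rfl⟩ := Finset.mem_image.1 ha
    rw [Fintype.mem_piFinset]
    intro j; exact hT c hc j
  refine (Finset.card_le_card h2).trans ?_
  rw [Fintype.card_piFinset]
  simp [Fintype.card_subtype_compl]


open Classical in
/-- lattice points in a ball -/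
def slots {k : ℕ} (R : ℕ) (s : EuclideanSpace ℝ (Fin k)) : Finset (Fin k → ℤ) :=
  (Fintype.piFinset (fun _ : Fin k => Finset.Icc (-(R:ℤ)) (R + 1))).filter (fun l => dist (ipt l) s ≤ R)

lemma slots_dist {k R : ℕ} {s : EuclideanSpace ℝ (Fin k)} {l : Fin k → ℤ} (h : l ∈ slots R s) :
    dist (ipt l) s ≤ R := (Finset.mem_filter.1 h).2

lemma slots_box {k R : ℕ} {s : EuclideanSpace ℝ (Fin k)} {l : Fin k → ℤ} (h : l ∈ slots R s) (j : Fin k) :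
    -(R:ℤ) ≤ l j ∧ l j ≤ R + 1 :=
  Finset.mem_Icc.1 (Fintype.mem_piFinset.1 (Finset.mem_filter.1 h).1 j)

lemma mem_slots {k R : ℕ} {s : EuclideanSpace ℝ (Fin k)} (hs : ∀ j, 0 ≤ s j ∧ s j < 1) (l : Fin k → ℤ)
    (h : dist (ipt l) s ≤ R) : l ∈ slots R s := by
  refine Finset.mem_filter.2 ⟨Fintype.mem_piFinset.2 fun j => ?_, h⟩
  have h1 : |(l j : ℝ) - s j| ≤ R := by
    have := PiLp.norm_apply_le (ipt l - s) j
    rw [← dist_eq_norm] at this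
    refine le_trans ?_ h
    exact this
  have h2 := abs_le.1 h1
  have h3 := hs j
  rw [Finset.mem_Icc]
  constructor
  · have : (-(R:ℤ) : ℝ) ≤ l j := by push_cast; linarith
    exact_mod_cast this
  · have : (l j : ℝ) ≤ ((R + 1 : ℤ) : ℝ) := by push_cast; linarith
    exact_mod_cast this

/-- `lam` has a rational representative of height at most `H`. -/
def RepH (q : ℕ) (H : ℕ) (lam : ZMod q) : Prop :=
  ∃ a b : ℤ, |a| ≤ H ∧ |b| ≤ H ∧ b ≠ 0 ∧ lam * b = a

open Classical in
def Tup (q : ℕ) {k e : ℕ} (B : Finset (Fin k → ℤ)) (lam : Fin e → ZMod q) : Finset (Fin e → Fin k → ℤ) :=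
  (Fintype.piFinset (fun _ : Fin e => B)).filter
    (fun c => ∃ w ∈ B, ∀ l, ∑ i, lam i * (c i l : ZMod q) = (w l : ZMod q))

lemma zmod_eq_of_small {q : ℕ} {x y : ℤ} (h : (x : ZMod q) = y) (hs : |x - y| < q) : x = y := by
  have h1 : ((x - y : ℤ) : ZMod q) = 0 := by push_cast; rw [h, sub_self]
  rw [ZMod.intCast_zmod_eq_zero_iff_dvd] at h1
  have := Int.eq_zero_of_abs_lt_dvd h1 hs
  linarith

open Classical in
lemma Tup_fiber (q : ℕ) {k e : ℕ} (B : Finset (Fin k → ℤ)) (lam : Fin e → ZMod q) (i : Fin e) (M : ℕ)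
    (h : ∀ (Q : Finset (Fin k → ℤ)) (W : (Fin k → ℤ) → (Fin k → ℤ)), (∀ x ∈ Q, x ∈ B ∧ W x ∈ B) →
      (∀ x ∈ Q, ∀ x' ∈ Q, ∀ l, lam i * ((x l - x' l : ℤ) : ZMod q) = ((W x l - W x' l : ℤ) : ZMod q)) → Q.card ≤ M) :
    (Tup q B lam).card ≤ M * B.card ^ (e - 1) := by
  refine card_fiber B _ (fun c hc j => Fintype.mem_piFinset.1 (Finset.mem_filter.1 hc).1 j) i M ?_
  intro c0 Q hQ
  have h1 : ∀ x, ∃ w, x ∈ Q → w ∈ B ∧ ∀ l, ∑ j, lam j * (Function.update c0 i x j l : ZMod q) = (w l : ZMod q) := by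
    intro x
    by_cases hx : x ∈ Q
    · obtain ⟨w, hw, h2⟩ := (Finset.mem_filter.1 (hQ x hx)).2
      exact ⟨w, fun _ => ⟨hw, h2⟩⟩
    · exact ⟨x, fun h => absurd h hx⟩
  choose W hW using h1
  refine h Q W (fun x hx => ⟨?_, (hW x hx).1⟩) ?_
  · have := Fintype.mem_piFinset.1 (Finset.mem_filter.1 (hQ x hx)).1 i
    simpa using this
  · intro x hx x' hx' l
    have e1 := (hW x hx).2 l
    have e2 := (hW x' hx').2 l
    push_cast
    rw [← e1, ← e2, ← Finset.sum_sub_distrib, Finset.sum_eq_single i]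
    · simp; ring
    · intro j _ hj
      simp [Function.update_of_ne hj]
    · simp

lemma case3 (q : ℕ) {k e g : ℕ} (hg : 2 ≤ g) (s : EuclideanSpace ℝ (Fin k))
    (lam : Fin e → ZMod q) (i : Fin e) (hn : ¬ RepH q (g ^ 3) (lam i)) :
    (Tup q (slots (g ^ 4) s) lam).card ≤ ((2 * g + 1) ^ 2) ^ k * (slots (g ^ 4) s).card ^ (e - 1) := by
  classical
  refine Tup_fiber q _ lam i _ ?_
  intro Q W hB hrel
  have hg3 : (0:ℤ) < (g:ℤ) ^ 3 := by positivity
  have hcell : ∀ x ∈ slots (g ^ 4) s, ∀ j, x j / (g:ℤ) ^ 3 ∈ Finset.Icc (-(g:ℤ)) g := by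
    intro x hx j
    have := slots_box hx j
    push_cast at this
    rw [Finset.mem_Icc]
    constructor
    · rw [Int.le_ediv_iff_mul_le hg3]; nlinarith
    · rw [← Int.lt_add_one_iff, Int.ediv_lt_iff_lt_mul hg3]
      have : (1:ℤ) < (g:ℤ) ^ 3 := by
        have : (2:ℤ) ≤ g := by exact_mod_cast hg
        nlinarith [sq_nonneg (g:ℤ)]
      nlinarith
  have hcard : (Fintype.piFinset (fun _ : Fin k => Finset.Icc (-(g:ℤ)) g ×ˢ Finset.Icc (-(g:ℤ)) g)).card =
      ((2 * g + 1) ^ 2) ^ k := by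
    rw [Fintype.card_piFinset]
    simp only [Finset.card_product, Int.card_Icc, Finset.prod_const, Finset.card_univ, Fintype.card_fin]
    have : ((g:ℤ) + 1 - -g).toNat = 2 * g + 1 := by omega
    rw [this]; ring
  rw [← hcard]
  refine Finset.card_le_card_of_injOn (fun x j => (x j / (g:ℤ) ^ 3, W x j / (g:ℤ) ^ 3)) ?_ ?_
  · intro x hx
    simp only [Finset.mem_coe, Fintype.mem_piFinset, Finset.mem_product]
    intro j
    exact ⟨hcell x (hB x hx).1 j, hcell _ (hB x hx).2 j⟩
  · intro x hx x' hx' hxx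
    ext j
    by_contra hne
    have h1 := congrFun hxx j
    simp only [Prod.mk.injEq] at h1
    have key : ∀ a b : ℤ, a / (g:ℤ) ^ 3 = b / (g:ℤ) ^ 3 → |a - b| ≤ ((g ^ 3 : ℕ) : ℤ) := by
      intro a b hab
      have e1 := Int.mul_ediv_add_emod a ((g:ℤ) ^ 3)
      have e2 := Int.mul_ediv_add_emod b ((g:ℤ) ^ 3)
      have e3 := Int.emod_nonneg a hg3.ne'
      have e4 := Int.emod_nonneg b hg3.ne'
      have e5 := Int.emod_lt_of_pos a hg3
      have e6 := Int.emod_lt_of_pos b hg3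
      rw [hab] at e1
      push_cast
      rw [abs_le]; constructor <;> linarith
    exact hn ⟨W x j - W x' j, x j - x' j, key _ _ h1.2, key _ _ h1.1, sub_ne_zero.2 hne, hrel x hx x' hx' j⟩

lemma case1 (q : ℕ) [Fact q.Prime] {k e g : ℕ} (hg : 2 ≤ g) (hq : 10 * g ^ 7 < q) (s : EuclideanSpace ℝ (Fin k))
    (lam : Fin e → ZMod q) (i : Fin e) (H : ℕ) (hH : 1 ≤ H) (hHg : H ≤ g ^ 3) (hr : RepH q H (lam i))
    (hn : ¬ RepH q (H - 1) (lam i)) :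
    ((Tup q (slots (g ^ 4) s) lam).card : ℝ) ≤
      vk k * ((g:ℝ) ^ 4 / H + √k) ^ k * (slots (g ^ 4) s).card ^ (e - 1) := by
  classical
  have hpos : 0 ≤ vk k * ((g:ℝ) ^ 4 / H + √k) ^ k := mul_nonneg (vk_pos k).le (by positivity)
  obtain ⟨a, b, ha, hb, hb0, hab⟩ := hr
  have hHq : H < q := by
    have : g ^ 3 ≤ g ^ 7 := Nat.pow_le_pow_right (by omega) (by norm_num)
    omega
  have hcop : IsCoprime a b := by
    rw [Int.isCoprime_iff_gcd_eq_one]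
    by_contra hne
    have hd0 : Int.gcd a b ≠ 0 := by
      intro h; exact hb0 (Int.gcd_eq_zero_iff.1 h).2
    have hd2 : 2 ≤ Int.gcd a b := by omega
    obtain ⟨a', ha'⟩ := Int.gcd_dvd_left a b
    obtain ⟨b', hb'⟩ := Int.gcd_dvd_right a b
    set d := Int.gcd a b with hd
    have hbb : b' ≠ 0 := by rintro rfl; simp at hb'; exact hb0 hb'
    have hd2z : (2:ℤ) ≤ d := by exact_mod_cast hd2
    have aux : ∀ t t' : ℤ, |t| ≤ H → t = d * t' → |t'| ≤ ((H - 1 : ℕ) : ℤ) := by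
      intro t t' h1 h2
      rw [h2, abs_mul, abs_of_pos (by linarith)] at h1
      have := abs_nonneg t'
      have h3 : 2 * |t'| ≤ H := by nlinarith
      omega
    have hdH : d ≤ H := by
      have h1 : (1:ℤ) ≤ |b'| := Int.one_le_abs hbb
      have h2 := hb
      rw [hb', abs_mul, abs_of_pos (by linarith : (0:ℤ) < d)] at h2
      have : (d:ℤ) ≤ H := by nlinarith
      exact_mod_cast this
    have hdq : ((d : ℕ) : ZMod q) ≠ 0 := by
      intro h
      rw [ZMod.natCast_eq_zero_iff] at h
      have := Nat.le_of_dvd (by omega) h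
      omega
    refine hn ⟨a', b', aux a a' ha ha', aux b b' hb hb', hbb, ?_⟩
    apply mul_left_cancel₀ hdq
    have h3 := hab
    rw [ha', hb'] at h3
    push_cast at h3
    rw [← h3]; ring
  have hmax : |a| = H ∨ |b| = H := by
    by_contra hcon
    push Not at hcon
    refine hn ⟨a, b, ?_, ?_, hb0, hab⟩ <;> omega
  have hfib := Tup_fiber q (slots (g ^ 4) s) lam i ⌊vk k * ((g:ℝ) ^ 4 / H + √k) ^ k⌋₊ ?_
  · have h1 : ((Tup q (slots (g ^ 4) s) lam).card : ℝ) ≤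
      (⌊vk k * ((g:ℝ) ^ 4 / H + √k) ^ k⌋₊ : ℝ) * (slots (g ^ 4) s).card ^ (e - 1) := by exact_mod_cast hfib
    refine h1.trans ?_
    gcongr
    exact Nat.floor_le hpos
  · intro Q W hB hrel
    apply Nat.le_floor
    have hgz : (2:ℤ) ≤ g := by exact_mod_cast hg
    have hex : ∀ x ∈ Q, ∀ x' ∈ Q, ∀ l, b * (W x l - W x' l) = a * (x l - x' l) := by
      intro x hx x' hx' l
      apply zmod_eq_of_small (q := q)
      · push_cast
        have := hrel x hx x' hx' l
        push_cast at this
        rw [← this, ← hab]; ring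
      · have bd : ∀ t ∈ slots (g ^ 4) s, ∀ t' ∈ slots (g ^ 4) s, |t l - t' l| ≤ 2 * (g:ℤ) ^ 4 + 1 := by
          intro t ht t' ht'
          have h1 := slots_box ht l
          have h2 := slots_box ht' l
          push_cast at h1 h2
          rw [abs_le]; constructor <;> linarith
        have b1 := bd _ (hB x hx).2 _ (hB x' hx').2
        have b2 := bd _ (hB x hx).1 _ (hB x' hx').1
        have hHz : (H:ℤ) ≤ (g:ℤ) ^ 3 := by exact_mod_cast hHg
        have hqz : 10 * (g:ℤ) ^ 7 < q := by exact_mod_cast hq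
        have h5 : |b * (W x l - W x' l)| ≤ (g:ℤ) ^ 3 * (2 * (g:ℤ) ^ 4 + 1) := by
          rw [abs_mul]; exact mul_le_mul (hb.trans hHz) b1 (abs_nonneg _) (by positivity)
        have h6 : |a * (x l - x' l)| ≤ (g:ℤ) ^ 3 * (2 * (g:ℤ) ^ 4 + 1) := by
          rw [abs_mul]; exact mul_le_mul (ha.trans hHz) b2 (abs_nonneg _) (by positivity)
        have h7 := abs_sub (b * (W x l - W x' l)) (a * (x l - x' l))
        have h8 : (g:ℤ) ^ 3 ≤ (g:ℤ) ^ 7 := pow_le_pow_right₀ (by linarith) (by norm_num)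
        have h9 : (g:ℤ) ^ 3 * (2 * (g:ℤ) ^ 4 + 1) = 2 * (g:ℤ) ^ 7 + (g:ℤ) ^ 3 := by ring
        rw [h9] at h5 h6
        linarith
    have hHdvd : ∀ t : ℤ, |t| = H → ∀ y, t ∣ y → (H:ℤ) ∣ y := by
      intro t ht y hy
      rw [← ht]; exact (abs_dvd t y).2 hy
    rcases hmax with hm | hm
    · have ha0 : a ≠ 0 := by
        rintro rfl
        simp at hm; omega
      have hinj : Set.InjOn W (Q : Set (Fin k → ℤ)) := by
        intro x hx x' hx' hww
        ext l
        have := hex x hx x' hx' l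
        rw [hww, sub_self, mul_zero] at this
        rcases mul_eq_zero.1 this.symm with h | h
        · exact absurd h ha0
        · linarith
      rw [← Finset.card_image_of_injOn hinj]
      refine count_coset (Q.image W) s ((g:ℝ) ^ 4) (by positivity) H hH ?_ ?_
      · intro l hl l' hl' j
        obtain ⟨x, hx, rfl⟩ := Finset.mem_image.1 hl
        obtain ⟨x', hx', rfl⟩ := Finset.mem_image.1 hl'
        refine hHdvd a hm _ ?_
        exact hcop.dvd_of_dvd_mul_left (Dvd.intro _ (hex x hx x' hx' j).symm)
      · intro l hl
        obtain ⟨x, hx, rfl⟩ := Finset.mem_image.1 hl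
        have := slots_dist (hB x hx).2
        exact_mod_cast this
    · refine count_coset Q s ((g:ℝ) ^ 4) (by positivity) H hH ?_ ?_
      · intro x hx x' hx' j
        refine hHdvd b hm _ ?_
        exact hcop.symm.dvd_of_dvd_mul_left (Dvd.intro _ (hex x hx x' hx' j))
      · intro x hx
        have := slots_dist (hB x hx).1
        exact_mod_cast this


lemma rep_one (q : ℕ) (x : ZMod q) (h : RepH q 1 x) : ∃ ε : ℤ, (ε = 0 ∨ ε = 1 ∨ ε = -1) ∧ x = ε := by
  obtain ⟨a, b, ha, hb, hb0, hab⟩ := h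
  rw [abs_le] at ha hb
  push_cast at ha hb
  have hb' : b = 1 ∨ b = -1 := by omega
  have ha' : a = 0 ∨ a = 1 ∨ a = -1 := by omega
  rcases hb' with rfl | rfl
  · exact ⟨a, ha', by simpa using hab⟩
  · refine ⟨-a, by omega, ?_⟩
    push_cast
    rw [← hab]; simp

lemma midpt {V : Type*} [NormedAddCommGroup V] [InnerProductSpace ℝ V] (x u : V) (ε R : ℝ) (hε : ε ^ 2 = 1)
    (hR : 0 ≤ R) (h1 : ‖x‖ ≤ R) (h2 : ‖u + ε • x‖ ≤ R) (h3 : R / 2 ≤ ‖u‖) : ‖x + (ε / 2) • u‖ ≤ 0.97 * R := by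
  have e1 : ‖x + (ε / 2) • u‖ ^ 2 = ‖x‖ ^ 2 + ε * inner ℝ x u + ‖u‖ ^ 2 / 4 := by
    rw [norm_add_sq_real, inner_smul_right, norm_smul, mul_pow, Real.norm_eq_abs, sq_abs, div_pow, hε]; ring
  have e2 : ‖u + ε • x‖ ^ 2 = ‖u‖ ^ 2 + 2 * (ε * inner ℝ x u) + ‖x‖ ^ 2 := by
    rw [norm_add_sq_real, inner_smul_right, norm_smul, mul_pow, Real.norm_eq_abs, sq_abs, hε, real_inner_comm]; ring
  have i1 : ‖x‖ ^ 2 ≤ R ^ 2 := by gcongr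
  have i2 : ‖u + ε • x‖ ^ 2 ≤ R ^ 2 := by gcongr
  have i3 : (R / 2) ^ 2 ≤ ‖u‖ ^ 2 := by gcongr
  refine abs_le_of_sq_le_sq' ?_ (by positivity) |>.2
  nlinarith

open Classical in
lemma case2 (q : ℕ) {k e g : ℕ} (hq : (e + 2) * (g ^ 4 + 1) < q) (s : EuclideanSpace ℝ (Fin k))
    (lam : Fin e → ZMod q) (hr : ∀ i, RepH q 1 (lam i)) (hsum : ∑ i, lam i = 1)
    (hun : ∀ i, lam ≠ Pi.single i 1) :
    ((Tup q (slots (g ^ 4) s) lam).card : ℝ) ≤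
      2 * (vk k * (0.97 * (g:ℝ) ^ 4 + √k) ^ k) * (slots (g ^ 4) s).card ^ (e - 1) := by
  set Bs := slots (g ^ 4) s with hBs
  have hpos : 0 ≤ vk k * (0.97 * (g:ℝ) ^ 4 + √k) ^ k := mul_nonneg (vk_pos k).le (by positivity)
  choose ε hε hle using fun i => rep_one q (lam i) (hr i)
  have hεabs : ∀ i, |ε i| ≤ 1 := by
    intro i; rcases hε i with h | h | h <;> simp [h]
  have hqz : ((e:ℤ) + 2) * ((g:ℤ) ^ 4 + 1) < q := by exact_mod_cast hq
  have hsumz : ∑ i, ε i = 1 := by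
    apply zmod_eq_of_small (q := q)
    · push_cast; rw [← hsum]; exact Finset.sum_congr rfl fun i _ => (hle i).symm
    · have h1 : |∑ i, ε i| ≤ e := by
        refine (Finset.abs_sum_le_sum_abs _ _).trans ((Finset.sum_le_sum fun i _ => hεabs i).trans ?_)
        simp
      have h2 := abs_sub (∑ i, ε i) 1
      have h3 : (0:ℤ) ≤ (g:ℤ)^4 := by positivity
      rw [abs_one] at h2
      nlinarith
  obtain ⟨i, hi⟩ : ∃ i, ε i ≠ 0 := by
    by_contra hcon
    push Not at hcon
    simp [hcon] at hsumz
  obtain ⟨i2, hi2, hne⟩ : ∃ i2, ε i2 ≠ 0 ∧ i2 ≠ i := by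
    by_contra hcon
    push Not at hcon
    have h0 : ∀ j, j ≠ i → ε j = 0 := fun j hj => by
      by_contra h; exact hj (hcon j h)
    rw [Finset.sum_eq_single i (fun j _ hj => h0 j hj) (by simp)] at hsumz
    apply hun i
    ext j
    rcases eq_or_ne j i with rfl | hj
    · rw [hle j, hsumz]; simp
    · rw [hle j, h0 j hj, Pi.single_eq_of_ne hj]; simp
  have hsq : ∀ j, ε j ≠ 0 → ((ε j : ℤ) : ℝ) ^ 2 = 1 := by
    intro j hj
    rcases hε j with h | h | h
    · exact absurd h hj
    · simp [h]
    · simp [h]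
  set u : (Fin e → Fin k → ℤ) → EuclideanSpace ℝ (Fin k) :=
    fun c => ∑ j ∈ Finset.univ.erase i, (ε j : ℝ) • (ipt (c j) - s) with hu
  have hmem : ∀ c ∈ Tup q Bs lam, (∀ j, c j ∈ Bs) ∧ ‖u c + (ε i : ℝ) • (ipt (c i) - s)‖ ≤ (g:ℝ) ^ 4 := by
    intro c hc
    obtain ⟨hcB, w, hw, hrel⟩ := Finset.mem_filter.1 hc
    rw [Fintype.mem_piFinset] at hcB
    refine ⟨hcB, ?_⟩
    have hex : ∀ l, ∑ j, ε j * c j l = w l := by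
      intro l
      apply zmod_eq_of_small (q := q)
      · push_cast; rw [← hrel l]; exact Finset.sum_congr rfl fun j _ => by rw [hle j]
      · have bd : ∀ t ∈ Bs, |t l| ≤ (g:ℤ) ^ 4 + 1 := by
          intro t ht
          have h1 := slots_box ht l
          push_cast at h1
          rw [abs_le]; constructor <;> linarith
        have h1 : |∑ j, ε j * c j l| ≤ e * ((g:ℤ) ^ 4 + 1) := by
          refine (Finset.abs_sum_le_sum_abs _ _).trans ?_
          calc ∑ j, |ε j * c j l| ≤ ∑ j : Fin e, ((g:ℤ) ^ 4 + 1) := by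
                refine Finset.sum_le_sum fun j _ => ?_
                rw [abs_mul]
                have := mul_le_mul (hεabs j) (bd _ (hcB j)) (abs_nonneg _) (by norm_num)
                linarith
            _ = _ := by simp
        have h2 := abs_sub (∑ j, ε j * c j l) (w l)
        have h3 := bd w hw
        have h4 : (0:ℤ) ≤ (g:ℤ)^4 := by positivity
        nlinarith
    have e1 : u c + (ε i : ℝ) • (ipt (c i) - s) = ipt w - s := by
      rw [hu]; simp only
      rw [Finset.sum_erase_add _ _ (Finset.mem_univ i)]
      have e2 : ∑ j, (ε j : ℝ) • (ipt (c j) - s) = ∑ j, (ε j : ℝ) • ipt (c j) - (∑ j, (ε j : ℝ)) • s := by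
        rw [Finset.sum_smul, ← Finset.sum_sub_distrib]
        simp [smul_sub]
      have e3 : ∑ j, (ε j : ℝ) = 1 := by exact_mod_cast hsumz
      rw [e2, e3, one_smul]
      congr 1
      ext l
      have := hex l
      have h5 : ∑ j, (ε j : ℝ) * (c j l : ℝ) = w l := by exact_mod_cast this
      simp [ipt, h5]
    rw [e1, ← dist_eq_norm]
    have := slots_dist hw
    exact_mod_cast this
  set M := ⌊vk k * (0.97 * (g:ℝ) ^ 4 + √k) ^ k⌋₊ with hM
  set T1 := (Tup q Bs lam).filter (fun c => (g:ℝ) ^ 4 / 2 ≤ ‖u c‖) with hT1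
  set T2 := (Tup q Bs lam).filter (fun c => ¬ (g:ℝ) ^ 4 / 2 ≤ ‖u c‖) with hT2
  have hc1 : T1.card ≤ M * Bs.card ^ (e - 1) := by
    refine card_fiber Bs T1 (fun c hc => (hmem c (Finset.mem_filter.1 hc).1).1) i M ?_
    intro c0 Q hQ
    apply Nat.le_floor
    refine count_upper Q (s - ((ε i : ℝ) / 2) • u c0) (0.97 * (g:ℝ) ^ 4) (by positivity) ?_
    intro x hx
    obtain ⟨h1, h2⟩ := Finset.mem_filter.1 (hQ x hx)
    have hux : u (Function.update c0 i x) = u c0 := by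
      rw [hu]
      refine Finset.sum_congr rfl fun j hj => ?_
      rw [Function.update_of_ne (Finset.ne_of_mem_erase hj)]
    obtain ⟨h3, h4⟩ := hmem _ h1
    rw [hux] at h2 h4
    rw [Function.update_self] at h4
    have h5 := h3 i
    rw [Function.update_self] at h5
    have h6 := slots_dist h5
    rw [dist_eq_norm] at h6
    push_cast at h6
    have := midpt (ipt x - s) (u c0) (ε i : ℝ) ((g:ℝ) ^ 4) (hsq i hi) (by positivity) h6 h4 h2
    rw [dist_eq_norm]
    rwa [← sub_add]
  have hc2 : T2.card ≤ M * Bs.card ^ (e - 1) := by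
    refine card_fiber Bs T2 (fun c hc => (hmem c (Finset.mem_filter.1 hc).1).1) i2 M ?_
    intro c0 Q hQ
    apply Nat.le_floor
    set u1 := ∑ j ∈ (Finset.univ.erase i).erase i2, (ε j : ℝ) • (ipt (c0 j) - s) with hu1
    refine count_upper Q (s - (ε i2 : ℝ) • u1) (0.97 * (g:ℝ) ^ 4) (by positivity) ?_
    intro x hx
    obtain ⟨h1, h2⟩ := Finset.mem_filter.1 (hQ x hx)
    have hux : u (Function.update c0 i2 x) = u1 + (ε i2 : ℝ) • (ipt x - s) := by
      rw [hu]; simp only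
      rw [← Finset.sum_erase_add _ _ (Finset.mem_erase.2 ⟨hne, Finset.mem_univ i2⟩), Function.update_self]
      congr 1
      refine Finset.sum_congr rfl fun j hj => ?_
      rw [Function.update_of_ne (Finset.ne_of_mem_erase hj)]
    rw [hux, not_le] at h2
    have e1 : ipt x - (s - (ε i2 : ℝ) • u1) = (ε i2 : ℝ) • (u1 + (ε i2 : ℝ) • (ipt x - s)) := by
      rw [smul_add, smul_smul, ← pow_two, hsq i2 hi2, one_smul]; abel
    have e2 : ‖(ε i2 : ℝ)‖ = 1 := by
      have := hsq i2 hi2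
      rw [Real.norm_eq_abs]
      rw [← sq_abs] at this
      nlinarith [abs_nonneg (ε i2 : ℝ)]
    rw [dist_eq_norm, e1, norm_smul, e2, one_mul]
    have : (0:ℝ) ≤ (g:ℝ) ^ 4 := by positivity
    linarith
  have hc : (Tup q Bs lam).card = T1.card + T2.card := (Finset.card_filter_add_card_filter_not _).symm
  have hMle : (M:ℝ) ≤ vk k * (0.97 * (g:ℝ) ^ 4 + √k) ^ k := Nat.floor_le hpos
  have h1 : ((Tup q Bs lam).card : ℝ) ≤ 2 * M * Bs.card ^ (e - 1) := by
    have : (Tup q Bs lam).card ≤ 2 * M * Bs.card ^ (e - 1) := by rw [hc]; linarith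
    exact_mod_cast this
  refine h1.trans ?_
  gcongr

open Classical in
def RepF (q H : ℕ) [Fact q.Prime] : Finset (ZMod q) := Finset.univ.filter (RepH q H)

lemma RepF_card (q H : ℕ) [Fact q.Prime] (hH : H < q) : (RepF q H).card ≤ (2 * H + 1) ^ 2 := by
  classical
  have hsub : RepF q H ⊆ (Finset.Icc (-(H:ℤ)) H ×ˢ Finset.Icc (-(H:ℤ)) H).image (fun p => (p.1 : ZMod q) / (p.2 : ZMod q)) := by
    intro x hx
    obtain ⟨a, b, ha, hb, hb0, hab⟩ := (Finset.mem_filter.1 hx).2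
    refine Finset.mem_image.2 ⟨(a, b), ?_, ?_⟩
    · simp only [Finset.mem_product, Finset.mem_Icc]
      exact ⟨abs_le.1 ha, abs_le.1 hb⟩
    · have : (b : ZMod q) ≠ 0 := by
        intro h
        rw [ZMod.intCast_zmod_eq_zero_iff_dvd] at h
        exact hb0 (Int.eq_zero_of_abs_lt_dvd h (lt_of_le_of_lt hb (by exact_mod_cast hH)))
      simp only
      rw [← hab, mul_div_assoc, div_self this, mul_one]
  refine (Finset.card_le_card hsub).trans (Finset.card_image_le.trans ?_)
  rw [Finset.card_product, Int.card_Icc]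
  have : ((H:ℤ) + 1 - -H).toNat = 2 * H + 1 := by omega
  rw [this]; exact le_of_eq (by ring)


open Classical in
lemma NCtup_mem {α M F : Type*} [Field F] [AddCommGroup M] [Module F M] (v : α → M)
    (S : Finset α) (e : ℕ) (c : Fin e → α) (hc : c ∈ NCtup F v S e) :
    (∀ i, c i ∈ S) ∧ ∃ w ∈ S, (∀ i, c i ≠ w) ∧ v w ∈ Submodule.span F (Set.range fun i => v (c i)) := by
  obtain ⟨hcS, hinj, hli, w, hw, hwn, hspan⟩ := Finset.mem_filter.1 hc
  rw [Fintype.mem_piFinset] at hcS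
  have himg : v '' ((Finset.univ.image c : Finset α) : Set α) = Set.range (fun i => v (c i)) := by
    ext y; simp
  rw [himg] at hspan
  refine ⟨hcS, w, hw, fun i hi => hwn ?_, hspan⟩
  exact Finset.mem_image.2 ⟨i, Finset.mem_univ i, hi⟩

open Classical in
lemma NCtup_cover (q : ℕ) [Fact q.Prime] {k e R : ℕ} (hq : 2 * R + 1 < q) (s : EuclideanSpace ℝ (Fin k))
    (S : Finset (Fin k → ℤ)) (hS : S ⊆ slots R s) (c : Fin e → Fin k → ℤ)
    (hc : c ∈ NCtup (ZMod q) (vecq q) S e) :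
    ∃ lam : Fin e → ZMod q, ∑ i, lam i = 1 ∧ (∀ i, lam ≠ Pi.single i 1) ∧ c ∈ Tup q (slots R s) lam := by
  obtain ⟨hcS, w, hw, hwn, hspan⟩ := NCtup_mem _ _ _ _ hc
  rw [Submodule.mem_span_range_iff_exists_fun] at hspan
  obtain ⟨lam, hlam⟩ := hspan
  have h0 : ∑ i, lam i = 1 := by
    have := congrFun hlam 0
    simpa [vecq, vecc, Finset.sum_apply] using this
  have h1 : ∀ l, ∑ i, lam i * (c i l : ZMod q) = (w l : ZMod q) := by
    intro l
    have := congrFun hlam l.succ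
    simpa [vecq, vecc, Finset.sum_apply, Finset.sum_neg_distrib] using this
  refine ⟨lam, h0, ?_, ?_⟩
  · rintro i rfl
    apply hwn i
    ext l
    have := h1 l
    rw [Finset.sum_eq_single i (fun j _ hj => by rw [Pi.single_eq_of_ne hj, zero_mul]) (by simp),
      Pi.single_eq_same, one_mul] at this
    refine zmod_eq_of_small this ?_
    have b1 := slots_box (hS (hcS i)) l
    have b2 := slots_box (hS hw) l
    have : 2 * (R:ℤ) + 1 < q := by exact_mod_cast hq
    rw [abs_lt]; constructor <;> linarith
  · exact Finset.mem_filter.2 ⟨Fintype.mem_piFinset.2 fun i => hS (hcS i), w, hS hw, h1⟩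

lemma biU_bound {ι β : Type*} [DecidableEq β] (L : Finset ι) (f : ι → Finset β) (n : ℕ) (M : ℝ) (hL : L.card ≤ n) (hM : 0 ≤ M)
    (h : ∀ a ∈ L, ((f a).card : ℝ) ≤ M) : ((L.biUnion f).card : ℝ) ≤ n * M := by
  have h1 : ((L.biUnion f).card : ℝ) ≤ ∑ a ∈ L, ((f a).card : ℝ) := by exact_mod_cast Finset.card_biUnion_le
  refine h1.trans ((Finset.sum_le_card_nsmul L _ M h).trans ?_)
  rw [nsmul_eq_mul]
  gcongr

open Classical in
set_option maxHeartbeats 400000 in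
lemma NC_total (q : ℕ) [Fact q.Prime] {k e g : ℕ} (hg : 2 ≤ g) (hq : 10 * g ^ 7 < q) (hq2 : (e + 2) * (g ^ 4 + 1) < q)
    (s : EuclideanSpace ℝ (Fin k)) (S : Finset (Fin k → ℤ)) (hS : S ⊆ slots (g ^ 4) s) :
    ((NCtup (ZMod q) (vecq q) S e).card : ℝ) ≤
      ((q:ℝ) ^ e * ((2 * g + 1) ^ 2) ^ k +
        ∑ H ∈ Finset.Icc 2 (g ^ 3), ((2 * (H:ℝ) + 1) ^ 2) ^ e * (vk k * ((g:ℝ) ^ 4 / H + √k) ^ k) +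
        9 ^ e * (2 * (vk k * (0.97 * (g:ℝ) ^ 4 + √k) ^ k))) * (slots (g ^ 4) s).card ^ (e - 1) := by
  set Bs := slots (g ^ 4) s with hBs
  have hvk := (vk_pos k).le
  have hg3q : g ^ 3 < q := by
    have : g ^ 3 ≤ g ^ 7 := Nat.pow_le_pow_right (by omega) (by norm_num)
    omega
  set L3 : Finset (Fin e → ZMod q) := Finset.univ.filter (fun lam => ∃ i, ¬ RepH q (g ^ 3) (lam i)) with hL3
  set L1 : ℕ → Finset (Fin e → ZMod q) := fun H =>
    Finset.univ.filter (fun lam => (∀ i, RepH q H (lam i)) ∧ ∃ i, ¬ RepH q (H - 1) (lam i)) with hL1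
  set L2 : Finset (Fin e → ZMod q) := Finset.univ.filter (fun lam => (∀ i, RepH q 1 (lam i)) ∧ ∑ i, lam i = 1 ∧
    ∀ i, lam ≠ Pi.single i 1) with hL2
  have hcov : NCtup (ZMod q) (vecq q) S e ⊆ (L3.biUnion (Tup q Bs) ∪
      (Finset.Icc 2 (g ^ 3)).biUnion (fun H => (L1 H).biUnion (Tup q Bs))) ∪ L2.biUnion (Tup q Bs) := by
    intro c hc
    obtain ⟨lam, h1, h2, h3⟩ := NCtup_cover q (by nlinarith) s S hS c hc
    by_cases h4 : ∃ i, ¬ RepH q (g ^ 3) (lam i)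
    · refine Finset.mem_union_left _ (Finset.mem_union_left _ (Finset.mem_biUnion.2 ⟨lam, ?_, h3⟩))
      exact Finset.mem_filter.2 ⟨Finset.mem_univ _, h4⟩
    push Not at h4
    have hex : ∃ H, ∀ i, RepH q H (lam i) := ⟨_, h4⟩
    set H := Nat.find hex with hHd
    have hH := Nat.find_spec hex
    have hHle : H ≤ g ^ 3 := Nat.find_min' hex h4
    by_cases hH1 : H ≤ 1
    · refine Finset.mem_union_right _ (Finset.mem_biUnion.2 ⟨lam, ?_, h3⟩)
      refine Finset.mem_filter.2 ⟨Finset.mem_univ _, ?_, h1, h2⟩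
      intro i
      obtain ⟨a, b, ha, hb, hr⟩ := hH i
      rw [← hHd] at ha hb
      exact ⟨a, b, ha.trans (by exact_mod_cast hH1), hb.trans (by exact_mod_cast hH1), hr⟩
    · refine Finset.mem_union_left _ (Finset.mem_union_right _ (Finset.mem_biUnion.2 ⟨H, ?_, Finset.mem_biUnion.2 ⟨lam, ?_, h3⟩⟩))
      · exact Finset.mem_Icc.2 ⟨by omega, hHle⟩
      · refine Finset.mem_filter.2 ⟨Finset.mem_univ _, hH, ?_⟩
        have := Nat.find_min hex (m := H - 1) (by omega)
        push Not at this
        exact this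
  have hc3 : ((L3.biUnion (Tup q Bs)).card : ℝ) ≤ ((q ^ e : ℕ) : ℝ) * ((((2 * g + 1) ^ 2) ^ k : ℝ) * (Bs.card : ℝ) ^ (e - 1)) := by
    refine biU_bound L3 _ _ _ ?_ (by positivity) ?_
    · refine (Finset.card_le_univ _).trans ?_
      simp [ZMod.card]
    · intro lam hlam
      obtain ⟨i, hi⟩ := (Finset.mem_filter.1 hlam).2
      have h1 := case3 q hg s lam i hi
      have h2 : ((Tup q Bs lam).card : ℝ) ≤ ((((2 * g + 1) ^ 2) ^ k * Bs.card ^ (e - 1) : ℕ) : ℝ) := Nat.cast_le.2 h1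
      rw [Nat.cast_mul, Nat.cast_pow, Nat.cast_pow, Nat.cast_pow] at h2
      push_cast at h2
      exact h2
  have hpi : ∀ H, H < q → ∀ L : Finset (Fin e → ZMod q), (∀ lam ∈ L, ∀ i, RepH q H (lam i)) →
      L.card ≤ ((2 * H + 1) ^ 2) ^ e := by
    intro H hH L hL
    have : L ⊆ Fintype.piFinset (fun _ : Fin e => RepF q H) := by
      intro lam hlam
      rw [Fintype.mem_piFinset]
      intro i
      exact Finset.mem_filter.2 ⟨Finset.mem_univ _, hL lam hlam i⟩
    refine (Finset.card_le_card this).trans ?_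
    rw [Fintype.card_piFinset]
    simp only [Finset.prod_const, Finset.card_univ, Fintype.card_fin]
    exact Nat.pow_le_pow_left (RepF_card q H hH) e
  have hc1 : ∀ H ∈ Finset.Icc 2 (g ^ 3), (((L1 H).biUnion (Tup q Bs)).card : ℝ) ≤
      ((((2 * H + 1) ^ 2) ^ e : ℕ) : ℝ) * (vk k * ((g:ℝ) ^ 4 / H + √k) ^ k * (Bs.card : ℝ) ^ (e - 1)) := by
    intro H hH
    rw [Finset.mem_Icc] at hH
    refine biU_bound (L1 H) _ _ _ ?_ (by positivity) ?_
    · exact hpi H (by omega) _ fun lam hlam => (Finset.mem_filter.1 hlam).2.1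
    · intro lam hlam
      obtain ⟨h1, i, hi⟩ := (Finset.mem_filter.1 hlam).2
      exact case1 q hg hq s lam i H (by omega) hH.2 (h1 i) hi
  have hc2 : ((L2.biUnion (Tup q Bs)).card : ℝ) ≤ ((9 ^ e : ℕ) : ℝ) *
      (2 * (vk k * (0.97 * (g:ℝ) ^ 4 + √k) ^ k) * (Bs.card : ℝ) ^ (e - 1)) := by
    refine biU_bound L2 _ _ _ ?_ (by positivity) ?_
    · have := hpi 1 (Fact.out : q.Prime).one_lt L2 fun lam hlam => (Finset.mem_filter.1 hlam).2.1
      simpa using this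
    · intro lam hlam
      obtain ⟨h1, h2, h3⟩ := (Finset.mem_filter.1 hlam).2
      exact case2 q hq2 s lam h1 h2 h3
  have hc1' : (((Finset.Icc 2 (g ^ 3)).biUnion (fun H => (L1 H).biUnion (Tup q Bs))).card : ℝ) ≤
      ∑ H ∈ Finset.Icc 2 (g ^ 3), ((((2 * H + 1) ^ 2) ^ e : ℕ) : ℝ) * (vk k * ((g:ℝ) ^ 4 / H + √k) ^ k * (Bs.card : ℝ) ^ (e - 1)) := by
    refine le_trans ?_ (Finset.sum_le_sum hc1)
    exact_mod_cast Finset.card_biUnion_le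
  have htot : ((NCtup (ZMod q) (vecq q) S e).card : ℝ) ≤ (L3.biUnion (Tup q Bs)).card +
      ((Finset.Icc 2 (g ^ 3)).biUnion (fun H => (L1 H).biUnion (Tup q Bs))).card + (L2.biUnion (Tup q Bs)).card := by
    have := (Finset.card_le_card hcov).trans ((Finset.card_union_le _ _).trans
      (Nat.add_le_add_right (Finset.card_union_le _ _) _))
    exact_mod_cast this
  refine htot.trans ((add_le_add (add_le_add hc3 hc1') hc2).trans (le_of_eq ?_))
  push_cast
  rw [add_mul, add_mul, Finset.sum_mul]
  congr 1
  · congr 1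
    · ring
    · exact Finset.sum_congr rfl fun H _ => by ring
  · ring


lemma base_ev (v k : ℕ) : ∃ g0 : ℕ, ∀ g : ℕ, g0 ≤ g → 11 ≤ g ∧ 8 * v + 3 ≤ g ∧
    (1 + 2 * √k / g) ^ k ≤ 2 ∧ (1 / 2 ≤ (1 - 2 * √k / g) ^ k ∧ 2 * √k / g ≤ 1) ∧
    2 ^ (8 * v) * 9 ^ k ≤ ((1 / 2) ^ (22 * v) * vk k) * (g : ℝ) := by
  have h0 : Filter.Tendsto (fun g : ℕ => 2 * √k / (g:ℝ)) Filter.atTop (nhds 0) :=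
    tendsto_const_div_atTop_nhds_zero_nat _
  have h1 : Filter.Tendsto (fun g : ℕ => (1 + 2 * √k / (g:ℝ)) ^ k) Filter.atTop (nhds 1) := by
    simpa using (h0.const_add 1).pow k
  have h2 : Filter.Tendsto (fun g : ℕ => (1 - 2 * √k / (g:ℝ)) ^ k) Filter.atTop (nhds 1) := by
    simpa using (h0.const_sub 1).pow k
  have hc : 0 < (1 / 2 : ℝ) ^ (22 * v) * vk k := mul_pos (by positivity) (vk_pos k)
  have h3 : Filter.Tendsto (fun g : ℕ => ((1 / 2 : ℝ) ^ (22 * v) * vk k) * (g : ℝ)) Filter.atTop Filter.atTop :=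
    tendsto_natCast_atTop_atTop.const_mul_atTop hc
  have := (Filter.eventually_ge_atTop 11).and ((Filter.eventually_ge_atTop (8 * v + 3)).and
    ((h1.eventually_le_const (by norm_num : (1:ℝ) < 2)).and
    (((h2.eventually_const_le (by norm_num : (1/2:ℝ) < 1)).and (h0.eventually_le_const (by norm_num : (0:ℝ) < 1))).and
    (h3.eventually_ge_atTop (2 ^ (8 * v) * 9 ^ k)))))
  exact Filter.eventually_atTop.1 this

lemma pow_shift (k g : ℕ) (hg : 0 < g) (h : (1 + 2 * √k / g) ^ k ≤ 2) (t : ℝ) (ht : (g:ℝ) / 2 ≤ t) :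
    (t + √k) ^ k ≤ 2 * t ^ k := by
  have hg' : (0:ℝ) < g := by exact_mod_cast hg
  have ht0 : 0 < t := by linarith [half_pos hg']
  have e : t + √k = t * (1 + √k / t) := by field_simp
  have h1 : √k / t ≤ 2 * √k / g := by
    rw [div_le_div_iff₀ ht0 hg']
    nlinarith [Real.sqrt_nonneg (k:ℝ)]
  rw [e, mul_pow, mul_comm]
  have h2 : (1 + √k / t) ^ k ≤ (1 + 2 * √k / g) ^ k := by gcongr
  exact mul_le_mul_of_nonneg_right (h2.trans h) (by positivity)

lemma sumH (v k e N : ℕ) (hv : 1 ≤ v) (hk : 2000 * v ≤ k) (he : e ≤ 8 * v) :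
    ∑ H ∈ Finset.Icc 2 N, ((2 * (H:ℝ) + 1) ^ 2) ^ e / (H:ℝ) ^ k ≤ (1 / 2) ^ (22 * v) / 4 := by
  have h1 : ∀ H ∈ Finset.Icc 2 N, ((2 * (H:ℝ) + 1) ^ 2) ^ e / (H:ℝ) ^ k ≤ (1 / 2) ^ (22 * v + 2) * ((H:ℝ) ^ 2)⁻¹ := by
    intro H hH
    have hH2 : (2:ℝ) ≤ H := by exact_mod_cast (Finset.mem_Icc.1 hH).1
    have hH0 : (0:ℝ) < H := by linarith
    have a1 : (2 * (H:ℝ) + 1) ^ 2 ≤ (H:ℝ) ^ 6 := by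
      have b1 : 2 * (H:ℝ) + 1 ≤ 4 * H := by linarith
      have b2 : 4 * (H:ℝ) ≤ H ^ 3 := by nlinarith [mul_nonneg hH0.le (mul_nonneg (sub_nonneg.2 hH2) (by linarith : 0 ≤ (H:ℝ) + 2))]
      calc (2 * (H:ℝ) + 1) ^ 2 ≤ (H ^ 3) ^ 2 := by gcongr; linarith
        _ = _ := by ring
    have a2 : ((2 * (H:ℝ) + 1) ^ 2) ^ e ≤ (H:ℝ) ^ (48 * v) := by
      calc _ ≤ ((H:ℝ) ^ 6) ^ e := by gcongr
        _ = (H:ℝ) ^ (6 * e) := by rw [pow_mul]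
        _ ≤ _ := pow_le_pow_right₀ (by linarith) (by omega)
    have a3 : (H:ℝ) ^ (48 * v) * (2 ^ (22 * v + 2) * (H:ℝ) ^ 2) ≤ (H:ℝ) ^ k := by
      calc _ ≤ (H:ℝ) ^ (48 * v) * ((H:ℝ) ^ (22 * v + 2) * (H:ℝ) ^ 2) := by gcongr
        _ = (H:ℝ) ^ (48 * v + (22 * v + 2) + 2) := by rw [← pow_add, ← pow_add]; ring_nf
        _ ≤ _ := pow_le_pow_right₀ (by linarith) (by omega)
    rw [div_le_iff₀ (by positivity)]
    refine a2.trans ?_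
    have e1 : (1 / 2 : ℝ) ^ (22 * v + 2) * ((H:ℝ) ^ 2)⁻¹ * (H:ℝ) ^ k = (H:ℝ) ^ k / (2 ^ (22 * v + 2) * (H:ℝ) ^ 2) := by
      rw [one_div, inv_pow]; field_simp
    rw [e1, le_div_iff₀ (by positivity)]
    exact a3
  refine (Finset.sum_le_sum h1).trans ?_
  rw [← Finset.mul_sum]
  have h2 : ∑ H ∈ Finset.Icc 2 N, ((H:ℝ) ^ 2)⁻¹ ≤ 1 := by
    rcases le_or_gt 1 N with hN | hN
    · have := sum_Ioc_inv_sq_le_sub (α := ℝ) (k := 1) (n := N) one_ne_zero hN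
      have e2 : Finset.Icc 2 N = Finset.Ioc 1 N := by ext x; simp [Finset.mem_Icc, Finset.mem_Ioc]; omega
      rw [e2]
      refine this.trans ?_
      have : (0:ℝ) ≤ (N:ℝ)⁻¹ := by positivity
      simp
    · have : Finset.Icc 2 N = ∅ := Finset.Icc_eq_empty (by omega)
      rw [this]; simp
  calc _ ≤ (1 / 2 : ℝ) ^ (22 * v + 2) * 1 := by gcongr
    _ = _ := by rw [pow_add]; ring

lemma num97 (v k e : ℕ) (hv : 1 ≤ v) (hk : 2000 * v ≤ k) (he : e ≤ 8 * v) :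
    (9:ℝ) ^ e * 2 * 0.97 ^ k ≤ (1 / 2) ^ (22 * v) / 4 := by
  have h1 : (9:ℝ) ^ e ≤ (9 ^ 8) ^ v := by
    rw [← pow_mul]; exact pow_le_pow_right₀ (by norm_num) he
  have h2 : (0.97:ℝ) ^ k ≤ (1 / 2 ^ 80) ^ v := by
    calc (0.97:ℝ) ^ k ≤ 0.97 ^ (2000 * v) := pow_le_pow_of_le_one (by norm_num) (by norm_num) hk
      _ = ((0.97 ^ 25) ^ 80) ^ v := by rw [← pow_mul, ← pow_mul]; congr 1; ring
      _ ≤ ((1 / 2) ^ 80) ^ v := by gcongr; norm_num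
      _ = _ := by norm_num
  calc (9:ℝ) ^ e * 2 * 0.97 ^ k ≤ (9 ^ 8) ^ v * 2 * (1 / 2 ^ 80) ^ v := by gcongr
    _ = 2 * ((9 ^ 8 * (1 / 2 ^ 80) * 2 ^ 22) ^ v * ((1 / 2) ^ 22) ^ v) := by
      rw [← mul_pow]
      have : (9:ℝ) ^ 8 * (1 / 2 ^ 80) * 2 ^ 22 * (1 / 2) ^ 22 = 9 ^ 8 * (1 / 2 ^ 80) := by norm_num
      rw [this, mul_pow]; ring
    _ ≤ 2 * ((1 / 8) ^ v * ((1 / 2) ^ 22) ^ v) := by gcongr; norm_num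
    _ ≤ 2 * ((1 / 8) * ((1 / 2) ^ 22) ^ v) := by
      gcongr
      exact pow_le_of_le_one (by norm_num) (by norm_num) (by omega)
    _ = _ := by rw [← pow_mul]; ring

lemma base_count (v k : ℕ) (hv : 1 ≤ v) (hk : 2000 * v ≤ k) : ∃ g0 : ℕ, ∀ g : ℕ, g0 ≤ g → 11 ≤ g ∧
    ∀ q : ℕ, ∀ _ : Fact q.Prime, g ^ 8 < q → q ≤ 2 * g ^ 8 → ∀ s : EuclideanSpace ℝ (Fin k), (∀ j, 0 ≤ s j ∧ s j < 1) →
    ∃ S ⊆ slots (g ^ 4) s, S.card = ⌈vk k * (g:ℝ) ^ (4 * k) / 2⌉₊ ∧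
      ∀ e ≤ 2 * (4 * v), ((NCtup (ZMod q) (vecq q) S e).card : ℝ) ≤ (1 / 64) ^ v * S.card ^ e := by
  obtain ⟨g0, hg0⟩ := base_ev v k
  refine ⟨g0, fun g hg => ?_⟩
  obtain ⟨h11, h8v, hup, ⟨hlo, hle1⟩, hbig⟩ := hg0 g hg
  refine ⟨h11, fun q _ hq1 hq2 s hs => ?_⟩
  have hgr : (11:ℝ) ≤ g := by exact_mod_cast h11
  have hvk := vk_pos k
  set V := vk k * (g:ℝ) ^ (4 * k) with hV
  have hVpos : 0 < V := by positivity
  have hsk := Real.sqrt_nonneg (k:ℝ)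
  have hg4 : (g:ℝ) ≤ (g:ℝ) ^ 4 := le_self_pow₀ (by linarith) (by norm_num)
  have hlow : V / 2 ≤ (slots (g ^ 4) s).card := by
    have hcle : √k ≤ (g:ℝ) ^ 4 := by
      rw [div_le_one (by linarith)] at hle1
      linarith
    have := count_lower (slots (g ^ 4) s) s ((g:ℝ) ^ 4) hcle (fun l hl => mem_slots hs l (by exact_mod_cast hl))
    refine le_trans ?_ this
    have e1 : (g:ℝ) ^ 4 - √k = (g:ℝ) ^ 4 * (1 - √k / (g:ℝ) ^ 4) := by field_simp
    have e2 : √k / (g:ℝ) ^ 4 ≤ 2 * √k / g := by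
      rw [div_le_div_iff₀ (by positivity) (by positivity)]
      nlinarith
    have e3 : (1 - 2 * √k / g) ^ k ≤ (1 - √k / (g:ℝ) ^ 4) ^ k := by
      apply pow_le_pow_left₀ <;> linarith
    rw [e1, mul_pow, ← pow_mul, ← mul_assoc, ← hV]
    nlinarith
  have hupc : ((slots (g ^ 4) s).card : ℝ) ≤ 2 * V := by
    have := count_upper (slots (g ^ 4) s) s ((g:ℝ) ^ 4) (by positivity)
      (fun l hl => by exact_mod_cast slots_dist hl)
    refine this.trans ?_
    have h2 := pow_shift k g (by omega) hup ((g:ℝ) ^ 4) (by linarith)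
    calc _ ≤ vk k * (2 * ((g:ℝ) ^ 4) ^ k) := by gcongr
      _ = _ := by rw [hV, pow_mul]; ring
  obtain ⟨S, hSsub, hScard⟩ := Finset.exists_subset_card_eq (s := slots (g ^ 4) s) (n := ⌈V / 2⌉₊) (Nat.ceil_le.2 hlow)
  refine ⟨S, hSsub, hScard, fun e he => ?_⟩
  have hq10 : 10 * g ^ 7 < q := by
    refine lt_of_le_of_lt ?_ hq1
    calc 10 * g ^ 7 ≤ g * g ^ 7 := Nat.mul_le_mul_right _ (by omega)
      _ = g ^ 8 := by ring
  have hqe : (e + 2) * (g ^ 4 + 1) < q := by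
    refine lt_of_le_of_lt ?_ hq1
    calc (e + 2) * (g ^ 4 + 1) ≤ g * (2 * g ^ 4) := by
          apply Nat.mul_le_mul (by omega)
          have : 1 ≤ g ^ 4 := Nat.one_le_pow _ _ (by omega)
          omega
      _ = 2 * g ^ 5 := by ring
      _ ≤ g ^ 3 * g ^ 5 := Nat.mul_le_mul_right _ (by nlinarith [Nat.pow_le_pow_left h11 3])
      _ = g ^ 8 := by ring
  rcases Nat.eq_zero_or_pos e with rfl | hepos
  · have : NCtup (ZMod q) (vecq q) S 0 = ∅ := by
      rw [Finset.eq_empty_iff_forall_notMem]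
      intro c hc
      obtain ⟨lam, h1, -⟩ := NCtup_cover q (by nlinarith) s S hSsub c hc
      simp at h1
    rw [this]; simp
  have htot := NC_total q (by omega) hq10 hqe s S hSsub
  have he8 : e ≤ 8 * v := by omega
  have hM3 : (q:ℝ) ^ e * ((2 * g + 1) ^ 2) ^ k ≤ (1 / 2) ^ (22 * v) / 2 * (2 * V) := by
    have a1 : (q:ℝ) ≤ 2 * (g:ℝ) ^ 8 := by exact_mod_cast hq2
    have a2 : (1:ℝ) ≤ 2 * (g:ℝ) ^ 8 := by
      have : (1:ℝ) ≤ (g:ℝ) ^ 8 := one_le_pow₀ (by linarith)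
      linarith
    calc (q:ℝ) ^ e * ((2 * g + 1) ^ 2) ^ k ≤ (2 * (g:ℝ) ^ 8) ^ (8 * v) * ((3 * g) ^ 2) ^ k := by
          gcongr
          · calc (q:ℝ) ^ e ≤ (2 * (g:ℝ) ^ 8) ^ e := by gcongr
              _ ≤ _ := pow_le_pow_right₀ a2 he8
          · linarith
      _ = (2 ^ (8 * v) * 9 ^ k) * (g:ℝ) ^ (64 * v + 2 * k) := by
          have e9 : (9:ℝ) ^ k = 3 ^ (2 * k) := by rw [pow_mul]; norm_num
          rw [e9, mul_pow 2, mul_pow 3, mul_pow _ _ k, ← pow_mul, ← pow_mul, pow_add]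
          ring
      _ ≤ ((1 / 2) ^ (22 * v) * vk k) * (g:ℝ) * (g:ℝ) ^ (64 * v + 2 * k) := by gcongr
      _ = ((1 / 2) ^ (22 * v) * vk k) * (g:ℝ) ^ (64 * v + 2 * k + 1) := by rw [pow_succ]; ring
      _ ≤ ((1 / 2) ^ (22 * v) * vk k) * (g:ℝ) ^ (4 * k) := by
          gcongr
          · linarith
          · omega
      _ = _ := by rw [hV]; ring
  have hM1 : ∑ H ∈ Finset.Icc 2 (g ^ 3), ((2 * (H:ℝ) + 1) ^ 2) ^ e * (vk k * ((g:ℝ) ^ 4 / H + √k) ^ k) ≤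
      (1 / 2) ^ (22 * v) / 4 * (2 * V) := by
    calc _ ≤ ∑ H ∈ Finset.Icc 2 (g ^ 3), ((2 * (H:ℝ) + 1) ^ 2) ^ e / (H:ℝ) ^ k * (2 * V) := by
          refine Finset.sum_le_sum fun H hH => ?_
          obtain ⟨hH2, hH3⟩ := Finset.mem_Icc.1 hH
          have hH2r : (2:ℝ) ≤ H := by exact_mod_cast hH2
          have hH3r : (H:ℝ) ≤ (g:ℝ) ^ 3 := by exact_mod_cast hH3
          have hH0 : (0:ℝ) < H := by linarith
          have h2 := pow_shift k g (by omega) hup ((g:ℝ) ^ 4 / H) (by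
            rw [le_div_iff₀ hH0]
            nlinarith)
          calc ((2 * (H:ℝ) + 1) ^ 2) ^ e * (vk k * ((g:ℝ) ^ 4 / H + √k) ^ k)
              ≤ ((2 * (H:ℝ) + 1) ^ 2) ^ e * (vk k * (2 * ((g:ℝ) ^ 4 / H) ^ k)) := by gcongr
            _ = _ := by rw [hV, pow_mul, div_pow]; ring
      _ = (∑ H ∈ Finset.Icc 2 (g ^ 3), ((2 * (H:ℝ) + 1) ^ 2) ^ e / (H:ℝ) ^ k) * (2 * V) := by rw [Finset.sum_mul]
      _ ≤ _ := by
          gcongr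
          exact sumH v k e _ hv hk he8
  have hM2 : 9 ^ e * (2 * (vk k * (0.97 * (g:ℝ) ^ 4 + √k) ^ k)) ≤ (1 / 2) ^ (22 * v) / 4 * (2 * V) := by
    have h2 := pow_shift k g (by omega) hup (0.97 * (g:ℝ) ^ 4) (by linarith)
    calc 9 ^ e * (2 * (vk k * (0.97 * (g:ℝ) ^ 4 + √k) ^ k)) ≤ 9 ^ e * (2 * (vk k * (2 * (0.97 * (g:ℝ) ^ 4) ^ k))) := by gcongr
      _ = (9 ^ e * 2 * 0.97 ^ k) * (2 * V) := by rw [hV, pow_mul, mul_pow]; ring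
      _ ≤ _ := by
          gcongr
          exact num97 v k e hv hk he8
  have hSr : 2 * V ≤ 4 * (S.card : ℝ) := by
    rw [hScard]
    have := Nat.le_ceil (V / 2)
    linarith
  calc ((NCtup (ZMod q) (vecq q) S e).card : ℝ) ≤ ((1 / 2) ^ (22 * v) * (2 * V)) * (slots (g ^ 4) s).card ^ (e - 1) := by
        refine htot.trans ?_
        gcongr
        linarith
    _ ≤ ((1 / 2) ^ (22 * v) * (2 * V)) * (2 * V) ^ (e - 1) := by gcongr
    _ = (1 / 2) ^ (22 * v) * (2 * V) ^ e := by
        rw [mul_assoc, ← pow_succ', Nat.sub_add_cancel hepos]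
    _ ≤ (1 / 2) ^ (22 * v) * (4 * (S.card : ℝ)) ^ e := by gcongr
    _ = (1 / 2) ^ (22 * v) * 4 ^ e * (S.card : ℝ) ^ e := by rw [mul_pow]; ring
    _ ≤ (1 / 2) ^ (22 * v) * 4 ^ (8 * v) * (S.card : ℝ) ^ e := by
        gcongr
        norm_num
    _ = _ := by
        congr 1
        rw [pow_mul, pow_mul, ← mul_pow]; norm_num


lemma vk_eq (k : ℕ) : vk k = √Real.pi ^ k / Real.Gamma ((k:ℝ) / 2 + 1) := by
  unfold vk
  rcases Nat.eq_zero_or_pos k with rfl | hk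
  · have : (Metric.ball (0 : EuclideanSpace ℝ (Fin 0)) 1) = Set.univ := by
      ext x; simp [Subsingleton.elim x 0]
    rw [this]
    have := EuclideanSpace.volume_preserving_symm_measurableEquiv_toLp (Fin 0)
    rw [← Set.preimage_univ (f := (MeasurableEquiv.toLp 2 (Fin 0 → ℝ)).symm), this.measure_preimage MeasurableSet.univ.nullMeasurableSet]
    rw [volume_pi, Measure.pi_of_empty]
    simp
  · have : Nonempty (Fin k) := ⟨⟨0, hk⟩⟩
    rw [EuclideanSpace.volume_ball]
    simp only [ENNReal.ofReal_one, one_pow, one_mul, Fintype.card_fin]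
    refine ENNReal.toReal_ofReal ?_
    have : 0 < Real.Gamma ((k:ℝ) / 2 + 1) := Real.Gamma_pos_of_pos (by positivity)
    positivity

lemma gam_sq (x : ℝ) (hx : 0 < x) : Real.Gamma (x + 1/2) ^ 2 * x ≤ Real.Gamma (x + 1) ^ 2 := by
  have h := Real.Gamma_mul_add_mul_le_rpow_Gamma_mul_rpow_Gamma (s := x) (t := x + 1) (a := 1/2) (b := 1/2)
    hx (by linarith) (by norm_num) (by norm_num) (by norm_num)
  have e : 1 / 2 * x + 1 / 2 * (x + 1) = x + 1 / 2 := by ring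
  rw [e, ← Real.sqrt_eq_rpow, ← Real.sqrt_eq_rpow] at h
  have g1 := Real.Gamma_pos_of_pos hx
  have g2 := Real.Gamma_pos_of_pos (show 0 < x + 1 by linarith)
  have g3 := Real.Gamma_pos_of_pos (show 0 < x + 1/2 by linarith)
  have h2 : Real.Gamma (x + 1/2) ^ 2 ≤ Real.Gamma x * Real.Gamma (x + 1) := by
    calc _ ≤ (√(Real.Gamma x) * √(Real.Gamma (x + 1))) ^ 2 := by gcongr
      _ = _ := by rw [mul_pow, Real.sq_sqrt g1.le, Real.sq_sqrt g2.le]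
  have h3 := Real.Gamma_add_one hx.ne'
  calc _ ≤ (Real.Gamma x * Real.Gamma (x + 1)) * x := by gcongr
    _ = _ := by rw [h3]; ring

lemma vk_ratio (k : ℕ) : vk (k + 1) ^ 2 * (k + 1) ≤ 2 * Real.pi * vk k ^ 2 := by
  rw [vk_eq, vk_eq]
  have h := gam_sq ((k:ℝ) / 2 + 1 / 2) (by positivity)
  have e1 : (k:ℝ) / 2 + 1 / 2 + 1 / 2 = k / 2 + 1 := by ring
  have e2 : ((k + 1 : ℕ) : ℝ) / 2 + 1 = (k:ℝ) / 2 + 1 / 2 + 1 := by push_cast; ring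
  rw [e1] at h
  rw [e2]
  have g1 := Real.Gamma_pos_of_pos (show 0 < (k:ℝ) / 2 + 1 by positivity)
  have g2 := Real.Gamma_pos_of_pos (show 0 < (k:ℝ) / 2 + 1 / 2 + 1 by positivity)
  set A := Real.Gamma ((k:ℝ) / 2 + 1)
  set B := Real.Gamma ((k:ℝ) / 2 + 1 / 2 + 1)
  have hpi : √Real.pi ^ 2 = Real.pi := Real.sq_sqrt Real.pi_pos.le
  rw [pow_succ √Real.pi k, div_pow, mul_pow, div_pow, hpi]
  rw [div_mul_eq_mul_div, mul_div_assoc', div_le_div_iff₀ (by positivity) (by positivity)]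
  have : 0 ≤ (√Real.pi ^ k) ^ 2 * Real.pi := by have := Real.pi_pos; positivity
  nlinarith

lemma circ_vol (α ρ : ℝ) (hα : 0 < α) (hρ : 0 ≤ ρ) (h : 2 * ρ ≤ α) :
    (volume : Measure (Fin 1 → UnitAddCircle)).real
      (unc (fun _ : Fin 1 => EuclideanSpace.single (0 : Fin 1) α) ρ)ᶜ = 2 * ρ / α := by
  have e : (unc (fun _ : Fin 1 => EuclideanSpace.single (0 : Fin 1) α) ρ)ᶜ =
      Set.univ.pi fun _ : Fin 1 => Metric.closedBall (0 : UnitAddCircle) (ρ / α) := by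
    rw [unc_compl]
    ext g
    simp only [Set.mem_image, Set.mem_ofPred_eq, Set.mem_univ_pi, mem_closedBall_zero_iff,
      Fin.sum_univ_one, norm_smul, PiLp.norm_single, Real.norm_eq_abs, abs_of_pos hα]
    constructor
    · rintro ⟨t, ht, rfl⟩ i
      rw [Subsingleton.elim i 0]
      rw [le_div_iff₀ hα]
      refine le_trans ?_ ht
      gcongr
      exact QuotientAddGroup.norm_mk_le_norm
    · intro hg
      obtain ⟨t, rfl⟩ := tpi_surj g
      have h0 := hg 0
      simp only [tpi] at h0
      rw [UnitAddCircle.norm_eq, le_div_iff₀ hα] at h0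
      refine ⟨fun i => t i - round (t i), h0, ?_⟩
      rw [tpi_eq]
      exact ⟨fun i => - round (t i), fun i => by push_cast; ring⟩
  rw [e, measureReal_def, volume_pi_pi]
  simp only [Fin.prod_univ_one]
  rw [AddCircle.volume_closedBall, min_eq_right]
  · rw [ENNReal.toReal_ofReal (by positivity)]; ring
  · rw [← mul_div_assoc, div_le_one hα]; exact h

lemma latticeDet_std (k : ℕ) : latticeDet (fun j : Fin k => EuclideanSpace.single j (1:ℝ)) = 1 := by
  unfold latticeDet
  have : (Matrix.of fun i j : Fin k => (EuclideanSpace.single j (1:ℝ)) i) = 1 := by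
    ext i j
    simp [Matrix.one_apply]
  rw [this]; simp

lemma basisFun_lI (k : ℕ) : LinearIndependent ℝ (fun j : Fin k => EuclideanSpace.single j (1:ℝ)) := by
  rw [← latticeDet_ne_zero_iff, latticeDet_std]; exact one_ne_zero

lemma base_lat (v k : ℕ) (hv : 1 ≤ v) (hk : 2000 * v ≤ k) :
    ∃ (b0 : Fin (1 + k) → EuclideanSpace ℝ (Fin (1 + k))) (r0 : ℝ), 0 < r0 ∧ LinearIndependent ℝ b0 ∧
      vk (1 + k) * r0 ^ (1 + k) ≤ 8 * v * latticeDet b0 ∧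
      volume (unc b0 r0) ≤ ENNReal.ofReal (4 * (1 / 2) ^ v) := by
  obtain ⟨g0, hg0⟩ := base_count v k hv hk
  have hvk := vk_pos k
  set g := max g0 ⌈2 * v / vk k⌉₊ with hg
  obtain ⟨h11, H⟩ := hg0 g (le_max_left _ _)
  have hgr : (11:ℝ) ≤ g := by exact_mod_cast h11
  have hgv : 2 * v / vk k ≤ g := (Nat.le_ceil _).trans (Nat.cast_le.2 (le_max_right _ _))
  rw [div_le_iff₀ hvk] at hgv
  obtain ⟨q, hqp, hq1, hq2⟩ := Nat.exists_prime_lt_and_le_two_mul (g ^ 8) (by positivity)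
  have hF : Fact q.Prime := ⟨hqp⟩
  have H2 := H q hF hq1 hq2
  set V := vk k * (g:ℝ) ^ (4 * k) with hV
  set N0 := ⌈V / 2⌉₊ with hN0
  have hk0 : 0 < k := by omega
  have hkr : (0:ℝ) < k := by exact_mod_cast hk0
  have hvr : (1:ℝ) ≤ v := by exact_mod_cast hv
  have hN0V : V / 2 ≤ N0 := Nat.le_ceil _
  have hNv : (v:ℝ) ≤ N0 := by
    have : (g:ℝ) ≤ (g:ℝ) ^ (4 * k) := le_self_pow₀ (by linarith) (by omega)
    have : vk k * g ≤ V := by rw [hV]; gcongr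
    linarith
  have hN0pos : (0:ℝ) < N0 := by linarith
  set R : ℝ := (g:ℝ) ^ 4 with hR
  have hRpos : 0 < R := by positivity
  set ρ := R / √k with hρ
  have hsk : 0 < √(k:ℝ) := Real.sqrt_pos.2 hkr
  have hρpos : 0 < ρ := by positivity
  set α := 2 * ρ * N0 / v with hα
  have hαpos : 0 < α := by positivity
  have h2ρ : 2 * ρ ≤ α := by
    rw [hα, le_div_iff₀ (by linarith)]; gcongr
  set b1 : Fin 1 → EuclideanSpace ℝ (Fin 1) := fun _ => EuclideanSpace.single (0 : Fin 1) α with hb1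
  set b2 : Fin k → EuclideanSpace ℝ (Fin k) := fun j => EuclideanSpace.single j (1:ℝ) with hb2
  have hd1 : latticeDet b1 = α := by
    simp [latticeDet, hb1, abs_of_pos hαpos]
  have hl1 : LinearIndependent ℝ b1 := by
    rw [← latticeDet_ne_zero_iff, hd1]; exact hαpos.ne'
  have hl2 := basisFun_lI k
  have hU := unc_meas b1 hl1 ρ
  have hvol := circ_vol α ρ hαpos hρpos.le h2ρ
  obtain ⟨X, hX⟩ := base_choose hU b2 R (ENNReal.ofReal (4 * (1 / 2) ^ v)) (by
    intro σ
    obtain ⟨S, hS1, hS2, hS3⟩ := H2 (WithLp.toLp 2 (tlift σ)) (fun j => tlift_mem σ j)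
    refine ⟨S, fun l hl => ?_, fib_prob q hU S v (2 * ρ / α) hvol ?_ hS3⟩
    · have h1 := slots_dist (hS1 hl)
      rw [dist_comm, dist_eq_norm] at h1
      push_cast at h1
      rw [hR]
      have e : ∑ j, (tlift σ j - l j) • b2 j = WithLp.toLp 2 (tlift σ) - ipt l := by
        ext i
        simp [hb2, ipt, Pi.single_apply]
      rw [e]; exact h1
    · rw [hS2, hα]
      field_simp)
  choose x hx using fun j => tpi_surj (X j)
  refine ⟨glue b1 b2 x, √(ρ ^ 2 + R ^ 2), by positivity, glue_indep b1 b2 x hl1 hl2, ?_, ?_⟩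
  · rw [latticeDet_glue, hd1, latticeDet_std, mul_one]
    have e1 : 8 * v * α = 16 * ρ * N0 := by rw [hα]; field_simp; ring
    rw [e1]
    have e2 : √(ρ ^ 2 + R ^ 2) = R * √(1 + 1 / k) := by
      rw [← Real.sqrt_sq hRpos.le, ← Real.sqrt_mul (by positivity), Real.sqrt_sq hRpos.le]
      congr 1
      rw [hρ, div_pow, Real.sq_sqrt hkr.le]; field_simp; ring
    have e3 : √(1 + 1 / (k:ℝ)) ^ (1 + k) ≤ Real.exp 1 := by
      have : √(1 + 1 / (k:ℝ)) ≤ Real.exp (1 / (2 * k)) := by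
        rw [Real.sqrt_le_left (by positivity), ← Real.exp_nat_mul]
        have := Real.add_one_le_exp (1 / (k:ℝ))
        refine le_trans (by linarith) (this.trans (le_of_eq ?_))
        congr 1; push_cast; field_simp
      calc _ ≤ Real.exp (1 / (2 * k)) ^ (1 + k) := by gcongr
        _ = Real.exp ((1 + k) / (2 * k)) := by
          rw [← Real.exp_nat_mul]; congr 1; push_cast; field_simp
        _ ≤ _ := by
          gcongr
          rw [div_le_one (by positivity)]
          have : (1:ℝ) ≤ k := by exact_mod_cast hk0
          linarith
    have e4 : vk (1 + k) * √k ≤ 2.6 * vk k := by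
      have h := vk_ratio k
      rw [add_comm] 
      have hp := Real.pi_lt_d2
      have h5 := vk_pos (k + 1)
      refine (sq_le_sq₀ (by positivity) (by positivity)).1 ?_
      rw [mul_pow, mul_pow, Real.sq_sqrt hkr.le]
      nlinarith [sq_nonneg (vk k), sq_nonneg (vk (k + 1))]
    rw [e2, mul_pow]
    have e5 : R ^ (1 + k) = R * (g:ℝ) ^ (4 * k) := by rw [pow_add, pow_one, hR, ← pow_mul (g:ℝ) 4 k]
    have he := Real.exp_one_lt_d9
    have h6 := vk_pos (1 + k)
    calc vk (1 + k) * (R ^ (1 + k) * √(1 + 1 / (k:ℝ)) ^ (1 + k)) ≤ vk (1 + k) * (R ^ (1 + k) * Real.exp 1) := by gcongr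
      _ = (vk (1 + k) * √k) * (g:ℝ) ^ (4 * k) * Real.exp 1 * ρ := by rw [e5, hρ]; field_simp
      _ ≤ (2.6 * vk k) * (g:ℝ) ^ (4 * k) * 2.8 * ρ := by gcongr; linarith
      _ = 7.28 * ρ * V := by rw [hV]; ring
      _ ≤ 16 * ρ * N0 := by
        have : ρ * (V / 2) ≤ ρ * N0 := by gcongr
        have : 0 < ρ * N0 := by positivity
        nlinarith
  · refine (glue_unc b1 b2 x hl1 hl2 ρ R).trans ?_
    simp only [hx]
    exact hX


lemma small_cov (n : ℕ) : IsLatticeCovering (fun j : Fin n => EuclideanSpace.single j (1:ℝ)) (√n) := by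
  refine ⟨basisFun_lI n, ?_⟩
  rw [Set.eq_univ_iff_forall]
  intro x
  refine Set.mem_add.2 ⟨∑ i, ((⌊x i⌋ : ℤ) : ℝ) • EuclideanSpace.single i (1:ℝ), ⟨fun i => ⌊x i⌋, rfl⟩,
    WithLp.toLp 2 (fun i => Int.fract (x i)), ?_, ?_⟩
  · rw [mem_closedBall_zero_iff, EuclideanSpace.norm_eq]
    apply Real.sqrt_le_sqrt
    calc _ ≤ ∑ i : Fin n, (1:ℝ) := by
          refine Finset.sum_le_sum fun i _ => ?_
          have h1 := Int.fract_nonneg (x i)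
          have h2 := (Int.fract_lt_one (x i)).le
          simp only [Real.norm_eq_abs, sq_abs]
          nlinarith
      _ = _ := by simp
  · ext i
    simp [Pi.single_apply, Int.floor_add_fract]

lemma dens_eq {n : ℕ} (b : Fin n → EuclideanSpace ℝ (Fin n)) (r : ℝ) (hr : 0 ≤ r) :
    coveringDensity b r = vk n * r ^ n / latticeDet b := by
  unfold coveringDensity
  rw [vol_cball n 0 r hr, ENNReal.toReal_ofReal (by have := vk_pos n; positivity)]

lemma nu_eq (d : ℕ) : nu d = vk d * √d ^ d := by
  unfold nu
  rw [vol_cball d 0 _ (by positivity), ENNReal.toReal_ofReal (by have := vk_pos d; positivity)]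

lemma one_add_inv_pow (j : ℕ) (hj : 1 ≤ j) : (1 + 1 / (j:ℝ)) ^ j ≤ Real.exp 1 := by
  have hjr : (0:ℝ) < j := by exact_mod_cast hj
  calc (1 + 1 / (j:ℝ)) ^ j ≤ Real.exp (1 / j) ^ j := by
        gcongr
        have := Real.add_one_le_exp (1 / (j:ℝ)); linarith
    _ = _ := by rw [← Real.exp_nat_mul]; congr 1; field_simp

lemma nu_step (j : ℕ) (hj : 1 ≤ j) : nu (j + 1) ≤ √(2 * Real.pi * Real.exp 1) * nu j := by
  have hjr : (0:ℝ) < j := by exact_mod_cast hj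
  have hp := Real.pi_pos
  have h1 := vk_pos j
  have h2 := vk_pos (j + 1)
  rw [nu_eq, nu_eq]
  refine (sq_le_sq₀ (by positivity) (by positivity)).1 ?_
  rw [mul_pow, mul_pow, mul_pow, Real.sq_sqrt (by positivity), ← pow_mul, ← pow_mul, mul_comm _ 2, mul_comm j 2,
    pow_mul, pow_mul, Real.sq_sqrt (by positivity), Real.sq_sqrt (by positivity)]
  have h3 := one_add_inv_pow j hj
  have h4 : ((j:ℝ) + 1) ^ j ≤ Real.exp 1 * (j:ℝ) ^ j := by
    calc ((j:ℝ) + 1) ^ j = (1 + 1 / (j:ℝ)) ^ j * (j:ℝ) ^ j := by rw [← mul_pow]; congr 1; field_simp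
      _ ≤ _ := by gcongr
  push_cast
  calc vk (j + 1) ^ 2 * ((j:ℝ) + 1) ^ (j + 1) = (vk (j + 1) ^ 2 * (j + 1)) * ((j:ℝ) + 1) ^ j := by ring
    _ ≤ (2 * Real.pi * vk j ^ 2) * (Real.exp 1 * (j:ℝ) ^ j) := by
      exact mul_le_mul (vk_ratio j) h4 (by positivity) (by positivity)
    _ = _ := by ring

lemma nu_steps (m : ℕ) (hm : 1 ≤ m) (t : ℕ) : nu (m + t) ≤ √(2 * Real.pi * Real.exp 1) ^ t * nu m := by
  induction t with
  | zero => simp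
  | succ t ih =>
    refine (nu_step (m + t) (by omega)).trans ?_
    calc _ ≤ √(2 * Real.pi * Real.exp 1) * (√(2 * Real.pi * Real.exp 1) ^ t * nu m) := by gcongr
      _ = _ := by ring

lemma nu_pos (d : ℕ) (hd : 1 ≤ d) : 0 < nu d := by
  have hjr : (0:ℝ) < d := by exact_mod_cast hd
  rw [nu_eq]; have := vk_pos d; positivity

lemma dens_calc (m d T n v : ℕ) (hm : 1 ≤ m) (hd : 1 ≤ d) (hn : n = m + d * T) (r0 rd Δ det0 D : ℝ)
    (hr0 : 0 < r0) (hrd : 0 < rd) (hΔ : 0 < Δ) (hdet0 : 0 < det0) (hD : D = vk d * rd ^ d / Δ)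
    (hb : vk m * r0 ^ m ≤ 8 * v * det0) (h R : ℝ) (hh : h = r0 * √d / (rd * √m))
    (hR : R = √(r0 ^ 2 + T * (h * rd) ^ 2)) :
    vk n * (R + R / n) ^ n / (det0 * (h ^ d * Δ) ^ T) ≤
      8 * v * Real.exp 1 * (√(2 * Real.pi * Real.exp 1) ^ d * (D / nu d)) ^ T := by
  have hmr : (0:ℝ) < m := by exact_mod_cast hm
  have hdr : (0:ℝ) < d := by exact_mod_cast hd
  have hn1 : 1 ≤ n := by omega
  have hnr : (0:ℝ) < n := by exact_mod_cast hn1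
  have hvd := vk_pos d
  have hvm := vk_pos m
  have hvn := vk_pos n
  have hDpos : 0 < D := by rw [hD]; positivity
  have hnud := nu_pos d hd
  have hsm : 0 < √(m:ℝ) := Real.sqrt_pos.2 hmr
  have hsn : 0 < √(n:ℝ) := Real.sqrt_pos.2 hnr
  have hsd : 0 < √(d:ℝ) := Real.sqrt_pos.2 hdr
  have hRe : R = r0 * √n / √m := by
    have : r0 ^ 2 + T * (h * rd) ^ 2 = (r0 * √n / √m) ^ 2 := by
      have e : h * rd = r0 * √d / √m := by rw [hh]; field_simp
      rw [e, div_pow, div_pow, mul_pow, mul_pow, Real.sq_sqrt hmr.le, Real.sq_sqrt hdr.le, Real.sq_sqrt hnr.le, hn]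
      push_cast
      field_simp
    rw [hR, this, Real.sqrt_sq (by positivity)]
  have hhd : h ^ d * Δ = (r0 / √m) ^ d * (D / nu d)⁻¹ := by
    rw [hh, hD, nu_eq, inv_div, div_pow, mul_pow, mul_pow, div_pow]
    field_simp
  have hRp : R + R / n = R * (1 + 1 / n) := by field_simp
  have hnun : vk n * R ^ n = nu n * (r0 / √m) ^ n := by
    rw [hRe, nu_eq, mul_div_right_comm, mul_pow]; ring
  have h1 := nu_steps m hm (d * T)
  rw [← hn] at h1
  set c := r0 / √m with hc
  have hcpos : 0 < c := by positivity
  have hcm : nu m * c ^ m = vk m * r0 ^ m := by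
    rw [nu_eq, hc, div_pow]; field_simp
  set s := √(2 * Real.pi * Real.exp 1) with hs
  have hs0 : 0 ≤ s := Real.sqrt_nonneg _
  rw [div_le_iff₀ (by rw [hhd]; positivity), hRp, mul_pow, ← mul_assoc, hnun, hhd]
  calc nu n * c ^ n * (1 + 1 / (n:ℝ)) ^ n ≤ (s ^ (d * T) * nu m) * c ^ n * Real.exp 1 := by
        have := nu_pos m hm
        have := one_add_inv_pow n hn1
        gcongr
    _ = (nu m * c ^ m) * (s ^ (d * T) * c ^ (d * T) * Real.exp 1) := by
        rw [show c ^ n = c ^ m * c ^ (d * T) by rw [hn, pow_add]]; ring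
    _ ≤ (8 * v * det0) * (s ^ (d * T) * c ^ (d * T) * Real.exp 1) := by
        rw [hcm]; gcongr
    _ = _ := by
        rw [mul_pow _ _ T, mul_pow _ _ T, ← pow_mul, ← pow_mul, inv_pow]
        field_simp

lemma rob_pos {d : ℕ} (hd : 1 ≤ d) (bd : Fin d → EuclideanSpace ℝ (Fin d)) (rd : ℝ)
    (hrob : IsRobustCovering bd rd) : 0 < rd ∧ 0 < latticeDet bd := by
  have hdet : 0 < latticeDet bd :=
    lt_of_le_of_ne (abs_nonneg _) ((latticeDet_ne_zero_iff bd).2 hrob.1.1).symm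
  refine ⟨?_, hdet⟩
  obtain ⟨P, ⟨x, w, -, -, -, hP⟩, hsub⟩ := hrob.2 0
  have h1 : 0 < volume (Metric.closedBall (0 : EuclideanSpace ℝ (Fin d)) rd) := by
    refine lt_of_lt_of_le ?_ (measure_mono hsub)
    rw [hP]; exact ENNReal.ofReal_pos.2 hdet
  by_contra hneg
  push Not at hneg
  rcases hneg.lt_or_eq with h | h
  · rw [Metric.closedBall_eq_empty.2 h] at h1; simp at h1
  · rw [h, vol_cball d 0 0 le_rfl, zero_pow (by omega)] at h1; simp at h1

lemma gam_pow (d : ℕ) (hd : 1 ≤ d) (D N : ℝ) (hD : 0 < D) (hN : 0 < N) :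
    √(2 * Real.pi * Real.exp 1) ^ d * (D / N) =
      ((2:ℝ) ^ d) ^ (Real.logb 2 (2 * Real.pi * Real.exp 1) / 2 - (1 / d) * Real.logb 2 (N / D)) := by
  have hp := Real.pi_pos
  have hdr : (0:ℝ) < d := by exact_mod_cast hd
  rw [← Real.rpow_natCast 2 d, ← Real.rpow_mul (by norm_num)]
  have e : (d:ℝ) * (Real.logb 2 (2 * Real.pi * Real.exp 1) / 2 - (1 / d) * Real.logb 2 (N / D)) =
    Real.logb 2 (2 * Real.pi * Real.exp 1) * (1 / 2) * d - Real.logb 2 (N / D) := by field_simp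
  rw [e, Real.rpow_sub (by norm_num), Real.rpow_mul (by norm_num), Real.rpow_mul (by norm_num),
    Real.rpow_logb (by norm_num) (by norm_num) (by positivity),
    Real.rpow_logb (by norm_num) (by norm_num) (by positivity), ← Real.sqrt_eq_rpow, Real.rpow_natCast]
  field_simp

lemma pow_gam_bound (γ A c L M : ℝ) (hA : 0 < A) (hc : 0 < c) (hL : 0 < L) (h1 : A * L ≤ M) (h2 : M ≤ c * (A * L)) :
    M ^ γ ≤ ((c * A) ^ γ + A ^ γ) * L ^ γ := by
  have hM : 0 < M := lt_of_lt_of_le (by positivity) h1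
  have p1 : 0 ≤ (c * A) ^ γ := by positivity
  have p2 : 0 ≤ A ^ γ := by positivity
  have p3 : 0 ≤ L ^ γ := by positivity
  rw [add_mul]
  rcases le_total 0 γ with h | h
  · have : M ^ γ ≤ (c * (A * L)) ^ γ := Real.rpow_le_rpow hM.le h2 h
    rw [← mul_assoc, Real.mul_rpow (by positivity) hL.le] at this
    nlinarith
  · have : M ^ γ ≤ (A * L) ^ γ := Real.rpow_le_rpow_of_nonpos (by positivity) h1 h
    rw [Real.mul_rpow hA.le hL.le] at this
    nlinarith


lemma prob_small (κ μ : ℝ) (hκ : 0 < κ) (n v M : ℕ) (hn : 10000 ≤ n) (hv : (n:ℝ) / 8000 ≤ v)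
    (hM : 40000 * Real.log n ≤ M) (hn2 : 120000 * κ ≤ n) (hn3 : 2 / κ < n)
    (h : κ * μ ≤ (κ * (4 * (1 / 2) ^ v)) ^ M) : μ * (1 + (n:ℝ) ^ n) < 1 := by
  have hnr : (10000:ℝ) ≤ n := by exact_mod_cast hn
  have hn0 : (0:ℝ) < n := by linarith
  have h1 : (1 / 2 : ℝ) ^ v ≤ Real.exp (-(n / 12000)) := by
    have e : (1 / 2 : ℝ) = Real.exp (-Real.log 2) := by
      rw [Real.exp_neg, Real.exp_log (by norm_num)]; norm_num
    rw [e, ← Real.exp_nat_mul]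
    apply Real.exp_le_exp.2
    have := Real.log_two_gt_d9
    nlinarith
  have h2 : κ * (4 * (1 / 2) ^ v) ≤ Real.exp (-(n / 20000)) := by
    have h3 : 4 * κ ≤ Real.exp (n / 30000) := by
      have := Real.add_one_le_exp ((n:ℝ) / 30000); linarith
    calc κ * (4 * (1 / 2) ^ v) = 4 * κ * (1 / 2) ^ v := by ring
      _ ≤ Real.exp (n / 30000) * Real.exp (-(n / 12000)) := by gcongr
      _ = _ := by rw [← Real.exp_add]; congr 1; ring
  have h4 : κ * μ ≤ ((n:ℝ) ^ n)⁻¹ * ((n:ℝ) ^ n)⁻¹ := by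
    calc κ * μ ≤ Real.exp (-(n / 20000)) ^ M := h.trans (by gcongr)
      _ = Real.exp (-(n / 20000 * M)) := by rw [← Real.exp_nat_mul]; congr 1; ring
      _ ≤ Real.exp (-(n * Real.log n) + -(n * Real.log n)) := by
        apply Real.exp_le_exp.2
        nlinarith
      _ = _ := by
        rw [Real.exp_add, Real.exp_neg, Real.exp_nat_mul, Real.exp_log hn0]
  have h5 : (n:ℝ) ≤ (n:ℝ) ^ n := le_self_pow₀ (by linarith) (by omega)
  set P := (n:ℝ) ^ n
  have hP : 0 < P := by linarith
  have h6 : κ * (μ * (1 + P)) < κ * 1 := by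
    calc κ * (μ * (1 + P)) = κ * μ * (1 + P) := by ring
      _ ≤ P⁻¹ * P⁻¹ * (1 + P) := by gcongr
      _ ≤ P⁻¹ * P⁻¹ * (2 * P) := by gcongr; linarith
      _ = 2 / P := by field_simp
      _ < κ * 1 := by
        rw [div_lt_iff₀ hκ] at hn3
        rw [div_lt_iff₀ hP]
        nlinarith
  exact lt_of_mul_lt_mul_left h6 hκ.le

lemma big_n (d : ℕ) (hd : 1 ≤ d) (D : ℝ) (bd : Fin d → EuclideanSpace ℝ (Fin d)) (rd : ℝ)
    (hrob : IsRobustCovering bd rd) (hD : coveringDensity bd rd = D) (γ : ℝ)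
    (hγ : γ = Real.logb 2 (2 * Real.pi * Real.exp 1) / 2 - (1 / d) * Real.logb 2 (nu d / D)) :
    ∃ (n0 : ℕ) (C1 : ℝ), 0 < C1 ∧ ∀ n : ℕ, n0 ≤ n →
      ∃ (b : Fin n → EuclideanSpace ℝ (Fin n)) (r : ℝ), 0 < r ∧ IsLatticeCovering b r ∧
        coveringDensity b r ≤ C1 * n * Real.log n ^ γ := by
  obtain ⟨hrd, hΔ⟩ := rob_pos hd bd rd hrob
  rw [dens_eq bd rd hrd.le] at hD
  have hvd := vk_pos d
  have hDpos : 0 < D := by rw [← hD]; positivity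
  have hnud := nu_pos d hd
  obtain ⟨K, hK0, hKt, HK⟩ := stages bd rd hrob
  have hκ : 0 < K.toReal := ENNReal.toReal_pos hK0 hKt
  set c : ℝ := 2 ^ d with hc
  have hcpos : 0 < c := by positivity
  have hc2 : 2 ≤ c := by rw [hc]; exact le_self_pow₀ (by norm_num) (by omega)
  obtain ⟨n1, hn1⟩ : ∃ n1 : ℕ, ∀ n : ℕ, n1 ≤ n → c * (40000 * Real.log n) ≤ n / 2 := by
    have h1 := (Real.isLittleO_log_id_atTop.comp_tendsto tendsto_natCast_atTop_atTop).def
      (show 0 < 1 / (2 * c * 40000) by positivity)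
    obtain ⟨n1, hn1⟩ := Filter.eventually_atTop.1 h1
    refine ⟨n1, fun n hn => ?_⟩
    have h2 := hn1 n hn
    simp only [Function.comp, id, Real.norm_eq_abs, Nat.abs_cast] at h2
    have h3 := (le_abs_self _).trans h2
    calc c * (40000 * Real.log n) ≤ c * (40000 * (1 / (2 * c * 40000) * n)) := by gcongr
      _ = _ := by field_simp
  refine ⟨max (max n1 10000) (max ⌈120000 * K.toReal⌉₊ (⌈2 / K.toReal⌉₊ + 1)),
    8 * Real.exp 1 * ((c * 40000) ^ γ + 40000 ^ γ), by positivity, fun n hn => ?_⟩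
  simp only [max_le_iff] at hn
  obtain ⟨⟨hna, hnb⟩, hnc, hnd⟩ := hn
  have hnr : (10000:ℝ) ≤ n := by exact_mod_cast hnb
  have hnc' : 120000 * K.toReal ≤ n := Nat.ceil_le.1 hnc
  have hnd' : 2 / K.toReal < n := by
    have h1 := Nat.le_ceil (2 / K.toReal)
    have h2 : ((⌈2 / K.toReal⌉₊ + 1 : ℕ) : ℝ) ≤ n := Nat.cast_le.2 hnd
    push_cast at h2; linarith
  have hL : 1 ≤ Real.log n := by
    rw [Real.le_log_iff_exp_le (by linarith)]
    have := Real.exp_one_lt_d9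
    linarith
  obtain ⟨T', hT1, hT2⟩ := exists_nat_pow_near (show 1 ≤ 40000 * Real.log n by linarith) (show 1 < c by linarith)
  set T := T' + 1 with hT
  have hM1 : 40000 * Real.log n ≤ c ^ T := hT2.le
  have hM2 : c ^ T ≤ c * (40000 * Real.log n) := by rw [hT, pow_succ']; gcongr
  have hcT : c ^ T = ((2 ^ (d * T) : ℕ) : ℝ) := by push_cast; rw [hc, pow_mul]
  have hdT : ((d * T : ℕ) : ℝ) ≤ n / 2 := by
    have h1 : ((d * T : ℕ) : ℝ) ≤ ((2 ^ (d * T) : ℕ) : ℝ) := Nat.cast_le.2 Nat.lt_two_pow_self.le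
    have h2 := hn1 n hna
    linarith
  have hdTn : 2 * (d * T) ≤ n := by
    have : (2:ℝ) * ((d * T : ℕ) : ℝ) ≤ n := by linarith
    exact_mod_cast this
  obtain ⟨k, hk⟩ : ∃ k, n = (1 + k) + d * T := ⟨n - d * T - 1, by omega⟩
  set v := k / 2000 with hv
  have hk2 : 2 * (1 + k) ≥ n := by omega
  have hv1 : 1 ≤ v := by omega
  have hvk : 2000 * v ≤ k := by omega
  have hvn : (n:ℝ) / 8000 ≤ v := by
    rw [div_le_iff₀ (by norm_num)]
    have : n ≤ v * 8000 := by omega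
    exact_mod_cast this
  obtain ⟨b0, r0, hr0, hli, hdens, hunc⟩ := base_lat v k hv1 hvk
  have hdet0 : 0 < latticeDet b0 :=
    lt_of_le_of_ne (abs_nonneg _) ((latticeDet_ne_zero_iff b0).2 hli).symm
  set h : ℝ := r0 * √d / (rd * √((1 + k : ℕ) : ℝ)) with hh
  have hdr : (0:ℝ) < d := by exact_mod_cast hd
  have hhpos : 0 < h := by positivity
  obtain ⟨b, hbli, hbdet, hbunc⟩ := HK (1 + k) b0 r0 h hli hhpos hr0.le T n hk
  set R := √(r0 ^ 2 + T * (h * rd) ^ 2) with hR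
  have hRpos : 0 < R := by positivity
  have hRn : 0 < R + R / n := by positivity
  have hvn' : (v:ℝ) ≤ n := by
    have : v ≤ n := by omega
    exact_mod_cast this
  refine ⟨b, R + R / n, hRn, ?_, ?_⟩
  · apply finish_covering b R hbli n (by omega)
    have hμt : volume (unc b R) ≠ ⊤ := measure_ne_top _ _
    have h1 : K.toReal * (volume (unc b R)).toReal ≤ (K.toReal * (4 * (1 / 2) ^ v)) ^ (2 ^ (d * T)) := by
      have h2 : K * volume (unc b R) ≤ (K * ENNReal.ofReal (4 * (1 / 2) ^ v)) ^ (2 ^ (d * T)) :=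
        hbunc.trans (by gcongr)
      have h3 := ENNReal.toReal_mono (by
        apply ENNReal.pow_ne_top
        exact ENNReal.mul_ne_top hKt ENNReal.ofReal_ne_top) h2
      rw [ENNReal.toReal_mul, ENNReal.toReal_pow, ENNReal.toReal_mul, ENNReal.toReal_ofReal (by positivity)] at h3
      exact h3
    have h4 := prob_small _ _ hκ n v (2 ^ (d * T)) hnb hvn (by rw [← hcT]; exact hM1) hnc' hnd' h1
    have h5 : volume (unc b R) * (1 + (n:ENNReal) ^ n) = ENNReal.ofReal ((volume (unc b R)).toReal * (1 + (n:ℝ) ^ n)) := by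
      rw [ENNReal.ofReal_mul ENNReal.toReal_nonneg, ENNReal.ofReal_toReal hμt, ENNReal.ofReal_add (by norm_num) (by positivity),
        ENNReal.ofReal_pow (by positivity), ENNReal.ofReal_natCast, ENNReal.ofReal_one]
    rw [h5, ← ENNReal.ofReal_one]
    exact (ENNReal.ofReal_lt_ofReal_iff one_pos).2 h4
  · rw [dens_eq b _ hRn.le, hbdet]
    refine (dens_calc (1 + k) d T n v (by omega) hd hk r0 rd (latticeDet bd) (latticeDet b0) D hr0 hrd hΔ hdet0
      hD.symm hdens h R hh hR).trans ?_
    rw [gam_pow d hd D (nu d) hDpos hnud, ← hγ, ← hc, ← Real.rpow_natCast, ← Real.rpow_mul hcpos.le, mul_comm γ,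
      Real.rpow_mul hcpos.le, Real.rpow_natCast]
    have h6 := pow_gam_bound γ 40000 c (Real.log n) (c ^ T) (by norm_num) hcpos (by linarith) hM1 hM2
    have h7 : 0 ≤ ((c * 40000) ^ γ + 40000 ^ γ) * Real.log n ^ γ := by
      have : 0 ≤ Real.log n := by linarith
      positivity
    calc 8 * v * Real.exp 1 * (c ^ T) ^ γ ≤ 8 * n * Real.exp 1 * (((c * 40000) ^ γ + 40000 ^ γ) * Real.log n ^ γ) := by
          gcongr
      _ = _ := by ring

/-- **Theorem 1.4.** If there is a robust lattice covering of `ℝ^d` with density `D ≤ ν_d`,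
then there is a constant `C` such that for every `n ≥ 2` there is a lattice covering of
`ℝⁿ` by balls of density at most `C · n · (ln n)^γ`, where
`γ = (1/2) log₂ (2πe) − (1/d) log₂ (ν_d / D)`. -/
theorem general_parallelepiped_bound (d : ℕ) (hd : 1 ≤ d) (D : ℝ)
    (hrob : ∃ (bd : Fin d → EuclideanSpace ℝ (Fin d)) (rd : ℝ),
      IsRobustCovering bd rd ∧ coveringDensity bd rd = D)
    (hDle : D ≤ nu d) :
    ∃ C : ℝ, 0 < C ∧ ∀ n : ℕ, 2 ≤ n →
      ∃ (b : Fin n → EuclideanSpace ℝ (Fin n)) (r : ℝ), 0 < r ∧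
        IsLatticeCovering b r ∧
        coveringDensity b r ≤
          C * n * Real.log n ^
            (Real.logb 2 (2 * Real.pi * Real.exp 1) / 2 -
              (1 / d) * Real.logb 2 (nu d / D)) := by
  obtain ⟨bd, rd, hr, hD⟩ := hrob
  set γ := Real.logb 2 (2 * Real.pi * Real.exp 1) / 2 - (1 / d) * Real.logb 2 (nu d / D) with hγ
  obtain ⟨n0, C1, hC1, H⟩ := big_n d hd D bd rd hr hD γ hγ
  set F : ℕ → ℝ := fun n => vk n * √n ^ n / (n * Real.log n ^ γ) with hF
  have hF0 : ∀ n, 0 ≤ F n := by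
    intro n
    have h1 := vk_pos n
    have h2 : 0 ≤ Real.log n := Real.log_natCast_nonneg n
    simp only [hF]; positivity
  have hS : 0 ≤ ∑ n ∈ Finset.range n0, F n := Finset.sum_nonneg fun n _ => hF0 n
  refine ⟨C1 + ∑ n ∈ Finset.range n0, F n, by linarith, fun n hn => ?_⟩
  have hnr : (2:ℝ) ≤ n := by exact_mod_cast hn
  have hL : 0 < Real.log n := Real.log_pos (by linarith)
  have hLg : 0 < Real.log n ^ γ := Real.rpow_pos_of_pos hL _
  rcases le_or_gt n0 n with h | h
  · obtain ⟨b, r, h1, h2, h3⟩ := H n h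
    refine ⟨b, r, h1, h2, h3.trans ?_⟩
    gcongr
    linarith
  · refine ⟨_, √n, Real.sqrt_pos.2 (by linarith), small_cov n, ?_⟩
    rw [dens_eq _ _ (Real.sqrt_nonneg _), latticeDet_std, div_one]
    have h1 : F n ≤ ∑ n ∈ Finset.range n0, F n :=
      Finset.single_le_sum (fun i _ => hF0 i) (Finset.mem_range.2 h)
    have h2 : vk n * √n ^ n = F n * n * Real.log n ^ γ := by
      simp only [hF]; field_simp
    rw [h2]
    gcongr
    linarith

end
end

section
/- Let Λ ⊆ ℝ² be the lattice generated by v₁ = (1, 0) and v₂ = (1/2, √3/2), and let r = 2/√3. Then (Λ, B_r²) is a robust lattice covering of ℝ²: Λ + B_r² = ℝ², and every closed ball of radius r in ℝ² contains a fundamental parallelepiped of Λ. Its density equals vol(B_r²)/det(Λ) = 8π/(3√3). In particular, there exists a robust lattice covering of ℝ² with density 8π/(3√3). -/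
open MeasureTheory Pointwise

noncomputable section

theorem aux_norm (v : Fin 2 → EuclideanSpace ℝ (Fin 2))
    (hv0 : v 0 = (WithLp.equiv 2 (Fin 2 → ℝ)).symm ![1, 0])
    (hv1 : v 1 = (WithLp.equiv 2 (Fin 2 → ℝ)).symm ![1 / 2, Real.sqrt 3 / 2])
    (a b : ℝ) (h : a ^ 2 + a * b + b ^ 2 ≤ 4 / 3) :
    ‖a • v 0 + b • v 1‖ ≤ 2 / Real.sqrt 3 := by
  have h3 : Real.sqrt 3 ^ 2 = 3 := Real.sq_sqrt (by norm_num)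
  apply le_of_sq_le_sq _ (by positivity)
  rw [EuclideanSpace.norm_sq_eq, div_pow, h3]
  simp [hv0, hv1, Fin.sum_univ_two]
  nlinarith

theorem aux_li (v : Fin 2 → EuclideanSpace ℝ (Fin 2))
    (hv0 : v 0 = (WithLp.equiv 2 (Fin 2 → ℝ)).symm ![1, 0])
    (hv1 : v 1 = (WithLp.equiv 2 (Fin 2 → ℝ)).symm ![1 / 2, Real.sqrt 3 / 2])
    (s t s' t' : ℝ) (hdet : s * t' - t * s' ≠ 0) :
    LinearIndependent ℝ ![s • v 0 + t • v 1, s' • v 0 + t' • v 1] := by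
  have h3 : Real.sqrt 3 ≠ 0 := by positivity
  rw [LinearIndependent.pair_iff]
  intro x y hxy
  have e0 := congrArg (fun z : EuclideanSpace ℝ (Fin 2) => z 0) hxy
  have e1 := congrArg (fun z : EuclideanSpace ℝ (Fin 2) => z 1) hxy
  simp [hv0, hv1] at e0 e1
  have e2 : x * t + y * t' = 0 := by
    apply mul_right_cancel₀ h3
    linarith
  have e3 : x * s + y * s' = 0 := by linarith
  constructor
  · apply mul_right_cancel₀ hdet
    linear_combination t' * e3 - s' * e2
  · apply mul_right_cancel₀ hdet
    linear_combination s * e2 - t * e3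

theorem aux_hull (x : EuclideanSpace ℝ (Fin 2)) (w : Fin 2 → EuclideanSpace ℝ (Fin 2)) :
    volume (convexHull ℝ (vertexSet x w)) = ENNReal.ofReal (latticeDet w) := by
  have h1 : vertexSet x w = {x} + ∑ i, {(0 : EuclideanSpace ℝ (Fin 2)), w i} := by
    ext y
    simp only [vertexSet, Set.mem_ofPred_eq, Fin.sum_univ_two, Set.singleton_add, Set.image_add_left,
      Set.mem_preimage, Set.mem_add, Set.mem_insert_iff, Set.mem_singleton_iff]
    constructor
    · rintro ⟨l, hl, rfl⟩
      refine ⟨l 0 • w 0, ?_, l 1 • w 1, ?_, by abel⟩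
      · rcases hl 0 with h | h <;> simp [h]
      · rcases hl 1 with h | h <;> simp [h]
    · rintro ⟨p, hp, q, hq, h⟩
      have hy : y = x + (p + q) := by rw [h]; abel
      rcases hp with rfl | rfl <;> rcases hq with rfl | rfl
      · exact ⟨![0, 0], by simp [Fin.forall_fin_two], by simp [hy]⟩
      · exact ⟨![0, 1], by simp [Fin.forall_fin_two], by simp [hy]⟩
      · exact ⟨![1, 0], by simp [Fin.forall_fin_two], by simp [hy]⟩
      · exact ⟨![1, 1], by simp [Fin.forall_fin_two], by simp [hy]⟩
  rw [h1, convexHull_add, convexHull_singleton, ← parallelepiped_eq_convexHull,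
    Set.singleton_add, Set.image_add_left, measure_preimage_add,
    ← (EuclideanSpace.basisFun (Fin 2) ℝ).addHaar_eq_volume, Measure.addHaar_parallelepiped]
  congr 1

theorem aux_key (v : Fin 2 → EuclideanSpace ℝ (Fin 2))
    (hv0 : v 0 = (WithLp.equiv 2 (Fin 2 → ℝ)).symm ![1, 0])
    (hv1 : v 1 = (WithLp.equiv 2 (Fin 2 → ℝ)).symm ![1 / 2, Real.sqrt 3 / 2])
    (a b : ℝ) (p q s t s' t' : ℤ) (hdet : |(s * t' - t * s' : ℝ)| = 1)
    (h1 : (p - a) ^ 2 + (p - a) * (q - b) + (q - b) ^ 2 ≤ 4 / 3)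
    (h2 : (p + s - a) ^ 2 + (p + s - a) * (q + t - b) + (q + t - b) ^ 2 ≤ 4 / 3)
    (h3 : (p + s' - a) ^ 2 + (p + s' - a) * (q + t' - b) + (q + t' - b) ^ 2 ≤ 4 / 3)
    (h4 : (p + s + s' - a) ^ 2 + (p + s + s' - a) * (q + t + t' - b)
      + (q + t + t' - b) ^ 2 ≤ 4 / 3) :
    ∃ P, IsFundParallelepiped (latticeSet v) (latticeDet v) P ∧
      P ⊆ Metric.closedBall (a • v 0 + b • v 1) (2 / Real.sqrt 3) := by
  set w : Fin 2 → EuclideanSpace ℝ (Fin 2) :=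
    ![(s : ℝ) • v 0 + (t : ℝ) • v 1, (s' : ℝ) • v 0 + (t' : ℝ) • v 1] with hw
  have hw0 : w 0 = (s : ℝ) • v 0 + (t : ℝ) • v 1 := rfl
  have hw1 : w 1 = (s' : ℝ) • v 0 + (t' : ℝ) • v 1 := rfl
  set x : EuclideanSpace ℝ (Fin 2) := (p : ℝ) • v 0 + (q : ℝ) • v 1 with hx
  refine ⟨_, ⟨x, w, ?_, rfl, ?_, ?_⟩, ?_⟩
  · apply aux_li v hv0 hv1
    intro h
    rw [h] at hdet
    simp at hdet
  · rintro y ⟨l, hl, rfl⟩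
    have : ∀ i, ∃ m : ℤ, l i = m := by
      intro i
      rcases hl i with h | h
      · exact ⟨0, by simp [h]⟩
      · exact ⟨1, by simp [h]⟩
    choose m hm using this
    refine ⟨![p + m 0 * s + m 1 * s', q + m 0 * t + m 1 * t'], ?_⟩
    simp only [Fin.sum_univ_two, hm, hw0, hw1, hx, Matrix.cons_val_zero, Matrix.cons_val_one]
    push_cast
    module
  · rw [aux_hull]
    congr 1
    have : latticeDet w = |(s * t' - t * s' : ℝ)| * latticeDet v := by
      unfold latticeDet
      rw [← abs_mul, Matrix.det_fin_two, Matrix.det_fin_two]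
      congr 1
      simp only [Matrix.of_apply, hw0, hw1, PiLp.add_apply, PiLp.smul_apply, smul_eq_mul]
      ring
    rw [this, hdet, one_mul]
  · apply convexHull_min _ (convex_closedBall _ _)
    rintro y ⟨l, hl, rfl⟩
    rw [mem_closedBall_iff_norm]
    have e : x + ∑ i, l i • w i - (a • v 0 + b • v 1) =
        (p + l 0 * s + l 1 * s' - a) • v 0 + (q + l 0 * t + l 1 * t' - b) • v 1 := by
      simp only [Fin.sum_univ_two, hw0, hw1, hx]
      module
    rw [e]
    apply aux_norm v hv0 hv1
    rcases hl 0 with k | k <;> rcases hl 1 with k' | k' <;> rw [k, k']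
    · convert h1 using 1; ring
    · convert h3 using 1; ring
    · convert h2 using 1; ring
    · convert h4 using 1; ring

theorem aux_robust (v : Fin 2 → EuclideanSpace ℝ (Fin 2))
    (hv0 : v 0 = (WithLp.equiv 2 (Fin 2 → ℝ)).symm ![1, 0])
    (hv1 : v 1 = (WithLp.equiv 2 (Fin 2 → ℝ)).symm ![1 / 2, Real.sqrt 3 / 2])
    (c : EuclideanSpace ℝ (Fin 2)) :
    ∃ P, IsFundParallelepiped (latticeSet v) (latticeDet v) P ∧
      P ⊆ Metric.closedBall c (2 / Real.sqrt 3) := by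
  have h3 : Real.sqrt 3 ≠ 0 := by positivity
  obtain ⟨a, b, rfl⟩ : ∃ a b : ℝ, c = a • v 0 + b • v 1 := by
    refine ⟨c 0 - c 1 / Real.sqrt 3, 2 * c 1 / Real.sqrt 3, ?_⟩
    ext i
    fin_cases i
    · simp [hv0, hv1]; ring
    · simp [hv0, hv1]; field_simp
  have ha0 := Int.floor_le a
  have ha1 := (Int.lt_floor_add_one a).le
  have hb0 := Int.floor_le b
  have hb1 := (Int.lt_floor_add_one b).le
  generalize ⌊a⌋ = p at *
  generalize ⌊b⌋ = q at *
  obtain ⟨α, rfl⟩ : ∃ α, a = p + α := ⟨a - p, by ring⟩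
  obtain ⟨β, rfl⟩ : ∃ β, b = q + β := ⟨b - q, by ring⟩
  have hα0 : 0 ≤ α := by linarith
  have hα1 : α ≤ 1 := by linarith
  have hβ0 : 0 ≤ β := by linarith
  have hβ1 : β ≤ 1 := by linarith
  clear ha0 ha1 hb0 hb1
  rcases le_total (α + β) 1 with h | h
  · by_cases k1 : 1 - α - β ≤ α ∧ 1 - α - β ≤ β
    · obtain ⟨k, k'⟩ := k1
      apply aux_key v hv0 hv1 _ _ p q 1 0 0 1 (by norm_num) <;> push_cast <;> ring_nf <;> nlinarith [mul_nonneg (sub_nonneg.2 k) (sub_nonneg.2 k'), mul_nonneg (sub_nonneg.2 k) (sub_nonneg.2 h), mul_nonneg (sub_nonneg.2 k') (sub_nonneg.2 h)]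
    · rcases le_total α β with k | k
      · have k' : α ≤ 1 - α - β := by
          by_contra hh
          exact k1 ⟨by linarith, by linarith⟩
        apply aux_key v hv0 hv1 _ _ (p + 1) q (-1) 0 (-1) 1 (by norm_num) <;> push_cast <;> ring_nf <;> nlinarith [mul_nonneg (sub_nonneg.2 k) (sub_nonneg.2 k'), mul_nonneg (sub_nonneg.2 k) hα0, mul_nonneg (sub_nonneg.2 k') hα0]
      · have k' : β ≤ 1 - α - β := by
          by_contra hh
          exact k1 ⟨by linarith, by linarith⟩
        apply aux_key v hv0 hv1 _ _ p (q + 1) 0 (-1) 1 (-1) (by norm_num) <;> push_cast <;> ring_nf <;> nlinarith [mul_nonneg (sub_nonneg.2 k) (sub_nonneg.2 k'), mul_nonneg (sub_nonneg.2 k) hβ0, mul_nonneg (sub_nonneg.2 k') hβ0]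
  · by_cases k1 : α + β - 1 ≤ 1 - α ∧ α + β - 1 ≤ 1 - β
    · obtain ⟨k, k'⟩ := k1
      apply aux_key v hv0 hv1 _ _ p q 1 0 0 1 (by norm_num) <;> push_cast <;> ring_nf <;> nlinarith [mul_nonneg (sub_nonneg.2 k) (sub_nonneg.2 k'), mul_nonneg (sub_nonneg.2 k) (sub_nonneg.2 h), mul_nonneg (sub_nonneg.2 k') (sub_nonneg.2 h)]
    · rcases le_total α β with k | k
      · have k' : 1 - β ≤ α + β - 1 := by
          by_contra hh
          exact k1 ⟨by linarith, by linarith⟩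
        apply aux_key v hv0 hv1 _ _ (p + 1) q (-1) 1 0 1 (by norm_num) <;> push_cast <;> ring_nf <;> nlinarith [mul_nonneg (sub_nonneg.2 k) (sub_nonneg.2 k'), mul_nonneg (sub_nonneg.2 k) (sub_nonneg.2 hβ1), mul_nonneg (sub_nonneg.2 k') (sub_nonneg.2 hβ1)]
      · have k' : 1 - α ≤ α + β - 1 := by
          by_contra hh
          exact k1 ⟨by linarith, by linarith⟩
        apply aux_key v hv0 hv1 _ _ p (q + 1) 1 (-1) 1 0 (by norm_num) <;> push_cast <;> ring_nf <;> nlinarith [mul_nonneg (sub_nonneg.2 k) (sub_nonneg.2 k'), mul_nonneg (sub_nonneg.2 k) (sub_nonneg.2 hα1), mul_nonneg (sub_nonneg.2 k') (sub_nonneg.2 hα1)]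

/-- **Lemma 1.5.** The hexagonal-type lattice generated by `(1,0)` and `(1/2, √3/2)`,
together with radius `2/√3`, is a robust lattice covering of `ℝ²` of density
`8π/(3√3)`. -/
theorem robust_covering_R2 (v : Fin 2 → EuclideanSpace ℝ (Fin 2))
    (hv0 : v 0 = (WithLp.equiv 2 (Fin 2 → ℝ)).symm ![1, 0])
    (hv1 : v 1 = (WithLp.equiv 2 (Fin 2 → ℝ)).symm ![1 / 2, Real.sqrt 3 / 2]) :
    IsRobustCovering v (2 / Real.sqrt 3) ∧
    coveringDensity v (2 / Real.sqrt 3) = 8 * Real.pi / (3 * Real.sqrt 3) := by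
  have hrob := aux_robust v hv0 hv1
  refine ⟨⟨⟨?_, ?_⟩, hrob⟩, ?_⟩
  · have h := aux_li v hv0 hv1 1 0 0 1 (by norm_num)
    have e : v = ![(1 : ℝ) • v 0 + (0 : ℝ) • v 1, (0 : ℝ) • v 0 + (1 : ℝ) • v 1] := by
      funext i
      fin_cases i <;> simp
    rw [e]
    exact h
  · apply Set.eq_univ_of_forall
    intro c
    obtain ⟨P, ⟨x, w, -, rfl, hl, -⟩, hP⟩ := hrob c
    have hx : x ∈ vertexSet x w := ⟨fun _ => 0, by simp, by simp⟩
    have hd := hP (subset_convexHull ℝ _ hx)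
    refine Set.mem_add.2 ⟨x, hl hx, c - x, ?_, by abel⟩
    rw [mem_closedBall_zero_iff, ← dist_eq_norm, dist_comm]
    exact hd
  · have h3 : Real.sqrt 3 ^ 2 = 3 := Real.sq_sqrt (by norm_num)
    have h3' : 0 < Real.sqrt 3 := by positivity
    have hdet : latticeDet v = Real.sqrt 3 / 2 := by
      unfold latticeDet
      rw [Matrix.det_fin_two]
      simp [hv0, hv1]
      positivity
    unfold coveringDensity
    rw [hdet, EuclideanSpace.volume_closedBall_fin_two]
    rw [ENNReal.toReal_mul, ENNReal.toReal_pow, ENNReal.toReal_ofReal (by positivity)]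
    rw [show (ENNReal.ofReal Real.pi).toReal = Real.pi from ENNReal.toReal_ofReal Real.pi_pos.le]
    rw [div_pow, h3]
    field_simp
    norm_num

end
end
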